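/- arXiv:1608.06847 — 2 statements merged into one kernel-verified Lean document; each statement's English description precedes it below -/
import Mathlib

section
/- Let c ∈ (1,∞) and a_n = ⌊n^c⌋ for n ≥ 1. Define τ = (c−1)/2 if 1 < c < 3/2, τ = 1/4 if 3/2 ≤ c < 2, and τ = 7/26 if c ≥ 2. Then for Lebesgue-almost all real α, for every ε > 0 there are infinitely many N with N·D_N*({a_1 α}, …, {a_N α}) ≥ N^{τ − ε}. -/
open Filter MeasureTheory

/-- Star-discrepancy of the first `N` points `x 1, ..., x N` of a sequence in `[0,1)`. -/
noncomputable def starDisc (N : ℕ) (x : ℕ → ℝ) : ℝ :=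
  ⨆ β : Set.Ioc (0:ℝ) 1,
    |(((Finset.Icc 1 N).filter fun n => 0 ≤ x n ∧ x n < (β : ℝ)).card : ℝ) / N - (β : ℝ)|

/-- The divisor function is `O(n ^ δ)` for every `δ > 0`. -/
theorem exists_card_divisors_le {δ : ℝ} (hδ : 0 < δ) :
    ∃ C : ℝ, 1 ≤ C ∧ ∀ n : ℕ, n ≠ 0 → (n.divisors.card : ℝ) ≤ C * (n : ℝ) ^ δ := by
  set C₀ : ℝ := 1 + 1 / (δ * Real.log 2) with hC₀
  have hlog : 0 < Real.log 2 := Real.log_pos one_lt_two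
  have hC₀1 : 1 ≤ C₀ := by rw [hC₀]; have : 0 < 1 / (δ * Real.log 2) := by positivity
                           linarith
  set P : ℕ := ⌈(2 : ℝ) ^ (1 / δ)⌉₊ with hP
  have key : ∀ p : ℕ, 2 ≤ p → ∀ e : ℕ,
      ((e : ℝ) + 1) ≤ (if p < P then C₀ else 1) * ((p : ℝ) ^ e) ^ δ := by
    intro p hp e
    have hp2 : (2 : ℝ) ≤ p := by exact_mod_cast hp
    split_ifs with h
    · have h1 : ((2 : ℝ) ^ e) ^ δ ≤ ((p : ℝ) ^ e) ^ δ := by gcongr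
      have h2 : (1 : ℝ) + e * δ * Real.log 2 ≤ ((2 : ℝ) ^ e) ^ δ := by
        rw [← Real.rpow_natCast, ← Real.rpow_mul (by norm_num),
          Real.rpow_def_of_pos (by norm_num)]
        have := Real.add_one_le_exp (Real.log 2 * (e * δ))
        linarith
      have h3 : (e : ℝ) + 1 ≤ C₀ * (1 + e * δ * Real.log 2) := by
        have : C₀ * (1 + e * δ * Real.log 2)
            = 1 + e + e * δ * Real.log 2 + 1 / (δ * Real.log 2) := by
          rw [hC₀]; field_simp; ring
        rw [this]
        have : 0 ≤ e * δ * Real.log 2 := by positivity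
        have : 0 < 1 / (δ * Real.log 2) := by positivity
        linarith
      calc (e : ℝ) + 1 ≤ _ := h3
        _ ≤ _ := by gcongr; exact h2.trans h1
    · rw [one_mul]
      have h1 : (2 : ℝ) ^ (1 / δ) ≤ p := (Nat.le_ceil _).trans (by exact_mod_cast not_lt.mp h)
      have h2 : (2 : ℝ) ≤ (p : ℝ) ^ δ := by
        calc (2 : ℝ) = ((2 : ℝ) ^ (1 / δ)) ^ δ := by
              rw [← Real.rpow_mul (by norm_num)]; field_simp; simp
          _ ≤ _ := by gcongr
      calc (e : ℝ) + 1 ≤ 2 ^ e := by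
            have := Nat.lt_two_pow_self (n := e)
            exact_mod_cast this
        _ ≤ ((p : ℝ) ^ δ) ^ e := by gcongr
        _ = _ := by rw [← Real.rpow_natCast, ← Real.rpow_mul (by positivity), mul_comm,
                      Real.rpow_mul (by positivity), Real.rpow_natCast]
  refine ⟨C₀ ^ P, one_le_pow₀ hC₀1, fun n hn => ?_⟩
  have hn' : (n : ℝ) ^ δ = ∏ p ∈ n.primeFactors, ((p : ℝ) ^ (n.factorization p)) ^ δ := by
    rw [Real.finsetProd_rpow _ _ (fun i _ => by positivity)]
    congr 1
    conv_lhs => rw [← Nat.prod_factorization_pow_eq_self hn]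
    simp [Finsupp.prod]
  rw [Nat.card_divisors hn, hn']
  push_cast
  calc ∏ p ∈ n.primeFactors, ((n.factorization p : ℝ) + 1)
      ≤ ∏ p ∈ n.primeFactors,
          ((if p < P then C₀ else 1) * ((p : ℝ) ^ (n.factorization p)) ^ δ) := by
        apply Finset.prod_le_prod
        · intros; positivity
        · intro p hp; exact key p (Nat.prime_of_mem_primeFactors hp).two_le _
    _ = (∏ p ∈ n.primeFactors, (if p < P then C₀ else 1)) * _ := Finset.prod_mul_distrib
    _ ≤ _ := by
        gcongr
        rw [Finset.prod_ite, Finset.prod_const, Finset.prod_const_one, mul_one]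
        apply pow_le_pow_right₀ hC₀1
        calc _ ≤ (Finset.range P).card := Finset.card_le_card (by
                intro p hp; simp at hp ⊢; exact hp.2)
          _ = P := Finset.card_range P

/-- Third order Taylor expansion of `(1 + t) ^ c` at `0`. -/
theorem exists_abs_one_add_rpow_sub_le (c : ℝ) :
    ∃ C t₀ : ℝ, 0 < C ∧ 0 < t₀ ∧ ∀ t : ℝ, |t| ≤ t₀ →
      |(1 + t) ^ c - (1 + c * t + c * (c - 1) / 2 * t ^ 2
        + c * (c - 1) * (c - 2) / 6 * t ^ 3)| ≤ C * t ^ 4 := by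
  have h := (Real.one_add_rpow_hasFPowerSeriesAt_zero (a := c)).isBigO_sub_partialSum_pow 4
  obtain ⟨C, hC, h⟩ := h.exists_pos
  rw [Asymptotics.isBigOWith_iff] at h
  obtain ⟨t₀, ht₀, h⟩ := Metric.eventually_nhds_iff.mp h
  refine ⟨C, t₀ / 2, hC, by positivity, fun t ht => ?_⟩
  have h1 := h (y := t) (by simp; linarith)
  have e2 : Ring.choose c 2 = c * (c - 1) / 2 := by
    rw [Ring.choose_eq_smul]
    simp [Polynomial.descPochhammer_smeval_eq_ascPochhammer, Polynomial.ascPochhammer_smeval_cast,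
      Polynomial.ascPochhammer_smeval_eq_eval, ascPochhammer_succ_eval, Nat.factorial]
    ring
  have e3 : Ring.choose c 3 = c * (c - 1) * (c - 2) / 6 := by
    rw [Ring.choose_eq_smul]
    simp [Polynomial.descPochhammer_smeval_eq_ascPochhammer, Polynomial.ascPochhammer_smeval_cast,
      Polynomial.ascPochhammer_smeval_eq_eval, ascPochhammer_succ_eval, Nat.factorial]
    ring
  have e : (binomialSeries ℝ c).partialSum 4 t = 1 + c * t + c * (c - 1) / 2 * t ^ 2
        + c * (c - 1) * (c - 2) / 6 * t ^ 3 := by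
    simp only [FormalMultilinearSeries.partialSum, Finset.sum_range_succ, binomialSeries_apply,
      e2, e3, List.ofFn_const, List.prod_replicate]
    simp
  rw [e] at h1
  simpa [(show Even 4 by decide).pow_abs] using h1

set_option maxHeartbeats 800000 in
/-- If four points of a short interval `[M, M + K]` almost satisfy
`x₁ ^ c + x₂ ^ c = x₃ ^ c + x₄ ^ c`, then the difference of the sums is small, and it determines
`(x₁ - x₂) ^ 2 - (x₃ - x₄) ^ 2` up to a small error. -/
theorem exists_short_interval_constraints {c : ℝ} (hc : 1 < c) :
    ∃ C η : ℝ, 1 ≤ C ∧ 0 < η ∧ ∀ M K : ℝ, 1 ≤ M → 0 < K → M ≤ K ^ 2 → K ≤ η * M →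
      ∀ x₁ ∈ Set.Icc M (M + K), ∀ x₂ ∈ Set.Icc M (M + K), ∀ x₃ ∈ Set.Icc M (M + K),
      ∀ x₄ ∈ Set.Icc M (M + K), |x₁ ^ c + x₂ ^ c - x₃ ^ c - x₄ ^ c| ≤ 2 →
        |x₁ + x₂ - x₃ - x₄| ≤ C * (K ^ 2 / M) ∧
        |(x₁ - x₂) ^ 2 - (x₃ - x₄) ^ 2 - ((x₁ + x₂ - x₃ - x₄) ^ 2
          - 2 * (x₁ + x₂ - x₃ - x₄) * (x₁ + x₂) / (c - 1))|
          ≤ C * (K ^ 4 / M ^ 2 + M ^ (2 - c)) := by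
  obtain ⟨C₀, t₀, hC₀, ht₀, hT⟩ := exists_abs_one_add_rpow_sub_le c
  set A : ℝ := c * (c - 1) / 2 with hA
  set B : ℝ := c * (c - 1) * (c - 2) / 6 with hB
  have hApos : 0 < A := by rw [hA]; have : 0 < c - 1 := by linarith
                           positivity
  set C₁ : ℝ := 2 + 4 * A + 4 * |B| + 4 * C₀ with hC₁
  have hC₁pos : 2 ≤ C₁ := by rw [hC₁]; have := abs_nonneg B; linarith
  set C₂ : ℝ := 3 * |B| * C₁ + 4 * C₀ with hC₂
  have hC₂pos : 0 < C₂ := by positivity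
  refine ⟨2 * C₁ + (16 + 8 * C₂) / A, min t₀ 1, ?_, by positivity, ?_⟩
  · have : 0 < (16 + 8 * C₂) / A := by positivity
    linarith
  rintro M K hM hK hMK hKM x₁ ⟨h₁, h₁'⟩ x₂ ⟨h₂, h₂'⟩ x₃ ⟨h₃, h₃'⟩ x₄ ⟨h₄, h₄'⟩ hS
  have hM0 : 0 < M := by linarith
  set q : ℝ := K / M with hq
  have hq0 : 0 < q := by positivity
  have hqη : q ≤ min t₀ 1 := by rw [hq, div_le_iff₀ hM0]; exact hKM
  have hqt : q ≤ t₀ := hqη.trans (min_le_left _ _)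
  have hq1 : q ≤ 1 := hqη.trans (min_le_right _ _)
  have hKqM : K = q * M := by rw [hq]; field_simp
  set m : ℝ := (x₁ + x₂) / 2 with hm
  have hmM : M ≤ m := by rw [hm]; linarith
  have hm2 : m ≤ 2 * M := by
    have : K ≤ M := by rw [hKqM]; exact mul_le_of_le_one_left hM0.le hq1
    rw [hm]; linarith
  have hm0 : 0 < m := by linarith
  have hexp : ∀ x : ℝ, M ≤ x → x ≤ M + K → |x / m - 1| ≤ q ∧ x ^ c = m ^ c * (1 + (x / m - 1)) ^ c
      ∧ |(1 + (x / m - 1)) ^ c - (1 + c * (x / m - 1) + A * (x / m - 1) ^ 2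
          + B * (x / m - 1) ^ 3)| ≤ C₀ * q ^ 4 := by
    intro x hx hx'
    have h1 : |x / m - 1| ≤ q := by
      have : x / m - 1 = (x - m) / m := by field_simp
      rw [this, abs_div, abs_of_pos hm0, div_le_iff₀ hm0]
      calc |x - m| ≤ K := by rw [abs_le, hm]; constructor <;> linarith
        _ = q * M := hKqM
        _ ≤ q * m := by gcongr
    refine ⟨h1, ?_, ?_⟩
    · rw [← Real.mul_rpow hm0.le (by have : 0 ≤ x / m := div_nonneg (by linarith) hm0.le
                                     linarith)]
      congr 1; field_simp; ring
    · refine (hT _ (h1.trans hqt)).trans ?_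
      have : (x / m - 1) ^ 4 ≤ q ^ 4 := by
        rw [← (show Even 4 by decide).pow_abs]; gcongr
      gcongr
  obtain ⟨a₁, e₁, r₁⟩ := hexp x₁ h₁ h₁'
  obtain ⟨a₂, e₂, r₂⟩ := hexp x₂ h₂ h₂'
  obtain ⟨a₃, e₃, r₃⟩ := hexp x₃ h₃ h₃'
  obtain ⟨a₄, e₄, r₄⟩ := hexp x₄ h₄ h₄'
  clear hexp
  set t₁ := x₁ / m - 1 with ht₁
  set t₂ := x₂ / m - 1 with ht₂
  set t₃ := x₃ / m - 1 with ht₃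
  set t₄ := x₄ / m - 1 with ht₄
  set ℓ := x₁ + x₂ - x₃ - x₄ with hℓ
  have hx₁ : x₁ = m * (1 + t₁) := by rw [ht₁]; field_simp; ring
  have hx₂ : x₂ = m * (1 + t₂) := by rw [ht₂]; field_simp; ring
  have hx₃ : x₃ = m * (1 + t₃) := by rw [ht₃]; field_simp; ring
  have hx₄ : x₄ = m * (1 + t₄) := by rw [ht₄]; field_simp; ring
  have h12 : t₁ + t₂ = 0 := by
    rw [ht₁, ht₂, hm]; have : x₁ + x₂ ≠ 0 := by linarith
    field_simp; ring
  set l := -(t₃ + t₄) with hl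
  have hlℓ : ℓ = m * l := by rw [hℓ, hl, hx₁, hx₂, hx₃, hx₄]; linear_combination m * h12
  set S := (1 + t₁) ^ c + (1 + t₂) ^ c - (1 + t₃) ^ c - (1 + t₄) ^ c with hSdef
  have hSm : |S| ≤ 2 * m ^ (-c) := by
    have h1 : x₁ ^ c + x₂ ^ c - x₃ ^ c - x₄ ^ c = m ^ c * S := by
      rw [e₁, e₂, e₃, e₄, hSdef]; ring
    have hmc : 0 < m ^ c := by positivity
    rw [h1, abs_mul, abs_of_pos hmc] at hS
    rw [Real.rpow_neg hm0.le, ← div_eq_mul_inv, le_div_iff₀ hmc]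
    linarith
  have sq_le : ∀ t : ℝ, |t| ≤ q → t ^ 2 ≤ q ^ 2 := fun t ht => by
    rw [← sq_abs]; gcongr
  have cube_le : ∀ t : ℝ, |t| ≤ q → |t ^ 3| ≤ q ^ 2 := fun t ht => by
    rw [abs_pow]
    calc |t| ^ 3 ≤ q ^ 3 := by gcongr
      _ ≤ q ^ 2 := pow_le_pow_of_le_one hq0.le hq1 (by norm_num)
  have hmq : m ^ (-c) ≤ q ^ 2 := by
    calc m ^ (-c) ≤ M ^ (-c) := Real.rpow_le_rpow_of_nonpos hM0 hmM (by linarith)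
      _ ≤ M ^ (-1 : ℝ) := Real.rpow_le_rpow_of_exponent_le hM (by linarith)
      _ = M / M ^ 2 := by rw [Real.rpow_neg_one]; field_simp
      _ ≤ K ^ 2 / M ^ 2 := by gcongr
      _ = q ^ 2 := by rw [hq, div_pow]
  have hq42 : q ^ 4 ≤ q ^ 2 := pow_le_pow_of_le_one hq0.le hq1 (by norm_num)
  set R₁ := (1 + t₁) ^ c - (1 + c * t₁ + A * t₁ ^ 2 + B * t₁ ^ 3) with hR₁
  set R₂ := (1 + t₂) ^ c - (1 + c * t₂ + A * t₂ ^ 2 + B * t₂ ^ 3) with hR₂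
  set R₃ := (1 + t₃) ^ c - (1 + c * t₃ + A * t₃ ^ 2 + B * t₃ ^ 3) with hR₃
  set R₄ := (1 + t₄) ^ c - (1 + c * t₄ + A * t₄ ^ 2 + B * t₄ ^ 3) with hR₄
  have hR : |R₁ + R₂ - R₃ - R₄| ≤ 4 * C₀ * q ^ 4 := by
    rw [abs_le] at r₁ r₂ r₃ r₄ ⊢; constructor <;> linarith [r₁.1, r₁.2, r₂.1, r₂.2, r₃.1, r₃.2,
      r₄.1, r₄.2]
  have hid : A * (t₁ ^ 2 + t₂ ^ 2 - t₃ ^ 2 - t₄ ^ 2) + c * l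
      = S - B * (t₁ ^ 3 + t₂ ^ 3 - t₃ ^ 3 - t₄ ^ 3) - (R₁ + R₂ - R₃ - R₄) := by
    rw [hSdef, hR₁, hR₂, hR₃, hR₄, hl]; linear_combination (-c) * h12
  clear_value S R₁ R₂ R₃ R₄
  have hl_le : |l| ≤ C₁ * q ^ 2 := by
    have hQ : |A * (t₁ ^ 2 + t₂ ^ 2 - t₃ ^ 2 - t₄ ^ 2)| ≤ A * (4 * q ^ 2) := by
      rw [abs_mul, abs_of_pos hApos]
      gcongr
      rw [abs_le]
      constructor <;> linarith [sq_le t₁ a₁, sq_le t₂ a₂, sq_le t₃ a₃, sq_le t₄ a₄,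
        sq_nonneg t₁, sq_nonneg t₂, sq_nonneg t₃, sq_nonneg t₄, sq_nonneg q]
    have hT3 : |B * (t₁ ^ 3 + t₂ ^ 3 - t₃ ^ 3 - t₄ ^ 3)| ≤ |B| * (4 * q ^ 2) := by
      rw [abs_mul]
      gcongr
      have b₁ := abs_le.mp (cube_le t₁ a₁)
      have b₂ := abs_le.mp (cube_le t₂ a₂)
      have b₃ := abs_le.mp (cube_le t₃ a₃)
      have b₄ := abs_le.mp (cube_le t₄ a₄)
      rw [abs_le]
      constructor <;> linarith
    have hcl : |c * l| ≤ C₁ * q ^ 2 := by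
      have hR' : |R₁ + R₂ - R₃ - R₄| ≤ 4 * C₀ * q ^ 2 := hR.trans (by gcongr)
      have hS' : |S| ≤ 2 * q ^ 2 := hSm.trans (by gcongr)
      have b₁ := abs_le.mp hQ
      have b₂ := abs_le.mp hT3
      have b₃ := abs_le.mp hR'
      have b₄ := abs_le.mp hS'
      have : C₁ * q ^ 2 = 2 * q ^ 2 + A * (4 * q ^ 2) + |B| * (4 * q ^ 2) + 4 * C₀ * q ^ 2 := by
        rw [hC₁]; ring
      rw [abs_le, this]
      constructor <;> linarith
    rw [abs_mul, abs_of_pos (by linarith : 0 < c)] at hcl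
    exact (le_mul_of_one_le_left (abs_nonneg l) hc.le).trans hcl
  have hm2q : m * (C₁ * q ^ 2) ≤ 2 * C₁ * (K ^ 2 / M) := by
    calc m * (C₁ * q ^ 2) ≤ (2 * M) * (C₁ * q ^ 2) := by gcongr
      _ = 2 * C₁ * (K ^ 2 / M) := by rw [hq]; field_simp
  have hpos' : 0 < (16 + 8 * C₂) / A := by positivity
  constructor
  · rw [hlℓ, abs_mul, abs_of_pos hm0]
    calc m * |l| ≤ m * (C₁ * q ^ 2) := by gcongr
      _ ≤ _ := hm2q
      _ ≤ _ := by gcongr; linarith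
  · have hcube : |t₁ ^ 3 + t₂ ^ 3 - t₃ ^ 3 - t₄ ^ 3| ≤ C₁ * q ^ 2 * (3 * q ^ 2) := by
      have : t₁ ^ 3 + t₂ ^ 3 - t₃ ^ 3 - t₄ ^ 3 = l * (t₃ ^ 2 - t₃ * t₄ + t₄ ^ 2) := by
        rw [hl, show t₁ = -t₂ by linarith]; ring
      rw [this, abs_mul]
      gcongr
      rw [abs_le]
      constructor <;> linarith [sq_le t₃ a₃, sq_le t₄ a₄, sq_nonneg (t₃ + t₄),
        sq_nonneg (t₃ - t₄), sq_nonneg t₃, sq_nonneg t₄]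
    have hmain : |A * (t₁ ^ 2 + t₂ ^ 2 - t₃ ^ 2 - t₄ ^ 2) + c * l|
        ≤ 2 * m ^ (-c) + C₂ * q ^ 4 := by
      rw [hid]
      have h3 : |B * (t₁ ^ 3 + t₂ ^ 3 - t₃ ^ 3 - t₄ ^ 3)| ≤ |B| * (C₁ * q ^ 2 * (3 * q ^ 2)) := by
        rw [abs_mul]; gcongr
      have : C₂ * q ^ 4 = |B| * (C₁ * q ^ 2 * (3 * q ^ 2)) + 4 * C₀ * q ^ 4 := by
        rw [hC₂]; ring
      have b₁ := abs_le.mp h3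
      have b₂ := abs_le.mp hR
      have b₃ := abs_le.mp hSm
      rw [this, abs_le]
      constructor <;> linarith
    have hc1 : c - 1 ≠ 0 := by linarith
    have hc0 : c ≠ 0 := by linarith
    have heq : (x₁ - x₂) ^ 2 - (x₃ - x₄) ^ 2 - (ℓ ^ 2 - 2 * ℓ * (x₁ + x₂) / (c - 1))
        = 2 * m ^ 2 / A * (A * (t₁ ^ 2 + t₂ ^ 2 - t₃ ^ 2 - t₄ ^ 2) + c * l) := by
      have hs : x₁ + x₂ = 2 * m := by rw [hm]; ring
      rw [hs, hlℓ, hx₁, hx₂, hx₃, hx₄, hA, show t₁ = -t₂ by linarith, hl]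
      field_simp
      ring
    rw [heq, abs_mul, abs_of_pos (by positivity)]
    have hmc : m ^ 2 * m ^ (-c) ≤ 4 * M ^ (2 - c) := by
      calc m ^ 2 * m ^ (-c) ≤ (2 * M) ^ 2 * M ^ (-c) := by
            have := Real.rpow_le_rpow_of_nonpos hM0 hmM (by linarith : -c ≤ 0)
            gcongr
        _ = 4 * (M ^ (2 : ℝ) * M ^ (-c)) := by
            rw [Real.rpow_two]; ring
        _ = _ := by rw [← Real.rpow_add hM0]; congr 2
    have hmq4 : m ^ 2 * q ^ 4 ≤ 4 * (K ^ 4 / M ^ 2) := by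
      calc m ^ 2 * q ^ 4 ≤ (2 * M) ^ 2 * q ^ 4 := by gcongr
        _ = _ := by rw [hq]; field_simp; ring
    calc 2 * m ^ 2 / A * _ ≤ 2 * m ^ 2 / A * (2 * m ^ (-c) + C₂ * q ^ 4) := by gcongr
      _ = (4 * (m ^ 2 * m ^ (-c)) + 2 * C₂ * (m ^ 2 * q ^ 4)) / A := by ring
      _ ≤ (4 * (4 * M ^ (2 - c)) + 2 * C₂ * (4 * (K ^ 4 / M ^ 2))) / A := by gcongr
      _ ≤ ((16 + 8 * C₂) * (K ^ 4 / M ^ 2 + M ^ (2 - c))) / A := by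
          gcongr
          have : 0 ≤ K ^ 4 / M ^ 2 := by positivity
          have h0 : 0 ≤ M ^ (2 - c) := by positivity
          have := mul_nonneg hC₂pos.le h0
          linarith
      _ = (16 + 8 * C₂) / A * (K ^ 4 / M ^ 2 + M ^ (2 - c)) := by ring
      _ ≤ _ := by
          gcongr
          linarith

/-- The additive quadruples of the values of `a` on `S`. -/
def additiveQuadruples (a : ℕ → ℤ) (S : Finset ℕ) : Finset (ℕ × ℕ × ℕ × ℕ) :=
  (S ×ˢ S ×ˢ S ×ˢ S).filter fun q => a q.1 + a q.2.1 = a q.2.2.1 + a q.2.2.2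

theorem floor_rpow_lt_floor_rpow {c : ℝ} (hc : 1 < c) {m n : ℕ} (hm : 1 ≤ m) (h : m < n) :
    ⌊(m : ℝ) ^ c⌋ < ⌊(n : ℝ) ^ c⌋ := by
  have hm' : (1 : ℝ) ≤ m := by exact_mod_cast hm
  have hmn : (m : ℝ) + 1 ≤ n := by exact_mod_cast h
  have h1 : (m : ℝ) ^ c + 1 ≤ (n : ℝ) ^ c := by
    have hs : ∀ x : ℝ, 0 < x → x ^ c = x * x ^ (c - 1) := fun x hx => by
      rw [Real.rpow_sub hx, Real.rpow_one]; field_simp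
    rw [hs m (by linarith), hs n (by linarith)]
    have h2 : (m : ℝ) ^ (c - 1) ≤ (n : ℝ) ^ (c - 1) :=
      Real.rpow_le_rpow (by linarith) (by linarith) (by linarith)
    have h3 : (1 : ℝ) ≤ (m : ℝ) ^ (c - 1) := Real.one_le_rpow hm' (by linarith)
    nlinarith
  have := Int.floor_le_floor h1
  rw [Int.floor_add_one] at this
  omega

theorem card_int_dvd_le (D : ℤ) (hD : D ≠ 0) (s : Finset ℤ) (hs : ∀ w ∈ s, w ∣ D) :
    s.card ≤ 2 * D.natAbs.divisors.card := by
  apply Finset.card_le_mul_card_image_of_maps_to (f := Int.natAbs)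
  · intro w hw
    rw [Nat.mem_divisors]
    exact ⟨Int.natAbs_dvd_natAbs.mpr (hs w hw), by simpa using hD⟩
  · intro b _
    calc _ ≤ ({(b : ℤ), -(b : ℤ)} : Finset ℤ).card := Finset.card_le_card (by
            intro w hw
            simp only [Finset.mem_filter] at hw
            simp only [Finset.mem_insert, Finset.mem_singleton]
            omega)
      _ ≤ 2 := Finset.card_le_two

theorem card_Icc_ceil_floor_le {x y : ℝ} (h : x ≤ y) :
    ((Finset.Icc ⌈x⌉ ⌊y⌋).card : ℝ) ≤ y - x + 1 := by
  rw [Int.card_Icc]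
  have h1 : ((⌊y⌋ : ℝ)) ≤ y := Int.floor_le y
  have h2 := Int.le_ceil x
  rcases le_total 0 (⌊y⌋ + 1 - ⌈x⌉) with h0 | h0
  · have : (((⌊y⌋ + 1 - ⌈x⌉).toNat : ℤ) : ℝ) = ((⌊y⌋ + 1 - ⌈x⌉ : ℤ) : ℝ) := by
      rw [Int.toNat_of_nonneg h0]
    rw [Int.cast_natCast] at this
    rw [this]; push_cast; linarith
  · rw [Int.toNat_of_nonpos h0]; push_cast; linarith

theorem card_additiveQuadruples_diagonal_le {a : ℕ → ℤ} {S : Finset ℕ}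
    (ha : ∀ m ∈ S, ∀ n ∈ S, m < n → a m < a n) :
    ((additiveQuadruples a S).filter fun q =>
      ((q.1 : ℤ) - q.2.1) ^ 2 = ((q.2.2.1 : ℤ) - q.2.2.2) ^ 2).card ≤ 2 * S.card ^ 2 := by
  have hsub : ((additiveQuadruples a S).filter fun q =>
      ((q.1 : ℤ) - q.2.1) ^ 2 = ((q.2.2.1 : ℤ) - q.2.2.2) ^ 2) ⊆
      (S ×ˢ S).image (fun p => (p.1, p.2, p.1, p.2)) ∪
        (S ×ˢ S).image (fun p => (p.1, p.2, p.2, p.1)) := by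
    rintro ⟨n₁, n₂, n₃, n₄⟩ hq
    simp only [additiveQuadruples, Finset.mem_filter, Finset.mem_product] at hq
    obtain ⟨⟨⟨h₁, h₂, h₃, h₄⟩, he⟩, hsq⟩ := hq
    have aux : ∀ x ∈ S, ∀ y ∈ S, ∀ z ∈ S, ∀ w ∈ S, a x + a y = a z + a w →
        (x : ℤ) - y = z - w → x = z ∧ y = w := by
      intro x hx y hy z hz w hw h1 h2
      rcases lt_trichotomy x z with h | h | h
      · have := ha x hx z hz h
        have := ha y hy w hw (by omega)
        omega
      · exact ⟨h, by omega⟩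
      · have := ha z hz x hx h
        have := ha w hw y hy (by omega)
        omega
    rw [Finset.mem_union, Finset.mem_image, Finset.mem_image]
    rcases sq_eq_sq_iff_eq_or_eq_neg.mp hsq with h | h
    · obtain ⟨rfl, rfl⟩ := aux n₁ h₁ n₂ h₂ n₃ h₃ n₄ h₄ he h
      exact Or.inl ⟨(n₁, n₂), by simp [h₁, h₂], rfl⟩
    · obtain ⟨rfl, rfl⟩ := aux n₁ h₁ n₂ h₂ n₄ h₄ n₃ h₃ (by linarith) (by linarith)
      exact Or.inr ⟨(n₁, n₂), by simp [h₁, h₂], rfl⟩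
  calc _ ≤ _ := Finset.card_le_card hsub
    _ ≤ _ := Finset.card_union_le _ _
    _ ≤ (S ×ˢ S).card + (S ×ˢ S).card := by gcongr <;> exact Finset.card_image_le
    _ = _ := by rw [Finset.card_product]; ring

/-- Additive energy of `⌊n ^ c⌋` on the short interval `(M, M + K]`. -/
theorem exists_card_additiveQuadruples_le {c : ℝ} (hc : 1 < c) {a : ℕ → ℤ}
    (ha : ∀ n : ℕ, 1 ≤ n → a n = ⌊(n : ℝ) ^ c⌋) {δ : ℝ} (hδ : 0 < δ) :
    ∃ C η : ℝ, 0 < C ∧ 0 < η ∧ ∀ M K : ℕ, 1 ≤ M → M ≤ K ^ 2 → (K : ℝ) ≤ η * M →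
      ((additiveQuadruples a (Finset.Ioc M (M + K))).card : ℝ) ≤ 2 * (K : ℝ) ^ 2 +
        C * K * ((K : ℝ) ^ 2 / M) * ((K : ℝ) ^ 4 / (M : ℝ) ^ 2 + (M : ℝ) ^ (2 - c) + 1) *
          ((K : ℝ) ^ 2) ^ δ := by
  obtain ⟨C₁, η, hC₁, hη, hcon⟩ := exists_short_interval_constraints hc
  obtain ⟨C₂, hC₂, hdiv⟩ := exists_card_divisors_le hδ
  refine ⟨2 * (3 * C₁) * (2 * C₁) * (2 * C₂), η, by positivity, hη, ?_⟩
  intro M K hM hMK hKM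
  have hM1 : (1 : ℝ) ≤ M := by exact_mod_cast hM
  have hK0 : 0 < K := by
    rcases Nat.eq_zero_or_pos K with h | h
    · subst h; simp at hMK; omega
    · exact h
  have hKpos : (0 : ℝ) < K := by exact_mod_cast hK0
  have hMK' : (M : ℝ) ≤ (K : ℝ) ^ 2 := by exact_mod_cast hMK
  set S := Finset.Ioc M (M + K) with hS
  have hScard : S.card = K := by simp [hS]
  have hmono : ∀ m ∈ S, ∀ n ∈ S, m < n → a m < a n := by
    intro m hm n hn h
    simp only [hS, Finset.mem_Ioc] at hm hn
    rw [ha m (by omega), ha n (by omega)]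
    exact floor_rpow_lt_floor_rpow hc (by omega) h
  set Λ : ℝ := C₁ * ((K : ℝ) ^ 2 / M) with hΛ
  set X : ℝ := C₁ * ((K : ℝ) ^ 4 / (M : ℝ) ^ 2 + (M : ℝ) ^ (2 - c)) with hX
  have hΛ1 : 1 ≤ Λ := by
    have : 1 ≤ (K : ℝ) ^ 2 / M := by rw [le_div_iff₀ (by linarith)]; linarith
    rw [hΛ]; nlinarith
  have hX0 : 0 ≤ X := by positivity
  set W : ℝ := 2 * (C₂ * ((K : ℝ) ^ 2) ^ δ) with hW
  have hW0 : 0 ≤ W := by positivity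
  set T := (additiveQuadruples a S).filter fun q =>
      ¬ ((q.1 : ℤ) - q.2.1) ^ 2 = ((q.2.2.1 : ℤ) - q.2.2.2) ^ 2 with hT
  have hTmem : ∀ q ∈ T, (q.1 ∈ S ∧ q.2.1 ∈ S ∧ q.2.2.1 ∈ S ∧ q.2.2.2 ∈ S) ∧
      ((q.1 : ℤ) - q.2.1) ^ 2 - ((q.2.2.1 : ℤ) - q.2.2.2) ^ 2 ≠ 0 ∧
      |((q.1 : ℤ) + q.2.1 - q.2.2.1 - q.2.2.2 : ℝ)| ≤ Λ ∧
      |((q.1 : ℝ) - q.2.1) ^ 2 - ((q.2.2.1 : ℝ) - q.2.2.2) ^ 2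
        - (((q.1 : ℝ) + q.2.1 - q.2.2.1 - q.2.2.2) ^ 2
          - 2 * ((q.1 : ℝ) + q.2.1 - q.2.2.1 - q.2.2.2) * ((q.1 : ℝ) + q.2.1) / (c - 1))| ≤ X := by
    rintro ⟨n₁, n₂, n₃, n₄⟩ hq
    simp only [hT, additiveQuadruples, Finset.mem_filter, Finset.mem_product] at hq
    obtain ⟨⟨⟨h₁, h₂, h₃, h₄⟩, he⟩, hne⟩ := hq
    have hIcc : ∀ n ∈ S, (n : ℝ) ∈ Set.Icc (M : ℝ) (M + K) := by
      intro n hn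
      simp only [hS, Finset.mem_Ioc] at hn
      exact ⟨by exact_mod_cast hn.1.le, by exact_mod_cast hn.2⟩
    have hfl : ∀ n ∈ S, (a n : ℝ) ≤ (n : ℝ) ^ c ∧ (n : ℝ) ^ c < a n + 1 := by
      intro n hn
      simp only [hS, Finset.mem_Ioc] at hn
      rw [ha n (by omega)]
      exact ⟨Int.floor_le _, Int.lt_floor_add_one _⟩
    have he' : (a n₁ : ℝ) + a n₂ = a n₃ + a n₄ := by exact_mod_cast he
    have := hcon M K hM1 hKpos hMK' hKM n₁ (hIcc _ h₁) n₂ (hIcc _ h₂) n₃ (hIcc _ h₃) n₄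
      (hIcc _ h₄) (by
        have f₁ := hfl _ h₁
        have f₂ := hfl _ h₂
        have f₃ := hfl _ h₃
        have f₄ := hfl _ h₄
        rw [abs_le]; constructor <;> linarith)
    exact ⟨⟨h₁, h₂, h₃, h₄⟩, sub_ne_zero.mpr hne, by simpa using this.1, this.2⟩
  -- quadruples with prescribed sum, defect and difference of squares
  have hfiber : ∀ s ℓ D : ℤ, ((T.filter fun q => ((q.1 : ℤ) + q.2.1,
      (q.1 : ℤ) + q.2.1 - q.2.2.1 - q.2.2.2) = (s, ℓ)).filter fun q =>
        ((q.1 : ℤ) - q.2.1) ^ 2 - ((q.2.2.1 : ℤ) - q.2.2.2) ^ 2 = D).card ≤ W := by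
    intro s ℓ D
    set U := (T.filter fun q => ((q.1 : ℤ) + q.2.1,
      (q.1 : ℤ) + q.2.1 - q.2.2.1 - q.2.2.2) = (s, ℓ)).filter fun q =>
        ((q.1 : ℤ) - q.2.1) ^ 2 - ((q.2.2.1 : ℤ) - q.2.2.2) ^ 2 = D with hU
    have hUm : ∀ q ∈ U, q ∈ T ∧ (q.1 : ℤ) + q.2.1 = s ∧
        (q.1 : ℤ) + q.2.1 - q.2.2.1 - q.2.2.2 = ℓ ∧
        ((q.1 : ℤ) - q.2.1) ^ 2 - ((q.2.2.1 : ℤ) - q.2.2.2) ^ 2 = D := by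
      intro q hq
      simp only [hU, Finset.mem_filter, Prod.mk.injEq] at hq
      exact ⟨hq.1.1, hq.1.2.1, hq.1.2.2, hq.2⟩
    rcases U.eq_empty_or_nonempty with h0 | ⟨q₀, hq₀⟩
    · rw [h0]; simpa using hW0
    have hD0 : D ≠ 0 := by
      rw [← (hUm _ hq₀).2.2.2]; exact (hTmem _ (hUm _ hq₀).1).2.1
    have hDK : D.natAbs ≤ K ^ 2 := by
      have h1 := (hUm _ hq₀).2.2.2
      obtain ⟨g₁, g₂, g₃, g₄⟩ := (hTmem _ (hUm _ hq₀).1).1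
      simp only [hS, Finset.mem_Ioc] at g₁ g₂ g₃ g₄
      have hu : ((q₀.1 : ℤ) - q₀.2.1) ^ 2 ≤ (K : ℤ) ^ 2 := sq_le_sq' (by omega) (by omega)
      have hv : ((q₀.2.2.1 : ℤ) - q₀.2.2.2) ^ 2 ≤ (K : ℤ) ^ 2 := sq_le_sq' (by omega) (by omega)
      have hu0 := sq_nonneg ((q₀.1 : ℤ) - q₀.2.1)
      have hv0 := sq_nonneg ((q₀.2.2.1 : ℤ) - q₀.2.2.2)
      zify
      rw [abs_le]
      constructor <;> linarith
    have hcard : U.card ≤ 2 * D.natAbs.divisors.card := by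
      set φ : ℕ × ℕ × ℕ × ℕ → ℤ := fun q => ((q.1 : ℤ) - q.2.1) - ((q.2.2.1 : ℤ) - q.2.2.2)
        with hφ
      rw [← Finset.card_image_of_injOn (s := U) (f := φ)]
      · apply card_int_dvd_le D hD0
        intro w hw
        obtain ⟨q, hq, rfl⟩ := Finset.mem_image.mp hw
        rw [← (hUm _ hq).2.2.2]
        exact ⟨((q.1 : ℤ) - q.2.1) + ((q.2.2.1 : ℤ) - q.2.2.2), by simp only [hφ]; ring⟩
      · rintro ⟨x₁, x₂, x₃, x₄⟩ hx ⟨y₁, y₂, y₃, y₄⟩ hy hxy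
        obtain ⟨-, ex₁, ex₂, ex₃⟩ := hUm _ hx
        obtain ⟨-, ey₁, ey₂, ey₃⟩ := hUm _ hy
        simp only [hφ] at hxy ex₁ ex₂ ex₃ ey₁ ey₂ ey₃
        have hw0 : ((x₁ : ℤ) - x₂) - ((x₃ : ℤ) - x₄) ≠ 0 := by
          intro h
          apply hD0
          rw [← ex₃]; linear_combination (((x₁ : ℤ) - x₂) + ((x₃ : ℤ) - x₄)) * h
        have hplus : ((x₁ : ℤ) - x₂) + ((x₃ : ℤ) - x₄) = ((y₁ : ℤ) - y₂) + ((y₃ : ℤ) - y₄) := by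
          apply mul_left_cancel₀ hw0
          linear_combination ex₃ - ey₃ - (((y₁ : ℤ) - y₂) + ((y₃ : ℤ) - y₄)) * hxy
        simp only [Prod.mk.injEq]
        omega
    calc (U.card : ℝ) ≤ 2 * (D.natAbs.divisors.card : ℝ) := by exact_mod_cast hcard
      _ ≤ 2 * (C₂ * (D.natAbs : ℝ) ^ δ) := by
          gcongr; exact hdiv _ (by simpa using hD0)
      _ ≤ W := by
          rw [hW]
          gcongr
          exact_mod_cast hDK
  have hTcard : (T.card : ℝ) ≤ (⌊(2 * X + 1)⌋₊ * ⌊W⌋₊ : ℕ) * ((2 * K) * (2 * Λ + 1)) := by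
    have h1 := Finset.card_le_mul_card_image_of_maps_to (s := T)
      (f := fun q => ((q.1 : ℤ) + q.2.1, (q.1 : ℤ) + q.2.1 - q.2.2.1 - q.2.2.2))
      (t := Finset.Icc (2 * M + 1 : ℤ) (2 * M + 2 * K) ×ˢ Finset.Icc ⌈-Λ⌉ ⌊Λ⌋)
      (by
        intro q hq
        obtain ⟨⟨g₁, g₂, g₃, g₄⟩, -, hl, -⟩ := hTmem q hq
        simp only [hS, Finset.mem_Ioc] at g₁ g₂ g₃ g₄
        simp only [Finset.mem_product, Finset.mem_Icc]
        refine ⟨⟨by omega, by omega⟩, ?_, ?_⟩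
        · rw [Int.ceil_le]; push_cast; exact (abs_le.mp hl).1
        · rw [Int.le_floor]; push_cast; exact (abs_le.mp hl).2)
      (⌊(2 * X + 1)⌋₊ * ⌊W⌋₊)
      (by
        rintro ⟨s, ℓ⟩ -
        set Y : ℝ := (ℓ : ℝ) ^ 2 - 2 * ℓ * s / (c - 1) with hY
        have h2 := Finset.card_le_mul_card_image_of_maps_to
          (s := T.filter fun q => ((q.1 : ℤ) + q.2.1,
            (q.1 : ℤ) + q.2.1 - q.2.2.1 - q.2.2.2) = (s, ℓ))
          (f := fun q => ((q.1 : ℤ) - q.2.1) ^ 2 - ((q.2.2.1 : ℤ) - q.2.2.2) ^ 2)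
          (t := Finset.Icc ⌈Y - X⌉ ⌊Y + X⌋)
          (by
            intro q hq
            obtain ⟨hqT, hq⟩ := Finset.mem_filter.mp hq
            simp only [Prod.mk.injEq] at hq
            obtain ⟨hs, hl⟩ := hq
            obtain ⟨-, -, -, h⟩ := hTmem q hqT
            have hs' : (q.1 : ℝ) + q.2.1 = s := by exact_mod_cast hs
            have hl' : (q.1 : ℝ) + q.2.1 - q.2.2.1 - q.2.2.2 = ℓ := by exact_mod_cast hl
            rw [hl', hs', ← hY] at h
            have h' := abs_le.mp h
            simp only [Finset.mem_Icc]
            constructor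
            · rw [Int.ceil_le]; push_cast; linarith
            · rw [Int.le_floor]; push_cast; linarith)
          ⌊W⌋₊ (fun D _ => Nat.le_floor (hfiber s ℓ D))
        refine h2.trans ?_
        rw [mul_comm]
        gcongr
        apply Nat.le_floor
        have := card_Icc_ceil_floor_le (show Y - X ≤ Y + X by linarith)
        linarith)
    have h1' : (T.card : ℝ) ≤ (⌊(2 * X + 1)⌋₊ * ⌊W⌋₊ : ℕ) *
        ((Finset.Icc (2 * M + 1 : ℤ) (2 * M + 2 * K) ×ˢ Finset.Icc ⌈-Λ⌉ ⌊Λ⌋).card : ℝ) := by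
      exact_mod_cast h1
    refine h1'.trans ?_
    rw [Finset.card_product]
    push_cast
    gcongr
    · rw [Int.card_Icc]
      have : (2 * (M : ℤ) + 2 * K + 1 - (2 * M + 1)).toNat = 2 * K := by omega
      rw [this]; push_cast; rfl
    · have := card_Icc_ceil_floor_le (show -Λ ≤ Λ by linarith)
      linarith
  have hdiag := card_additiveQuadruples_diagonal_le hmono
  have hsplit := Finset.card_filter_add_card_filter_not (s := additiveQuadruples a S)
    (fun q => ((q.1 : ℤ) - q.2.1) ^ 2 = ((q.2.2.1 : ℤ) - q.2.2.2) ^ 2)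
  rw [← hsplit]
  push_cast
  rw [hScard] at hdiag
  have hdiag' : ((((additiveQuadruples a S).filter fun q =>
      ((q.1 : ℤ) - q.2.1) ^ 2 = ((q.2.2.1 : ℤ) - q.2.2.2) ^ 2).card : ℕ) : ℝ) ≤ 2 * (K : ℝ) ^ 2 := by
    exact_mod_cast hdiag
  refine add_le_add hdiag' (hTcard.trans ?_)
  push_cast
  calc (⌊2 * X + 1⌋₊ : ℝ) * ⌊W⌋₊ * (2 * K * (2 * Λ + 1))
      ≤ (2 * X + 1) * W * (2 * K * (3 * Λ)) := by
        gcongr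
        · exact Nat.floor_le (by positivity)
        · exact Nat.floor_le hW0
        · linarith
    _ ≤ (2 * C₁ * ((K : ℝ) ^ 4 / (M : ℝ) ^ 2 + (M : ℝ) ^ (2 - c) + 1)) * W * (2 * K * (3 * Λ)) := by
        gcongr
        rw [hX]; linarith
    _ = _ := by rw [hW, hΛ]; ring

/-- Additive energy of `⌊n ^ c⌋` on `(k ^ 26, k ^ 26 + k ^ r]`, for a suitable length exponent
`r`. -/
theorem exists_length_card_additiveQuadruples_le {c : ℝ} (hc : 1 < c) {a : ℕ → ℤ}
    (ha : ∀ n : ℕ, 1 ≤ n → a n = ⌊(n : ℝ) ^ c⌋) {τ : ℝ}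
    (hτ1 : c < 3 / 2 → τ = (c - 1) / 2)
    (hτ2 : 3 / 2 ≤ c → c < 2 → τ = 1 / 4)
    (hτ3 : 2 ≤ c → τ = 7 / 26) :
    ∃ r : ℕ, r ≤ 26 ∧ ∀ δ > 0, ∃ C > 0, ∀ᶠ k : ℕ in atTop,
      ((additiveQuadruples a (Finset.Ioc (k ^ 26) (k ^ 26 + k ^ r))).card : ℝ)
        ≤ C * (k : ℝ) ^ (3 * r - 52 * τ + δ) := by
  obtain ⟨r, hr13, hr14, h52, hmax1, hmax2, hmax3⟩ : ∃ r : ℕ, 13 ≤ r ∧ r ≤ 14 ∧ 52 * τ ≤ r ∧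
      (4 * r - 52 : ℝ) ≤ 26 - 52 * τ ∧ 26 * (2 - c) ≤ 26 - 52 * τ ∧ 0 ≤ 26 - 52 * τ := by
    rcases lt_or_ge c (3 / 2) with h | h
    · refine ⟨13, le_rfl, by norm_num, ?_⟩
      rw [hτ1 h]; norm_num
      refine ⟨?_, ?_, ?_, ?_⟩ <;> linarith
    rcases lt_or_ge c 2 with h' | h'
    · refine ⟨13, le_rfl, by norm_num, ?_⟩
      rw [hτ2 h h']; norm_num
      linarith
    · refine ⟨14, by norm_num, le_rfl, ?_⟩
      rw [hτ3 h']; norm_num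
      linarith
  refine ⟨r, by omega, fun δ hδ => ?_⟩
  obtain ⟨C, η, hC, hη, hE⟩ := exists_card_additiveQuadruples_le hc ha
    (show 0 < δ / 28 by positivity)
  refine ⟨2 + 3 * C, by positivity, ?_⟩
  filter_upwards [eventually_ge_atTop 1, eventually_ge_atTop ⌈1 / η⌉₊] with k hk1 hkη
  have hx1 : (1 : ℝ) ≤ k := by exact_mod_cast hk1
  have hxη : 1 / η ≤ (k : ℝ) := (Nat.le_ceil _).trans (by exact_mod_cast hkη)
  have hx0 : (0 : ℝ) < k := by linarith
  have h := hE (k ^ 26) (k ^ r) (Nat.one_le_pow _ _ hk1)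
    (by rw [← pow_mul]; exact Nat.pow_le_pow_right hk1 (by omega))
    (by
      push_cast
      have h1 : (k : ℝ) ^ r ≤ (k : ℝ) ^ 25 := pow_le_pow_right₀ hx1 (by omega)
      have h2 : 1 ≤ η * k := by rw [div_le_iff₀ hη] at hxη; linarith
      calc (k : ℝ) ^ r ≤ (k : ℝ) ^ 25 := h1
        _ ≤ (η * k) * (k : ℝ) ^ 25 := le_mul_of_one_le_left (by positivity) h2
        _ = _ := by ring)
  refine h.trans ?_
  push_cast
  set x : ℝ := (k : ℝ) with hx
  have hr14' : (r : ℝ) ≤ 14 := by exact_mod_cast hr14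
  have e1 : (x ^ r) ^ 2 = x ^ (2 * r : ℝ) := by
    rw [← pow_mul, ← Real.rpow_natCast]; push_cast; ring_nf
  have e2 : (x ^ r) ^ 2 / x ^ 26 = x ^ (2 * r - 26 : ℝ) := by
    rw [e1, Real.rpow_sub hx0]; norm_cast
  have e3 : (x ^ r) ^ 4 / (x ^ 26) ^ 2 = x ^ (4 * r - 52 : ℝ) := by
    rw [Real.rpow_sub hx0, ← pow_mul, ← pow_mul, ← Real.rpow_natCast, ← Real.rpow_natCast]
    push_cast; ring_nf
  have e4 : (x ^ 26) ^ (2 - c) = x ^ (26 * (2 - c)) := by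
    rw [← Real.rpow_natCast, ← Real.rpow_mul hx0.le]; norm_num
  have e5 : ((x ^ r) ^ 2) ^ (δ / 28) ≤ x ^ δ := by
    rw [e1, ← Real.rpow_mul hx0.le]
    apply Real.rpow_le_rpow_of_exponent_le hx1
    nlinarith
  have e6 : x ^ (4 * r - 52 : ℝ) + x ^ (26 * (2 - c)) + 1 ≤ 3 * x ^ (26 - 52 * τ) := by
    have h1 : x ^ (4 * r - 52 : ℝ) ≤ x ^ (26 - 52 * τ) :=
      Real.rpow_le_rpow_of_exponent_le hx1 hmax1
    have h2 : x ^ (26 * (2 - c)) ≤ x ^ (26 - 52 * τ) :=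
      Real.rpow_le_rpow_of_exponent_le hx1 hmax2
    have h3 : 1 ≤ x ^ (26 - 52 * τ) := Real.one_le_rpow hx1 hmax3
    linarith
  rw [e2, e3, e4]
  calc 2 * (x ^ r) ^ 2 + C * x ^ r * x ^ (2 * r - 26 : ℝ)
        * (x ^ (4 * r - 52 : ℝ) + x ^ (26 * (2 - c)) + 1) * ((x ^ r) ^ 2) ^ (δ / 28)
      ≤ 2 * x ^ (3 * r - 52 * τ + δ) + C * x ^ r * x ^ (2 * r - 26 : ℝ)
        * (3 * x ^ (26 - 52 * τ)) * x ^ δ := by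
        gcongr
        rw [e1]
        apply Real.rpow_le_rpow_of_exponent_le hx1
        linarith
    _ = 2 * x ^ (3 * r - 52 * τ + δ) + 3 * C * (x ^ (r : ℝ) * x ^ (2 * r - 26 : ℝ)
        * x ^ (26 - 52 * τ) * x ^ δ) := by rw [Real.rpow_natCast]; ring
    _ = (2 + 3 * C) * x ^ (3 * r - 52 * τ + δ) := by
        rw [← Real.rpow_add hx0, ← Real.rpow_add hx0, ← Real.rpow_add hx0]
        ring_nf

open AddCircle in
theorem hasSum_sq_fourierCoeff_of_continuous {G : UnitAddCircle → ℂ} (hG : Continuous G) :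
    HasSum (fun i => ‖fourierCoeff G i‖ ^ 2) (∫ x, ‖G x‖ ^ 2 ∂haarAddCircle) := by
  have hmem : MemLp G 2 (haarAddCircle (T := (1 : ℝ))) :=
    hG.memLp_of_hasCompactSupport (HasCompactSupport.of_compactSpace G)
  have h := hasSum_sq_fourierCoeff hmem.toLp
  rw [fourierCoeff_congr_ae hmem.coeFn_toLp] at h
  convert h using 1
  apply integral_congr_ae
  filter_upwards [hmem.coeFn_toLp] with x hx
  rw [hx]

open AddCircle in
theorem integral_comp_nsmul_haarAddCircle {E : Type*} [NormedAddCommGroup E] [NormedSpace ℝ E]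
    {g : UnitAddCircle → E} (hg : Continuous g) {h : ℕ} (hh : h ≠ 0) :
    ∫ x, g (h • x) ∂haarAddCircle = ∫ x, g x ∂haarAddCircle := by
  have hmp : MeasurePreserving (fun x : UnitAddCircle => (h : ℤ) • x) haarAddCircle haarAddCircle :=
    haarAddCircle.measurePreserving_zsmul (by exact_mod_cast hh)
  have := (integral_map (μ := haarAddCircle (T := (1 : ℝ))) hmp.measurable.aemeasurable
    (f := g) hg.aestronglyMeasurable)
  rw [hmp.map_eq] at this
  rw [this]
  simp

open AddCircle in
theorem fourierCoeff_comp_nsmul_mul {g : UnitAddCircle → ℂ} (hg : Continuous g) {h : ℕ}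
    (hh : h ≠ 0) (m : ℤ) :
    fourierCoeff (fun x => g (h • x)) (h * m) = fourierCoeff g m := by
  unfold fourierCoeff
  rw [← integral_comp_nsmul_haarAddCircle (g := fun x => fourier (-m) x • g x)
    (by fun_prop) hh]
  congr 1
  ext x
  congr 1
  simp only [fourier_apply]
  congr 2
  rw [← natCast_zsmul, ← mul_zsmul]
  congr 1; ring

open AddCircle in
theorem fourierCoeff_comp_nsmul_of_not_dvd (g : UnitAddCircle → ℂ) {h : ℕ}
    (hh : h ≠ 0) {n : ℤ} (hn : ¬ (h : ℤ) ∣ n) :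
    fourierCoeff (fun x => g (h • x)) n = 0 := by
  set s : UnitAddCircle := ((1 / h : ℝ) : UnitAddCircle) with hs
  have hh' : (h : ℝ) ≠ 0 := by exact_mod_cast hh
  have hs0 : h • s = 0 := by
    rw [hs, ← AddCircle.coe_nsmul, nsmul_eq_mul, mul_one_div_cancel hh']
    exact AddCircle.coe_period 1
  have hne : fourier (-n) s ≠ 1 := by
    intro h1
    rw [fourier_apply] at h1
    have h2 : toCircle ((-n) • s) = toCircle (0 : UnitAddCircle) := by
      rw [toCircle_zero]; exact Subtype.ext h1
    have h3 := injective_toCircle one_ne_zero h2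
    rw [hs, ← AddCircle.coe_zsmul, AddCircle.coe_eq_zero_iff] at h3
    obtain ⟨k, hk⟩ := h3
    apply hn
    refine ⟨-k, ?_⟩
    simp only [zsmul_eq_mul, mul_one] at hk
    field_simp at hk
    have : (k : ℝ) * h = -n := by rw [hk]; push_cast; ring
    have : k * h = -n := by exact_mod_cast this
    linarith
  have key : fourierCoeff (fun x => g (h • x)) n
      = fourier (-n) s * fourierCoeff (fun x => g (h • x)) n := by
    unfold fourierCoeff
    rw [← integral_const_mul]
    conv_lhs => rw [← integral_add_right_eq_self _ s]
    congr 1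
    ext x
    simp only [smul_eq_mul, fourier_apply, smul_add, hs0, add_zero, toCircle_add, Circle.coe_mul]
    ring
  have : (1 - fourier (-n) s) * fourierCoeff (fun x => g (h • x)) n = 0 := by
    linear_combination key
  rcases mul_eq_zero.mp this with h0 | h0
  · exact absurd (by linear_combination -h0) hne
  · exact h0

open AddCircle in
/-- Decay of the Fourier coefficients of a Lipschitz function. -/
theorem norm_fourierCoeff_le_of_lipschitz {g : UnitAddCircle → ℝ} (hg : Continuous g) {V : ℝ}
    (hV : ∀ (x : UnitAddCircle) (s : ℝ), |g (x + s) - g x| ≤ V * |s|) {m : ℤ} (hm : m ≠ 0) :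
    ‖fourierCoeff (fun x => (g x : ℂ)) m‖ ≤ V / |(m : ℝ)| := by
  have hm' : (m : ℝ) ≠ 0 := by exact_mod_cast hm
  set s : ℝ := 1 / 2 / ((-m : ℤ) : ℝ) with hs
  set J := fourierCoeff (fun x => (g x : ℂ)) m with hJ
  have hcg : Continuous fun x => (g x : ℂ) := Complex.continuous_ofReal.comp hg
  have h1 : J = -∫ x, fourier (-m) x • (g (x + s) : ℂ) ∂(haarAddCircle (T := (1 : ℝ))) := by
    rw [hJ, fourierCoeff, ← integral_neg, ← integral_add_right_eq_self _ (s : UnitAddCircle)]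
    congr 1
    ext x
    rw [fourier_add_half_inv_index (neg_ne_zero.mpr hm) one_pos]
    simp
  have hint : ∀ f : UnitAddCircle → ℂ, Continuous f →
      Integrable f (haarAddCircle (T := (1 : ℝ))) := fun f hf =>
    hf.integrable_of_hasCompactSupport (HasCompactSupport.of_compactSpace f)
  have h2 : 2 * J = ∫ x, fourier (-m) x • ((g x : ℂ) - g (x + s))
      ∂(haarAddCircle (T := (1 : ℝ))) := by
    simp_rw [smul_sub]
    rw [integral_sub (hint (fun x => fourier (-m) x • (g x : ℂ)) (by fun_prop))
      (hint (fun x => fourier (-m) x • (g (x + s) : ℂ)) (by fun_prop))]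
    have : J = ∫ x, fourier (-m) x • (g x : ℂ) ∂(haarAddCircle (T := (1 : ℝ))) := rfl
    rw [← this]
    linear_combination h1
  have h3 : ‖2 * J‖ ≤ V * |s| := by
    rw [h2]
    refine (norm_integral_le_of_norm_le_const (C := V * |s|) (ae_of_all _ fun x => ?_)).trans ?_
    · rw [norm_smul, fourier_apply, Circle.norm_coe, one_mul, ← Complex.ofReal_sub,
        Complex.norm_real, Real.norm_eq_abs, abs_sub_comm]
      exact hV x s
    · simp
  rw [norm_mul, Complex.norm_ofNat] at h3
  have hs' : |s| = 1 / 2 / |(m : ℝ)| := by rw [hs]; simp [abs_div]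
  have hV0 : 0 ≤ V := by
    have := (abs_nonneg _).trans (hV 0 1)
    simpa using this
  rw [hs'] at h3
  have h4 : V * (1 / 2 / |(m : ℝ)|) = V / |(m : ℝ)| / 2 := by ring
  have h5 : 0 ≤ V / |(m : ℝ)| := by positivity
  rw [h4] at h3
  linarith

open AddCircle in
/-- Sums of dilates `∑ g h (h • x)` of Lipschitz functions with values in `[0, 1]` have small
variance. -/
theorem exists_variance_sum_dilates_le {δ : ℝ} (hδ : 0 < δ) (hδ' : δ ≤ 1 / 4) :
    ∃ C : ℝ, 0 < C ∧ ∀ L : ℕ, 1 ≤ L → ∀ V : ℝ, 1 ≤ V → ∀ g : ℕ → UnitAddCircle → ℝ,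
      (∀ h, Continuous (g h)) → (∀ h x, 0 ≤ g h x ∧ g h x ≤ 1) →
      (∀ h, 1 ≤ h → ∀ m : ℤ, m ≠ 0 → ‖fourierCoeff (fun x => (g h x : ℂ)) m‖ ≤ V / |(m : ℝ)|) →
      ∫ x, (∑ h ∈ Finset.Icc 1 L, g h (h • x)
          - ∑ h ∈ Finset.Icc 1 L, ∫ y, g h y ∂haarAddCircle) ^ 2 ∂haarAddCircle
        ≤ C * (V * L) ^ (5 * δ) * (∑ h ∈ Finset.Icc 1 L, ∫ y, g h y ∂haarAddCircle + 1) := by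
  obtain ⟨C₀, hC₀, hdiv⟩ := exists_card_divisors_le hδ
  have hZs : Summable fun m : ℤ => |(m : ℝ)| ^ (-(5 / 4) : ℝ) :=
    Real.summable_abs_int_rpow (by norm_num)
  set Z : ℝ := ∑' m : ℤ, |(m : ℝ)| ^ (-(5 / 4) : ℝ) with hZ
  have hZ0 : 0 ≤ Z := tsum_nonneg fun m => by positivity
  refine ⟨C₀ * (1 + Z), by positivity, ?_⟩
  intro L hL V hV g hgc hg01 hgV
  have hL1 : (1 : ℝ) ≤ L := by exact_mod_cast hL
  set W : ℝ := (V * L) ^ 4 with hW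
  have hVL1 : 1 ≤ V * L := one_le_mul_of_one_le_of_one_le hV hL1
  have hW1 : 1 ≤ W := one_le_pow₀ hVL1
  set μ := ∑ h ∈ Finset.Icc 1 L, ∫ y, g h y ∂haarAddCircle with hμ
  have hgC : ∀ h, Continuous fun x => (g h x : ℂ) := fun h =>
    Complex.continuous_ofReal.comp (hgc h)
  have hint : ∀ f : UnitAddCircle → ℂ, Continuous f →
      Integrable f (haarAddCircle (T := (1 : ℝ))) := fun f hf =>
    hf.integrable_of_hasCompactSupport (HasCompactSupport.of_compactSpace f)
  have hintR : ∀ f : UnitAddCircle → ℝ, Continuous f →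
      Integrable f (haarAddCircle (T := (1 : ℝ))) := fun f hf =>
    hf.integrable_of_hasCompactSupport (HasCompactSupport.of_compactSpace f)
  have hdil : ∀ h : ℕ, Continuous fun x : UnitAddCircle => (g h (h • x) : ℂ) := fun h =>
    (hgC h).comp (continuous_nsmul h)
  set H : UnitAddCircle → ℂ := fun x => ∑ h ∈ Finset.Icc 1 L, (g h (h • x) : ℂ) - (μ : ℂ) with hH
  have hHc : Continuous H := (continuous_finsetSum _ fun h _ => hdil h).sub continuous_const
  have hpars := hasSum_sq_fourierCoeff_of_continuous hHc
  have hLHS : ∫ x, (∑ h ∈ Finset.Icc 1 L, g h (h • x) - μ) ^ 2 ∂haarAddCircle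
      = ∫ x, ‖H x‖ ^ 2 ∂haarAddCircle := by
    congr 1
    ext x
    have : H x = ((∑ h ∈ Finset.Icc 1 L, g h (h • x) - μ : ℝ) : ℂ) := by
      simp only [hH]; push_cast; rfl
    rw [this, Complex.norm_real, Real.norm_eq_abs, sq_abs]
  have hcoef0 : fourierCoeff H 0 = 0 := by
    simp only [fourierCoeff, neg_zero, fourier_zero, one_smul, hH]
    rw [integral_sub (hint _ (continuous_finsetSum _ fun h _ => hdil h)) (hint _ continuous_const),
      integral_finsetSum _ (fun h _ => hint _ (hdil h))]
    simp only [integral_const, probReal_univ, one_smul]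
    rw [hμ]
    push_cast
    rw [sub_eq_zero]
    apply Finset.sum_congr rfl
    intro h hh
    rw [integral_comp_nsmul_haarAddCircle (g := fun x => (g h x : ℂ)) (hgC h)
      (by have := (Finset.mem_Icc.mp hh).1; omega)]
    exact integral_ofReal
  have hcoef : ∀ n : ℤ, n ≠ 0 → fourierCoeff H n
      = ∑ h ∈ Finset.Icc 1 L, fourierCoeff (fun x => (g h (h • x) : ℂ)) n := by
    intro n hn
    have h1 : H = (∑ h ∈ Finset.Icc 1 L, fun x => (g h (h • x) : ℂ)) + fun _ => -(μ : ℂ) := by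
      ext x; simp [hH, sub_eq_add_neg]
    rw [h1, fourierCoeff.add (integrable_finsetSum' _ fun h _ => hint _ (hdil h))
      (hint _ continuous_const), fourierCoeff.sum _ _ (fun h _ => hint _ (hdil h))]
    have h2 : fourierCoeff (fun _ : UnitAddCircle => -(μ : ℂ)) n = 0 := by
      have : (fun _ : UnitAddCircle => -(μ : ℂ)) = fun x => (-(μ : ℂ)) * fourier 0 x := by
        ext x; simp
      rw [this, fourierCoeff.const_mul, fourierCoeff_fourier]
      simp [hn]
    simp [h2]
  set w : ℕ → ℤ → ℝ := fun h m => C₀ * (L : ℝ) ^ δ *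
    (W ^ δ * ‖fourierCoeff (fun x => (g h x : ℂ)) m‖ ^ 2
      + V ^ 2 * W ^ (-(1 / 2) : ℝ) * |(m : ℝ)| ^ (-(5 / 4) : ℝ)) with hw
  have hw0 : ∀ h m, 0 ≤ w h m := fun h m => by simp only [hw]; positivity
  have hwsum : ∀ h, HasSum (w h) (C₀ * (L : ℝ) ^ δ * (W ^ δ * ∫ x, ‖(g h x : ℂ)‖ ^ 2 ∂haarAddCircle
      + V ^ 2 * W ^ (-(1 / 2) : ℝ) * Z)) := by
    intro h
    exact (((hasSum_sq_fourierCoeff_of_continuous (hgC h)).mul_left _).add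
      (hZs.hasSum.mul_left _)).mul_left _
  -- pointwise bound for the weighted coefficients
  have hwb : ∀ h ∈ Finset.Icc 1 L, ∀ m : ℤ, m ≠ 0 →
      C₀ * (((h * m : ℤ).natAbs : ℕ) : ℝ) ^ δ * ‖fourierCoeff (fun x => (g h x : ℂ)) m‖ ^ 2
        ≤ w h m := by
    intro h hh m hm
    obtain ⟨hh1, hhL⟩ := Finset.mem_Icc.mp hh
    have hm1 : (1 : ℝ) ≤ |(m : ℝ)| := by exact_mod_cast Int.one_le_abs hm
    have hm0 : (0 : ℝ) < |(m : ℝ)| := by linarith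
    set A := ‖fourierCoeff (fun x => (g h x : ℂ)) m‖ with hA
    have hA0 : 0 ≤ A := norm_nonneg _
    have h1 : (((h * m : ℤ).natAbs : ℕ) : ℝ) ^ δ ≤ (L : ℝ) ^ δ * |(m : ℝ)| ^ δ := by
      rw [Nat.cast_natAbs, ← Real.mul_rpow (by positivity) (by positivity)]
      push_cast
      rw [abs_mul, Nat.abs_cast]
      have : (h : ℝ) ≤ L := by exact_mod_cast hhL
      gcongr
    have h2 : |(m : ℝ)| ^ δ * A ^ 2 ≤ W ^ δ * A ^ 2
        + V ^ 2 * W ^ (-(1 / 2) : ℝ) * |(m : ℝ)| ^ (-(5 / 4) : ℝ) := by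
      rcases le_total |(m : ℝ)| W with hmW | hmW
      · have : |(m : ℝ)| ^ δ * A ^ 2 ≤ W ^ δ * A ^ 2 := by gcongr
        have : 0 ≤ V ^ 2 * W ^ (-(1 / 2) : ℝ) * |(m : ℝ)| ^ (-(5 / 4) : ℝ) := by positivity
        linarith
      · have hAV : A ≤ V / |(m : ℝ)| := hgV h hh1 m hm
        have h3 : |(m : ℝ)| ^ δ * A ^ 2
            ≤ V ^ 2 * W ^ (-(1 / 2) : ℝ) * |(m : ℝ)| ^ (-(5 / 4) : ℝ) := by
          calc |(m : ℝ)| ^ δ * A ^ 2 ≤ |(m : ℝ)| ^ (1 / 4 : ℝ) * (V / |(m : ℝ)|) ^ 2 := by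
                gcongr
            _ = V ^ 2 * (|(m : ℝ)| ^ (-(1 / 2) : ℝ) * |(m : ℝ)| ^ (-(5 / 4) : ℝ)) := by
                rw [← Real.rpow_add hm0, div_pow, ← Real.rpow_two |(m : ℝ)|, mul_div_assoc',
                  mul_comm, mul_div_assoc, ← Real.rpow_sub hm0]
                norm_num
            _ ≤ V ^ 2 * (W ^ (-(1 / 2) : ℝ) * |(m : ℝ)| ^ (-(5 / 4) : ℝ)) := by
                have := Real.rpow_le_rpow_of_nonpos (by linarith : 0 < W) hmW
                  (by norm_num : (-(1 / 2) : ℝ) ≤ 0)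
                gcongr
            _ = _ := by ring
        have : 0 ≤ W ^ δ * A ^ 2 := by positivity
        linarith
    calc C₀ * (((h * m : ℤ).natAbs : ℕ) : ℝ) ^ δ * A ^ 2
        ≤ C₀ * ((L : ℝ) ^ δ * |(m : ℝ)| ^ δ) * A ^ 2 := by gcongr
      _ = C₀ * (L : ℝ) ^ δ * (|(m : ℝ)| ^ δ * A ^ 2) := by ring
      _ ≤ _ := by simp only [hw]; gcongr
  set ψ : ℕ → ℤ → ℝ := fun h => Function.extend (fun m : ℤ => (h : ℤ) * m) (w h) 0 with hψ
  have hinj : ∀ h ∈ Finset.Icc 1 L, Function.Injective fun m : ℤ => (h : ℤ) * m := by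
    intro h hh
    have := (Finset.mem_Icc.mp hh).1
    exact mul_right_injective₀ (by exact_mod_cast (by omega : h ≠ 0))
  have hψsum : HasSum (fun n => ∑ h ∈ Finset.Icc 1 L, ψ h n) (∑ h ∈ Finset.Icc 1 L,
      C₀ * (L : ℝ) ^ δ * (W ^ δ * ∫ x, ‖(g h x : ℂ)‖ ^ 2 ∂haarAddCircle
      + V ^ 2 * W ^ (-(1 / 2) : ℝ) * Z)) :=
    hasSum_sum fun h hh => (hasSum_extend_zero (hinj h hh)).mpr (hwsum h)
  have hψ0 : ∀ h n, 0 ≤ ψ h n := by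
    intro h n
    simp only [hψ, Function.extend]
    split_ifs
    · exact hw0 _ _
    · simp
  have hpt : ∀ n : ℤ, ‖fourierCoeff H n‖ ^ 2 ≤ ∑ h ∈ Finset.Icc 1 L, ψ h n := by
    intro n
    rcases eq_or_ne n 0 with rfl | hn
    · rw [hcoef0]; simpa using Finset.sum_nonneg fun h _ => hψ0 h 0
    rw [hcoef n hn]
    set P := (Finset.Icc 1 L : Finset ℕ).filter fun h : ℕ => (h : ℤ) ∣ n with hP
    have hPs : ∑ h ∈ Finset.Icc 1 L, fourierCoeff (fun x => (g h (h • x) : ℂ)) n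
        = ∑ h ∈ P, fourierCoeff (fun x => (g h (h • x) : ℂ)) n := by
      rw [hP, Finset.sum_filter]
      apply Finset.sum_congr rfl
      intro h hh
      split_ifs with hd
      · rfl
      · have := (Finset.mem_Icc.mp hh).1
        exact fourierCoeff_comp_nsmul_of_not_dvd (fun x => (g h x : ℂ)) (by omega) hd
    have hPcard : (P.card : ℝ) ≤ C₀ * (n.natAbs : ℝ) ^ δ := by
      refine le_trans ?_ (hdiv n.natAbs (by simpa using hn))
      norm_cast
      apply Finset.card_le_card
      intro h hh
      rw [hP, Finset.mem_filter] at hh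
      rw [Nat.mem_divisors]
      exact ⟨Int.natCast_dvd.mp hh.2, by simpa using hn⟩
    rw [hPs]
    calc ‖∑ h ∈ P, fourierCoeff (fun x => (g h (h • x) : ℂ)) n‖ ^ 2
        ≤ (∑ h ∈ P, ‖fourierCoeff (fun x => (g h (h • x) : ℂ)) n‖) ^ 2 := by
          gcongr; exact norm_sum_le _ _
      _ ≤ P.card * ∑ h ∈ P, ‖fourierCoeff (fun x => (g h (h • x) : ℂ)) n‖ ^ 2 :=
          sq_sum_le_card_mul_sum_sq
      _ ≤ C₀ * (n.natAbs : ℝ) ^ δ * ∑ h ∈ P, ‖fourierCoeff (fun x => (g h (h • x) : ℂ)) n‖ ^ 2 := by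
          gcongr
      _ = ∑ h ∈ P, C₀ * (n.natAbs : ℝ) ^ δ * ‖fourierCoeff (fun x => (g h (h • x) : ℂ)) n‖ ^ 2 :=
          Finset.mul_sum _ _ _
      _ ≤ ∑ h ∈ P, ψ h n := by
          apply Finset.sum_le_sum
          intro h hh
          obtain ⟨hhI, m, rfl⟩ := Finset.mem_filter.mp hh
          have h1 := (Finset.mem_Icc.mp hhI).1
          rw [fourierCoeff_comp_nsmul_mul (hgC h) (by omega)]
          simp only [hψ]
          rw [(hinj h hhI).extend_apply (w h) 0 m]
          exact hwb h hhI m (by rintro rfl; simp at hn)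
      _ ≤ _ := Finset.sum_le_sum_of_subset_of_nonneg (Finset.filter_subset _ _)
          fun h _ _ => hψ0 h n
  rw [hLHS]
  refine (hasSum_le hpt hpars hψsum).trans ?_
  have hsq : ∀ h, ∫ x, ‖(g h x : ℂ)‖ ^ 2 ∂haarAddCircle ≤ ∫ x, g h x ∂haarAddCircle := by
    intro h
    apply integral_mono (hintR (fun x => ‖(g h x : ℂ)‖ ^ 2) ((hgC h).norm.pow 2)) (hintR _ (hgc h))
    intro x
    obtain ⟨h0, h1⟩ := hg01 h x
    simp only [Complex.norm_real, Real.norm_eq_abs, sq_abs]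
    nlinarith
  have hVW : V ^ 2 * W ^ (-(1 / 2) : ℝ) = 1 / (L : ℝ) ^ 2 := by
    have : W ^ (-(1 / 2) : ℝ) = ((V * L) ^ 2)⁻¹ := by
      rw [hW, Real.rpow_neg (by positivity), ← Real.sqrt_eq_rpow,
        show (V * L) ^ 4 = ((V * L) ^ 2) ^ 2 by ring, Real.sqrt_sq (by positivity)]
    rw [this]; field_simp
  have hμ0 : 0 ≤ μ := Finset.sum_nonneg fun h _ => integral_nonneg fun x => (hg01 h x).1
  have hWδ1 : 1 ≤ W ^ δ := Real.one_le_rpow hW1 hδ.le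
  calc ∑ h ∈ Finset.Icc 1 L, C₀ * (L : ℝ) ^ δ * (W ^ δ * ∫ x, ‖(g h x : ℂ)‖ ^ 2 ∂haarAddCircle
      + V ^ 2 * W ^ (-(1 / 2) : ℝ) * Z)
      ≤ ∑ h ∈ Finset.Icc 1 L, C₀ * (L : ℝ) ^ δ * (W ^ δ * ∫ x, g h x ∂haarAddCircle
      + 1 / (L : ℝ) ^ 2 * Z) := by
        rw [hVW]
        refine Finset.sum_le_sum fun h _ => mul_le_mul_of_nonneg_left ?_ (by positivity)
        exact add_le_add_left (mul_le_mul_of_nonneg_left (hsq h) (by positivity)) _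
    _ = C₀ * (L : ℝ) ^ δ * (W ^ δ * μ + Z / L) := by
        rw [← Finset.mul_sum, Finset.sum_add_distrib, ← Finset.mul_sum, Finset.sum_const,
          Nat.card_Icc, hμ]
        simp only [add_tsub_cancel_right, nsmul_eq_mul]
        field_simp
    _ ≤ C₀ * (V * L) ^ δ * (W ^ δ * μ + W ^ δ * Z) := by
        have : Z / L ≤ W ^ δ * Z := by
          calc Z / L ≤ Z := div_le_self hZ0 hL1
            _ ≤ _ := le_mul_of_one_le_left hZ0 hWδ1
        have : (L : ℝ) ≤ V * L := le_mul_of_one_le_left (by positivity) hV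
        gcongr
    _ = C₀ * ((V * L) ^ δ * W ^ δ) * (μ + Z) := by ring
    _ = C₀ * (V * L) ^ (5 * δ) * (μ + Z) := by
        rw [hW, ← Real.rpow_natCast, ← Real.rpow_mul (by positivity),
          ← Real.rpow_add (by positivity)]
        congr 3; push_cast; ring
    _ ≤ C₀ * (V * L) ^ (5 * δ) * ((1 + Z) * (μ + 1)) := by
        gcongr
        nlinarith
    _ = _ := by ring

open AddCircle in
theorem integral_norm_sq_sum_fourier {ι : Type*} (I : Finset ι) (b : ι → ℤ) :
    ∫ x : UnitAddCircle, ‖∑ i ∈ I, fourier (b i) x‖ ^ 2 ∂haarAddCircle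
      = (((I ×ˢ I).filter fun p => b p.1 = b p.2).card : ℝ) := by
  have hint : ∀ f : UnitAddCircle → ℂ, Continuous f →
      Integrable f (haarAddCircle (T := (1 : ℝ))) := fun f hf =>
    hf.integrable_of_hasCompactSupport (HasCompactSupport.of_compactSpace f)
  have hC : ((∫ x : UnitAddCircle, ‖∑ i ∈ I, fourier (b i) x‖ ^ 2 ∂haarAddCircle : ℝ) : ℂ)
      = (((I ×ˢ I).filter fun p => b p.1 = b p.2).card : ℂ) := by
    rw [← integral_complex_ofReal]
    have hpt : ∀ x : UnitAddCircle, (((‖∑ i ∈ I, fourier (b i) x‖ ^ 2 : ℝ)) : ℂ)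
        = ∑ i ∈ I, ∑ j ∈ I, fourier (-b i) x • fourier (b j) x := by
      intro x
      push_cast
      rw [← Complex.conj_mul', map_sum, Finset.sum_mul_sum]
      simp
    simp_rw [hpt]
    rw [integral_finsetSum _ fun i _ => hint _ (by fun_prop), Finset.card_filter,
      Finset.sum_product]
    push_cast
    refine Finset.sum_congr rfl fun i _ => ?_
    rw [integral_finsetSum _ fun j _ => hint _ (by fun_prop)]
    refine Finset.sum_congr rfl fun j _ => ?_
    have := fourierCoeff_fourier (T := (1 : ℝ)) (b j)
    have h2 := congrFun this (b i)
    rw [fourierCoeff] at h2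
    rw [h2, Pi.single_apply]
  exact_mod_cast hC

open AddCircle in
theorem integral_norm_pow_four_sum_fourier (a : ℕ → ℤ) (S : Finset ℕ) :
    ∫ x : UnitAddCircle, ‖∑ n ∈ S, fourier (a n) x‖ ^ 4 ∂haarAddCircle
      = ((additiveQuadruples a S).card : ℝ) := by
  have hpt : ∀ x : UnitAddCircle, ‖∑ n ∈ S, fourier (a n) x‖ ^ 4
      = ‖∑ p ∈ S ×ˢ S, fourier (a p.1 + a p.2) x‖ ^ 2 := by
    intro x
    rw [show (4 : ℕ) = 2 * 2 from rfl, pow_mul, ← norm_pow, sq (∑ n ∈ S, fourier (a n) x),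
      Finset.sum_mul_sum, Finset.sum_product]
    simp_rw [fourier_add]
  simp_rw [hpt]
  rw [integral_norm_sq_sum_fourier _ fun p : ℕ × ℕ => a p.1 + a p.2]
  norm_cast
  refine Finset.card_equiv (Equiv.prodAssoc ℕ ℕ (ℕ × ℕ)) fun q => ?_
  simp [additiveQuadruples, and_assoc]

open AddCircle in
/-- A lower bound for the first absolute moment in terms of the second and the fourth. -/
theorem integral_norm_sq_le_of_pow_four {f : UnitAddCircle → ℂ} (hf : Continuous f) {B : ℝ}
    (hB : 0 < B) :
    ∫ x, ‖f x‖ ^ 2 ∂haarAddCircle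
      ≤ B * ∫ x, ‖f x‖ ∂haarAddCircle + (∫ x, ‖f x‖ ^ 4 ∂haarAddCircle) / B ^ 2 := by
  have hint : ∀ f : UnitAddCircle → ℝ, Continuous f →
      Integrable f (haarAddCircle (T := (1 : ℝ))) := fun f hf =>
    hf.integrable_of_hasCompactSupport (HasCompactSupport.of_compactSpace f)
  rw [← integral_const_mul, ← integral_div, ← integral_add (hint _ (by fun_prop))
    (hint _ (by fun_prop))]
  refine integral_mono (hint _ (by fun_prop)) (hint _ (by fun_prop)) fun x => ?_
  dsimp only
  set t := ‖f x‖
  have ht : 0 ≤ t := norm_nonneg _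
  rcases le_total t B with h | h
  · have h1 : t ^ 2 ≤ B * t := by nlinarith
    have h2 : 0 ≤ t ^ 4 / B ^ 2 := by positivity
    linarith
  · have h1 : t ^ 2 ≤ t ^ 4 / B ^ 2 := by
      rw [le_div_iff₀ (by positivity)]
      have : B ^ 2 ≤ t ^ 2 := by gcongr
      nlinarith [sq_nonneg t]
    have h2 : 0 ≤ B * t := by positivity
    linarith

open AddCircle in
/-- A function with large mean takes a large value at some small dilate of almost every point. -/
theorem exists_measure_forall_dilate_le {δ : ℝ} (hδ : 0 < δ) (hδ' : δ ≤ 1 / 4) :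
    ∃ C : ℝ, 0 < C ∧ ∀ f : UnitAddCircle → ℂ, Continuous f → ∀ K : ℕ, 1 ≤ K → (∀ x, ‖f x‖ ≤ K) →
      ∀ V : ℝ, 1 ≤ V → (∀ (x : UnitAddCircle) (s : ℝ), ‖f (x + s) - f x‖ ≤ V * |s|) →
      ∀ D : ℝ, 1 ≤ D → 4 * D ≤ ∫ x, ‖f x‖ ∂haarAddCircle →
      haarAddCircle.real {x : UnitAddCircle | ∀ h ∈ Finset.Icc 1 K, ‖f (h • x)‖ ≤ h * D}
        ≤ C * (V * K) ^ (5 * δ) * (D / ∫ x, ‖f x‖ ∂haarAddCircle) := by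
  obtain ⟨C, hC, hvar⟩ := exists_variance_sum_dilates_le hδ hδ'
  refine ⟨8 * C, by positivity, ?_⟩
  intro f hf K hK hfK V hV hfV D hD hI
  set I := ∫ x, ‖f x‖ ∂haarAddCircle with hIdef
  have hint : ∀ f : UnitAddCircle → ℝ, Continuous f →
      Integrable f (haarAddCircle (T := (1 : ℝ))) := fun f hf =>
    hf.integrable_of_hasCompactSupport (HasCompactSupport.of_compactSpace f)
  set g : ℕ → UnitAddCircle → ℝ := fun h x => min 1 (max 0 (‖f x‖ / (h * D) - 1)) with hg
  have hgc : ∀ h, Continuous (g h) := fun h => by simp only [hg]; fun_prop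
  have hg01 : ∀ h x, 0 ≤ g h x ∧ g h x ≤ 1 := fun h x =>
    ⟨le_min zero_le_one (le_max_left _ _), min_le_left _ _⟩
  have hgV : ∀ h, 1 ≤ h → ∀ m : ℤ, m ≠ 0 →
      ‖fourierCoeff (fun x => (g h x : ℂ)) m‖ ≤ V / |(m : ℝ)| := by
    intro h hh m hm
    refine norm_fourierCoeff_le_of_lipschitz (hgc h) (fun x s => ?_) hm
    have hhD : 1 ≤ (h : ℝ) * D := one_le_mul_of_one_le_of_one_le (by exact_mod_cast hh) hD
    calc |g h (x + s) - g h x|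
        ≤ |(‖f (x + s)‖ / (h * D) - 1) - (‖f x‖ / (h * D) - 1)| := by
          simp only [hg]
          refine (abs_min_sub_min_le_max _ _ _ _).trans ?_
          refine max_le (by simp) ((abs_max_sub_max_le_max _ _ _ _).trans ?_)
          exact max_le (by simp) le_rfl
      _ = |‖f (x + s)‖ - ‖f x‖| / (h * D) := by
          rw [sub_sub_sub_cancel_right, ← sub_div, abs_div, abs_of_pos (by linarith : 0 < h * D)]
      _ ≤ |‖f (x + s)‖ - ‖f x‖| := div_le_self (abs_nonneg _) hhD
      _ ≤ V * |s| := (abs_norm_sub_norm_le _ _).trans (hfV x s)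
  have hv := hvar K hK V hV g hgc hg01 hgV
  set μ := ∑ h ∈ Finset.Icc 1 K, ∫ y, g h y ∂haarAddCircle with hμ
  have hpt : ∀ x, ‖f x‖ / (2 * D) - 1 ≤ ∑ h ∈ Finset.Icc 1 K, g h x := by
    intro x
    set q := ⌊‖f x‖ / (2 * D)⌋₊ with hq
    have hqle : (q : ℝ) ≤ ‖f x‖ / (2 * D) := Nat.floor_le (by positivity)
    have hqK : q ≤ K := by
      have h1 : ‖f x‖ / (2 * D) ≤ ‖f x‖ := div_le_self (norm_nonneg _) (by linarith)
      exact_mod_cast hqle.trans (h1.trans (hfK x))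
    calc ‖f x‖ / (2 * D) - 1 ≤ q := by
          have := Nat.lt_floor_add_one (‖f x‖ / (2 * D)); linarith
      _ = ∑ h ∈ Finset.Icc 1 q, (1 : ℝ) := by simp
      _ ≤ ∑ h ∈ Finset.Icc 1 q, g h x := by
          refine Finset.sum_le_sum fun h hh => ?_
          obtain ⟨h1, h2⟩ := Finset.mem_Icc.mp hh
          have hh1 : (1 : ℝ) ≤ h := by exact_mod_cast h1
          have hhq : (h : ℝ) ≤ ‖f x‖ / (2 * D) := le_trans (by exact_mod_cast h2) hqle
          rw [le_div_iff₀ (by linarith)] at hhq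
          have : 2 ≤ ‖f x‖ / (h * D) := by
            rw [le_div_iff₀ (by positivity)]; linarith
          exact le_min le_rfl (le_max_of_le_right (by linarith))
      _ ≤ _ := Finset.sum_le_sum_of_subset_of_nonneg (Finset.Icc_subset_Icc_right hqK)
          fun h _ _ => (hg01 h x).1
  have hμI : I / (2 * D) - 1 ≤ μ := by
    have h1 : ∫ x, (‖f x‖ / (2 * D) - 1) ∂haarAddCircle = I / (2 * D) - 1 := by
      rw [integral_sub (hint (fun x => ‖f x‖ / (2 * D)) (by fun_prop)) (hint _ continuous_const),
        integral_div]
      simp [hIdef]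
    rw [← h1, hμ, ← integral_finsetSum _ fun h _ => hint _ (hgc h)]
    exact integral_mono (hint _ (by fun_prop)) (hint _ (by fun_prop)) hpt
  have hI0 : 0 < I := by linarith
  have hID : 1 ≤ I / (4 * D) := by rw [le_div_iff₀ (by linarith)]; linarith
  have hμ' : I / (4 * D) ≤ μ := by
    have : I / (2 * D) = 2 * (I / (4 * D)) := by field_simp; norm_num
    linarith
  have hμ1 : 1 ≤ μ := hID.trans hμ'
  set F : UnitAddCircle → ℝ := fun x => (∑ h ∈ Finset.Icc 1 K, g h (h • x) - μ) ^ 2 with hF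
  have hFc : Continuous F := by
    have : ∀ h : ℕ, Continuous fun x : UnitAddCircle => g h (h • x) := fun h =>
      (hgc h).comp (continuous_nsmul h)
    simp only [hF]
    fun_prop
  have hsub : {x : UnitAddCircle | ∀ h ∈ Finset.Icc 1 K, ‖f (h • x)‖ ≤ h * D}
      ⊆ {x | μ ^ 2 ≤ F x} := by
    intro x hx
    have h0 : ∑ h ∈ Finset.Icc 1 K, g h (h • x) = 0 := by
      refine Finset.sum_eq_zero fun h hh => ?_
      have h1 : ‖f (h • x)‖ / (h * D) ≤ 1 := div_le_one_of_le₀ (hx h hh) (by positivity)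
      simp only [hg]
      rw [max_eq_left (by linarith), min_eq_right zero_le_one]
    simp [hF, h0]
  have hcheb := mul_meas_ge_le_integral_of_nonneg (μ := haarAddCircle (T := (1 : ℝ)))
    (ae_of_all _ fun x => sq_nonneg _) (hint F hFc) (μ ^ 2)
  set A := C * (V * K) ^ (5 * δ) with hA
  have hA0 : 0 < A := by
    have : (1 : ℝ) ≤ K := by exact_mod_cast hK
    positivity
  calc haarAddCircle.real {x : UnitAddCircle | ∀ h ∈ Finset.Icc 1 K, ‖f (h • x)‖ ≤ h * D}
      ≤ haarAddCircle.real {x | μ ^ 2 ≤ F x} := measureReal_mono hsub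
    _ ≤ A * (μ + 1) / μ ^ 2 := by
        rw [le_div_iff₀ (by positivity), mul_comm]
        exact hcheb.trans hv
    _ ≤ A * (2 * μ) / μ ^ 2 := by gcongr; linarith
    _ = 2 * A / μ := by field_simp
    _ ≤ 2 * A / (I / (4 * D)) := by gcongr
    _ = 8 * C * (V * K) ^ (5 * δ) * (D / I) := by rw [hA]; field_simp; norm_num

theorem abs_card_div_sub_le_starDisc (N : ℕ) (x : ℕ → ℝ) {β : ℝ} (hβ : β ∈ Set.Ioc (0 : ℝ) 1) :
    |(((Finset.Icc 1 N).filter fun n => 0 ≤ x n ∧ x n < β).card : ℝ) / N - β| ≤ starDisc N x := by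
  refine le_ciSup (f := fun β : Set.Ioc (0 : ℝ) 1 =>
    |(((Finset.Icc 1 N).filter fun n => 0 ≤ x n ∧ x n < (β : ℝ)).card : ℝ) / N - (β : ℝ)|)
    ⟨1, ?_⟩ ⟨β, hβ⟩
  rintro _ ⟨⟨t, ht⟩, rfl⟩
  have h1 : (((Finset.Icc 1 N).filter fun n => 0 ≤ x n ∧ x n < t).card : ℝ) ≤ N := by
    have := Finset.card_filter_le (Finset.Icc 1 N) fun n => 0 ≤ x n ∧ x n < t
    rw [Nat.card_Icc] at this
    exact_mod_cast this
  have h2 := div_le_one_of_le₀ h1 (Nat.cast_nonneg N)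
  have h3 : (0 : ℝ) ≤ (((Finset.Icc 1 N).filter fun n => 0 ≤ x n ∧ x n < t).card : ℝ) / N := by
    positivity
  dsimp only
  rw [abs_le]
  constructor <;> linarith [ht.1, ht.2]

theorem integral_sub_indicator_mul_exp {h : ℕ} (hh : 1 ≤ h) {x : ℝ} (hx : x ∈ Set.Ico (0 : ℝ) 1) :
    ∫ t in (0 : ℝ)..1, ((t : ℂ) - (Set.Ioi x).indicator 1 t)
        * (2 * Real.pi * Complex.I * h * Complex.exp (2 * Real.pi * Complex.I * h * t))
      = Complex.exp (2 * Real.pi * Complex.I * h * x) := by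
  set z : ℂ := 2 * Real.pi * Complex.I * h with hz
  have hz0 : z ≠ 0 := by
    have : (h : ℂ) ≠ 0 := by exact_mod_cast (by omega : h ≠ 0)
    simp [hz, Real.pi_ne_zero, this]
  have hz1 : Complex.exp z = 1 := by
    rw [hz, show 2 * (Real.pi : ℂ) * Complex.I * h = h * (2 * Real.pi * Complex.I) by ring]
    exact Complex.exp_nat_mul_two_pi_mul_I h
  have hd : ∀ t : ℝ, HasDerivAt (fun t : ℝ => Complex.exp (z * t)) (z * Complex.exp (z * t)) t := by
    intro t
    have h1 : HasDerivAt (fun t : ℝ => z * (t : ℂ)) z t := by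
      simpa using (Complex.ofRealCLM.hasDerivAt (x := t)).const_mul z
    simpa [mul_comm] using h1.cexp
  have hd2 : ∀ t : ℝ, HasDerivAt (fun t : ℝ => (t : ℂ) * Complex.exp (z * t)
      - Complex.exp (z * t) / z) ((t : ℂ) * (z * Complex.exp (z * t))) t := by
    intro t
    have h1 : HasDerivAt (fun t : ℝ => (t : ℂ)) 1 t := by
      simpa using (hasDerivAt_id t).ofReal_comp
    have h2 := (h1.mul (hd t)).sub ((hd t).div_const z)
    rw [mul_div_cancel_left₀ _ hz0, one_mul, add_sub_cancel_left] at h2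
    exact h2
  have hc : Continuous fun t : ℝ => z * Complex.exp (z * t) := by fun_prop
  have e1 : ∫ t in (0 : ℝ)..1, (t : ℂ) * (z * Complex.exp (z * t)) = 1 := by
    rw [intervalIntegral.integral_eq_sub_of_hasDerivAt (fun t _ => hd2 t)
      (Continuous.intervalIntegrable (by fun_prop) _ _)]
    simp [hz1]
  have e2 : ∫ t in (0 : ℝ)..1, (Set.Ioi x).indicator 1 t * (z * Complex.exp (z * t))
      = 1 - Complex.exp (z * x) := by
    have : (fun t : ℝ => (Set.Ioi x).indicator (1 : ℝ → ℂ) t * (z * Complex.exp (z * t)))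
        = (Set.Ioi x).indicator fun t : ℝ => z * Complex.exp (z * t) := by
      ext t
      by_cases ht : t ∈ Set.Ioi x <;> simp [ht]
    rw [this, intervalIntegral.integral_of_le zero_le_one,
      setIntegral_indicator measurableSet_Ioi]
    have hset : Set.Ioc (0 : ℝ) 1 ∩ Set.Ioi x = Set.Ioc x 1 := by
      ext t
      simp only [Set.mem_inter_iff, Set.mem_Ioc, Set.mem_Ioi]
      have := hx.1
      constructor
      · rintro ⟨⟨_, h2⟩, h3⟩; exact ⟨h3, h2⟩
      · rintro ⟨h2, h3⟩; exact ⟨⟨by linarith, h3⟩, h2⟩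
    rw [hset, ← intervalIntegral.integral_of_le hx.2.le,
      intervalIntegral.integral_eq_sub_of_hasDerivAt (fun t _ => hd t)
        (hc.intervalIntegrable _ _)]
    simp [hz1]
  have hii : IntervalIntegrable (fun t : ℝ => (Set.Ioi x).indicator (1 : ℝ → ℂ) t
      * (z * Complex.exp (z * t))) volume 0 1 := by
    have : (fun t : ℝ => (Set.Ioi x).indicator (1 : ℝ → ℂ) t * (z * Complex.exp (z * t)))
        = (Set.Ioi x).indicator fun t : ℝ => z * Complex.exp (z * t) := by
      ext t
      by_cases ht : t ∈ Set.Ioi x <;> simp [ht]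
    rw [this, intervalIntegrable_iff]
    exact (intervalIntegrable_iff.mp (hc.intervalIntegrable 0 1)).indicator measurableSet_Ioi
  simp_rw [sub_mul]
  rw [intervalIntegral.integral_sub (Continuous.intervalIntegrable (by fun_prop) _ _) hii, e1, e2]
  ring

/-- Exponential sums are controlled by the star-discrepancy. -/
theorem norm_sum_exp_le_starDisc {h : ℕ} (hh : 1 ≤ h) (N : ℕ) {x : ℕ → ℝ}
    (hx : ∀ n, x n ∈ Set.Ico (0 : ℝ) 1) :
    ‖∑ n ∈ Finset.Icc 1 N, Complex.exp (2 * Real.pi * Complex.I * h * x n)‖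
      ≤ 2 * Real.pi * h * (N * starDisc N x) := by
  rcases Nat.eq_zero_or_pos N with rfl | hN
  · simp
  have hN0 : (0 : ℝ) < N := by exact_mod_cast hN
  have hii : ∀ n, IntervalIntegrable (fun t : ℝ => ((t : ℂ) - (Set.Ioi (x n)).indicator 1 t)
      * (2 * Real.pi * Complex.I * h * Complex.exp (2 * Real.pi * Complex.I * h * t)))
      volume 0 1 := by
    intro n
    refine IntervalIntegrable.mul_continuousOn ?_ (by fun_prop)
    refine (Continuous.intervalIntegrable (by fun_prop) _ _).sub ?_
    rw [intervalIntegrable_iff]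
    exact (intervalIntegrable_iff.mp
      (intervalIntegrable_const (c := (1 : ℂ)))).indicator measurableSet_Ioi
  simp_rw [← fun n => integral_sub_indicator_mul_exp hh (hx n)]
  rw [← intervalIntegral.integral_finsetSum fun n _ => hii n]
  refine (intervalIntegral.norm_integral_le_of_norm_le_const
    (C := 2 * Real.pi * h * (N * starDisc N x)) fun t ht => ?_).trans (by simp)
  rw [Set.uIoc_of_le zero_le_one] at ht
  rw [← Finset.sum_mul, norm_mul]
  have hnorm : ‖2 * (Real.pi : ℂ) * Complex.I * h
      * Complex.exp (2 * Real.pi * Complex.I * h * t)‖ = 2 * Real.pi * h := by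
    rw [norm_mul, show 2 * (Real.pi : ℂ) * Complex.I * h * t
      = ((2 * Real.pi * h * t : ℝ) : ℂ) * Complex.I by push_cast; ring,
      Complex.norm_exp_ofReal_mul_I]
    simp [Real.pi_pos.le]
  have hsum : ∑ n ∈ Finset.Icc 1 N, ((t : ℂ) - (Set.Ioi (x n)).indicator 1 t)
      = ((-(N * ((((Finset.Icc 1 N).filter fun n => 0 ≤ x n ∧ x n < t).card : ℝ) / N - t)) : ℝ)
        : ℂ) := by
    rw [Finset.sum_sub_distrib, mul_sub, mul_div_cancel₀ _ hN0.ne']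
    have : ∀ n, (Set.Ioi (x n)).indicator (1 : ℝ → ℂ) t
        = if 0 ≤ x n ∧ x n < t then 1 else 0 := by
      intro n
      by_cases hn : x n < t <;> simp [hn, (hx n).1]
    simp [this]
  rw [hnorm, hsum, Complex.norm_real, norm_neg, norm_mul, Real.norm_eq_abs, Real.norm_eq_abs,
    Nat.abs_cast, mul_comm]
  have := abs_card_div_sub_le_starDisc N x ht
  gcongr

theorem integral_norm_sq_sum_fourier_of_injOn {ι : Type*} {I : Finset ι} {b : ι → ℤ}
    (hb : Set.InjOn b I) :
    ∫ x : UnitAddCircle, ‖∑ i ∈ I, fourier (b i) x‖ ^ 2 ∂AddCircle.haarAddCircle = I.card := by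
  classical
  rw [integral_norm_sq_sum_fourier, ← Finset.diag_card I]
  congr 2
  ext ⟨i, j⟩
  simp only [Finset.mem_filter, Finset.mem_product, Finset.mem_diag]
  constructor
  · rintro ⟨⟨hi, hj⟩, h⟩; exact ⟨hi, hb hi hj h⟩
  · rintro ⟨hi, rfl⟩; exact ⟨⟨hi, hi⟩, rfl⟩

theorem norm_fourier_add_sub_le (n : ℤ) (x : UnitAddCircle) (s : ℝ) :
    ‖fourier n (x + (s : UnitAddCircle)) - fourier n x‖ ≤ 2 * Real.pi * |(n : ℝ)| * |s| := by
  have h1 : (fourier n (x + (s : UnitAddCircle)) : ℂ) = fourier n x * fourier n (s : UnitAddCircle) := by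
    simp only [fourier_apply, smul_add, AddCircle.toCircle_add, Circle.coe_mul]
  have h2 : (fourier n (s : UnitAddCircle) : ℂ)
      = Complex.exp (Complex.I * ((2 * Real.pi * n * s : ℝ) : ℂ)) := by
    rw [fourier_coe_apply]; congr 1; push_cast; ring
  rw [h1, show (fourier n x * fourier n (s : UnitAddCircle) - fourier n x : ℂ)
    = fourier n x * (fourier n (s : UnitAddCircle) - 1) by ring, norm_mul, fourier_apply,
    Circle.norm_coe, one_mul, h2]
  refine (Real.norm_exp_I_mul_ofReal_sub_one_le (x := 2 * Real.pi * n * s)).trans (le_of_eq ?_)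
  rw [Real.norm_eq_abs, abs_mul, abs_mul, abs_of_pos Real.two_pi_pos]

theorem norm_sum_fourier_le (a : ℕ → ℤ) (S : Finset ℕ) (x : UnitAddCircle) :
    ‖∑ n ∈ S, fourier (a n) x‖ ≤ S.card := by
  refine (norm_sum_le_of_le S (n := fun _ => 1) fun n _ => ?_).trans (by simp)
  rw [fourier_apply, Circle.norm_coe]

theorem norm_sum_fourier_add_sub_le {a : ℕ → ℤ} {S : Finset ℕ} {A : ℝ}
    (hA : ∀ n ∈ S, |(a n : ℝ)| ≤ A) (x : UnitAddCircle) (s : ℝ) :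
    ‖∑ n ∈ S, fourier (a n) (x + (s : UnitAddCircle)) - ∑ n ∈ S, fourier (a n) x‖
      ≤ S.card * (2 * Real.pi * A) * |s| := by
  rw [← Finset.sum_sub_distrib]
  refine (norm_sum_le_of_le S (n := fun _ => 2 * Real.pi * A * |s|) fun n hn => ?_).trans ?_
  · refine (norm_fourier_add_sub_le (a n) x s).trans ?_
    have := hA n hn
    gcongr
  · rw [Finset.sum_const, nsmul_eq_mul, ← mul_assoc]

theorem fourier_nsmul_coe_eq_exp_fract (m : ℤ) (h : ℕ) (α : ℝ) :
    (fourier m (h • (α : UnitAddCircle)) : ℂ)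
      = Complex.exp (2 * Real.pi * Complex.I * h * Int.fract ((m : ℝ) * α)) := by
  rw [← AddCircle.coe_nsmul, fourier_coe_apply, Complex.exp_eq_exp_iff_exists_int]
  refine ⟨h * ⌊(m : ℝ) * α⌋, ?_⟩
  have : ((m : ℝ) * α : ℂ) = ⌊(m : ℝ) * α⌋ + Int.fract ((m : ℝ) * α) := by
    exact_mod_cast (Int.floor_add_fract ((m : ℝ) * α)).symm
  push_cast at this ⊢
  simp only [nsmul_eq_mul]
  linear_combination (2 * Real.pi * Complex.I * h) * this

theorem norm_sum_Ioc_fourier_le_starDisc (a : ℕ → ℤ) (α : ℝ) (M K : ℕ) {h : ℕ} (hh : 1 ≤ h) :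
    ‖∑ n ∈ Finset.Ioc M (M + K), fourier (a n) (h • (α : UnitAddCircle))‖
      ≤ 2 * Real.pi * h * (((M + K : ℕ) : ℝ) * starDisc (M + K) (fun n => Int.fract ((a n : ℝ) * α)))
        + 2 * Real.pi * h * (M * starDisc M (fun n => Int.fract ((a n : ℝ) * α))) := by
  have hx : ∀ n, (fun n => Int.fract ((a n : ℝ) * α)) n ∈ Set.Ico (0 : ℝ) 1 := fun n =>
    ⟨Int.fract_nonneg _, Int.fract_lt_one _⟩
  have hsplit : ∑ n ∈ Finset.Ioc M (M + K), (fourier (a n) (h • (α : UnitAddCircle)) : ℂ)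
      = ∑ n ∈ Finset.Icc 1 (M + K), (fourier (a n) (h • (α : UnitAddCircle)) : ℂ)
        - ∑ n ∈ Finset.Icc 1 M, (fourier (a n) (h • (α : UnitAddCircle)) : ℂ) := by
    rw [eq_sub_iff_add_eq, add_comm, ← Finset.sum_union]
    · congr 1
      ext n
      simp only [Finset.mem_union, Finset.mem_Icc, Finset.mem_Ioc]
      omega
    · rw [Finset.disjoint_left]
      intro n
      simp only [Finset.mem_Icc, Finset.mem_Ioc]
      omega
  rw [hsplit]
  simp_rw [fourier_nsmul_coe_eq_exp_fract]
  exact (norm_sub_le _ _).trans (add_le_add (norm_sum_exp_le_starDisc hh (M + K) hx)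
    (norm_sum_exp_le_starDisc hh M hx))

theorem ae_real_of_ae_haarAddCircle {p : UnitAddCircle → Prop}
    (hp : ∀ᵐ x ∂AddCircle.haarAddCircle, p x) : ∀ᵐ α : ℝ, p (α : UnitAddCircle) := by
  have hvol : ∀ᵐ x : UnitAddCircle, p x := by
    rw [AddCircle.volume_eq_smul_haarAddCircle]
    exact Measure.ae_smul_measure hp _
  rw [← Measure.restrict_univ (μ := (volume : Measure ℝ)), ← iUnion_Ioc_intCast ℝ,
    ae_restrict_iUnion_iff]
  intro n
  exact (UnitAddCircle.measurePreserving_mk (n : ℝ)).quasiMeasurePreserving.ae hvol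

open AddCircle in
/-- The set of points at which all the small dilates of a suitable short exponential sum are small
has small measure. -/
theorem exists_measure_forall_dilate_sum_le {c : ℝ} (hc : 1 < c) {a : ℕ → ℤ}
    (ha : ∀ n : ℕ, 1 ≤ n → a n = ⌊(n : ℝ) ^ c⌋) {τ : ℝ}
    (hτ1 : c < 3 / 2 → τ = (c - 1) / 2) (hτ2 : 3 / 2 ≤ c → c < 2 → τ = 1 / 4)
    (hτ3 : 2 ≤ c → τ = 7 / 26) {ε : ℝ} (hε : 0 < ε) (hετ : ε ≤ τ) :
    ∃ r : ℕ, r ≤ 26 ∧ ∃ C : ℝ, ∀ᶠ k : ℕ in atTop,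
      haarAddCircle.real {x : UnitAddCircle | ∀ h ∈ Finset.Icc 1 (k ^ r),
        ‖∑ n ∈ Finset.Ioc (k ^ 26) (k ^ 26 + k ^ r), fourier (a n) (h • x)‖
          ≤ h * (4 * Real.pi * (2 * (k : ℝ) ^ 26) ^ (τ - ε))} ≤ C * (k : ℝ) ^ (-ε) := by
  set P : ℝ := 52 + 26 * c with hP
  set δ : ℝ := min (1 / 4) (25 * ε / (5 * P + 1 / 2)) with hδdef
  have hP0 : 0 < P := by rw [hP]; linarith
  have hδ : 0 < δ := by rw [hδdef]; positivity
  have hδ4 : δ ≤ 1 / 4 := min_le_left _ _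
  have hδε : δ * (5 * P + 1 / 2) ≤ 25 * ε := by
    rw [← le_div_iff₀ (by positivity)]; exact min_le_right _ _
  obtain ⟨r, hr, hE⟩ := exists_length_card_additiveQuadruples_le hc ha hτ1 hτ2 hτ3
  obtain ⟨C₁, hC₁, hE⟩ := hE δ hδ
  obtain ⟨C₀, hC₀, hbad⟩ := exists_measure_forall_dilate_le hδ hδ4
  set c₁ : ℝ := 1 / (2 * √(2 * C₁)) with hc₁
  have hc₁0 : 0 < c₁ := by positivity
  set C₂ : ℝ := 4 * Real.pi * 2 ^ (τ - ε) with hC₂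
  have hC₂0 : 0 < C₂ := by positivity
  set C₃ : ℝ := 2 * Real.pi * 2 ^ c with hC₃
  have hC₃0 : 0 < C₃ := by positivity
  refine ⟨r, hr, C₀ * C₃ ^ (5 * δ) * (C₂ / c₁), ?_⟩
  have hexp : 0 < 26 * ε - δ / 2 := by nlinarith
  have hlarge : ∀ᶠ k : ℕ in atTop, 4 * C₂ / c₁ ≤ (k : ℝ) ^ (26 * ε - δ / 2) :=
    ((tendsto_rpow_atTop hexp).comp tendsto_natCast_atTop_atTop).eventually_ge_atTop _
  filter_upwards [hE, hlarge, eventually_ge_atTop 1] with k hEk hk hk1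
  set κ : ℝ := (k : ℝ) with hκ
  have hκ1 : 1 ≤ κ := by rw [hκ]; exact_mod_cast hk1
  have hκ0 : 0 < κ := by linarith
  set S := Finset.Ioc (k ^ 26) (k ^ 26 + k ^ r) with hS
  have hScard : S.card = k ^ r := by simp [hS]
  have hSmem : ∀ n ∈ S, 1 ≤ n ∧ (n : ℝ) ≤ 2 * κ ^ 26 := by
    intro n hn
    obtain ⟨h1, h2⟩ := Finset.mem_Ioc.mp hn
    refine ⟨by omega, ?_⟩
    have h3 : k ^ r ≤ k ^ 26 := Nat.pow_le_pow_right hk1 hr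
    have h4 : n ≤ 2 * k ^ 26 := by omega
    rw [hκ]
    exact_mod_cast h4
  have hinj : Set.InjOn a S := by
    have hmono : ∀ m ∈ S, ∀ n ∈ S, m < n → a m < a n := by
      intro m hm n hn hmn
      rw [ha m (hSmem m hm).1, ha n (hSmem n hn).1]
      exact floor_rpow_lt_floor_rpow hc (hSmem m hm).1 hmn
    intro m hm n hn hmn
    rcases lt_trichotomy m n with h | h | h
    · exact absurd hmn (hmono m hm n hn h).ne
    · exact h
    · exact absurd hmn (hmono n hn m hm h).ne'
  set f : UnitAddCircle → ℂ := fun x => ∑ n ∈ S, fourier (a n) x with hf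
  have hfc : Continuous f := by simp only [hf]; fun_prop
  have hfK : ∀ x, ‖f x‖ ≤ (k ^ r : ℕ) := by
    intro x
    rw [← hScard]
    exact norm_sum_fourier_le a S x
  set V : ℝ := κ ^ r * (2 * Real.pi * (2 * κ ^ 26) ^ c) with hV
  have hV1 : 1 ≤ V := by
    have h1 : 1 ≤ (2 * κ ^ 26) ^ c :=
      Real.one_le_rpow (by have := one_le_pow₀ (n := 26) hκ1; linarith) (by linarith)
    have h2 : 1 ≤ 2 * Real.pi := by have := Real.pi_gt_three; linarith
    exact one_le_mul_of_one_le_of_one_le (one_le_pow₀ hκ1)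
      (one_le_mul_of_one_le_of_one_le h2 h1)
  have hfV : ∀ (x : UnitAddCircle) (s : ℝ), ‖f (x + s) - f x‖ ≤ V * |s| := by
    intro x s
    have hA : ∀ n ∈ S, |(a n : ℝ)| ≤ (2 * κ ^ 26) ^ c := by
      intro n hn
      obtain ⟨hn1, hn2⟩ := hSmem n hn
      rw [ha n hn1, abs_of_nonneg (by exact_mod_cast Int.floor_nonneg.mpr (by positivity))]
      refine (Int.floor_le _).trans ?_
      gcongr
    have h := norm_sum_fourier_add_sub_le hA x s
    rw [hScard, Nat.cast_pow] at h
    exact h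
  set D : ℝ := 4 * Real.pi * (2 * κ ^ 26) ^ (τ - ε) with hD
  have hD1 : 1 ≤ D := by
    have h1 : 1 ≤ (2 * κ ^ 26) ^ (τ - ε) :=
      Real.one_le_rpow (by have := one_le_pow₀ (n := 26) hκ1; linarith) (by linarith)
    have h2 : 1 ≤ 4 * Real.pi := by have := Real.pi_gt_three; linarith
    exact one_le_mul_of_one_le_of_one_le h2 h1
  have hDeq : D = C₂ * κ ^ (26 * τ - 26 * ε) := by
    rw [hD, hC₂, Real.mul_rpow (by norm_num) (by positivity), ← Real.rpow_natCast κ 26,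
      ← Real.rpow_mul hκ0.le]
    push_cast
    ring_nf
  set I := ∫ x, ‖f x‖ ∂haarAddCircle with hI
  have hIlow : c₁ * κ ^ (26 * τ - δ / 2) ≤ I := by
    set B : ℝ := √(2 * C₁) * κ ^ ((r : ℝ) - 26 * τ + δ / 2) with hB
    have hB0 : 0 < B := by positivity
    have hmain := integral_norm_sq_le_of_pow_four hfc hB0
    simp only [hf] at hmain
    rw [integral_norm_sq_sum_fourier_of_injOn hinj, integral_norm_pow_four_sum_fourier,
      hScard] at hmain
    have hB2 : B ^ 2 = 2 * C₁ * κ ^ (2 * (r : ℝ) - 52 * τ + δ) := by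
      rw [hB, mul_pow, Real.sq_sqrt (by positivity), ← Real.rpow_natCast, ← Real.rpow_mul hκ0.le]
      push_cast
      ring_nf
    have hEB : ((additiveQuadruples a S).card : ℝ) / B ^ 2 ≤ κ ^ (r : ℝ) / 2 := by
      rw [div_le_iff₀ (by positivity), hB2]
      refine hEk.trans (le_of_eq ?_)
      rw [show 3 * (r : ℝ) - 52 * τ + δ = (r : ℝ) + (2 * (r : ℝ) - 52 * τ + δ) by ring,
        Real.rpow_add hκ0]
      ring
    have hKr : ((k ^ r : ℕ) : ℝ) = κ ^ (r : ℝ) := by rw [Real.rpow_natCast]; push_cast; rfl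
    rw [hKr] at hmain
    have hBI : κ ^ (r : ℝ) / 2 ≤ B * I := by linarith
    have : c₁ * κ ^ (26 * τ - δ / 2) = κ ^ (r : ℝ) / 2 / B := by
      rw [hB, hc₁, show 26 * τ - δ / 2 = (r : ℝ) - ((r : ℝ) - 26 * τ + δ / 2) by ring,
        Real.rpow_sub hκ0]
      field_simp
    rw [this, div_le_iff₀ hB0]
    linarith
  have hI0 : 0 < I := lt_of_lt_of_le (by positivity) hIlow
  have hDI : D / I ≤ C₂ / c₁ * κ ^ (δ / 2 - 26 * ε) := by
    rw [div_le_iff₀ hI0, hDeq]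
    calc C₂ * κ ^ (26 * τ - 26 * ε)
        = C₂ / c₁ * κ ^ (δ / 2 - 26 * ε) * (c₁ * κ ^ (26 * τ - δ / 2)) := by
          rw [show 26 * τ - 26 * ε = (δ / 2 - 26 * ε) + (26 * τ - δ / 2) by ring,
            Real.rpow_add hκ0]
          field_simp
      _ ≤ _ := by gcongr
  have h4D : 4 * D ≤ I := by
    have h1 : 4 * (C₂ / c₁ * κ ^ (δ / 2 - 26 * ε)) ≤ 1 := by
      rw [show δ / 2 - 26 * ε = -(26 * ε - δ / 2) by ring, Real.rpow_neg hκ0.le,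
        ← div_eq_mul_inv, mul_div_assoc', mul_div_assoc']
      exact div_le_one_of_le₀ hk (by positivity)
    have h2 : D / I ≤ 1 / 4 := by linarith
    rw [div_le_iff₀ hI0] at h2
    linarith
  have hVK : (V * (k ^ r : ℕ)) ≤ C₃ * κ ^ P := by
    have h1 : V * (k ^ r : ℕ) = C₃ * (κ ^ (2 * r) * κ ^ (26 * c)) := by
      rw [hV, hC₃, Real.mul_rpow (by norm_num) (by positivity), ← Real.rpow_natCast κ 26,
        ← Real.rpow_mul hκ0.le]
      push_cast
      ring
    rw [h1, hP, Real.rpow_add hκ0]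
    have h2 : κ ^ (2 * r) ≤ κ ^ (52 : ℝ) := by
      rw [← Real.rpow_natCast]
      refine Real.rpow_le_rpow_of_exponent_le hκ1 ?_
      exact_mod_cast (by omega : 2 * r ≤ 52)
    gcongr
  have hfin := hbad f hfc (k ^ r) (Nat.one_le_pow _ _ hk1) hfK V hV1 hfV D hD1 h4D
  calc haarAddCircle.real {x : UnitAddCircle | ∀ h ∈ Finset.Icc 1 (k ^ r), ‖f (h • x)‖ ≤ h * D}
      ≤ C₀ * (V * (k ^ r : ℕ)) ^ (5 * δ) * (D / I) := hfin
    _ ≤ C₀ * (C₃ * κ ^ P) ^ (5 * δ) * (C₂ / c₁ * κ ^ (δ / 2 - 26 * ε)) := by gcongr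
    _ = C₀ * C₃ ^ (5 * δ) * (C₂ / c₁) * κ ^ (P * (5 * δ) + (δ / 2 - 26 * ε)) := by
        rw [Real.mul_rpow hC₃0.le (by positivity), ← Real.rpow_mul hκ0.le, Real.rpow_add hκ0]
        ring
    _ ≤ C₀ * C₃ ^ (5 * δ) * (C₂ / c₁) * κ ^ (-ε) := by
        gcongr
        linarith

theorem ae_frequently_rpow_le_mul_starDisc {c : ℝ} (hc : 1 < c) {a : ℕ → ℤ}
    (ha : ∀ n : ℕ, 1 ≤ n → a n = ⌊(n : ℝ) ^ c⌋) {τ : ℝ}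
    (hτ1 : c < 3 / 2 → τ = (c - 1) / 2) (hτ2 : 3 / 2 ≤ c → c < 2 → τ = 1 / 4)
    (hτ3 : 2 ≤ c → τ = 7 / 26) {ε : ℝ} (hε : 0 < ε) (hετ : ε ≤ τ) :
    ∀ᵐ α : ℝ, ∃ᶠ N : ℕ in atTop, (N : ℝ) ^ (τ - ε)
      ≤ N * starDisc N (fun n => Int.fract ((a n : ℝ) * α)) := by
  obtain ⟨r, hr, C, hC⟩ := exists_measure_forall_dilate_sum_le hc ha hτ1 hτ2 hτ3 hε hετ
  set bad : ℕ → Set UnitAddCircle := fun k => {x | ∀ h ∈ Finset.Icc 1 (k ^ r),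
    ‖∑ n ∈ Finset.Ioc (k ^ 26) (k ^ 26 + k ^ r), fourier (a n) (h • x)‖
      ≤ h * (4 * Real.pi * (2 * (k : ℝ) ^ 26) ^ (τ - ε))} with hbad
  have hpow : Tendsto (fun j : ℕ => 2 ^ j) atTop atTop :=
    tendsto_pow_atTop_atTop_of_one_lt one_lt_two
  have hsum : Summable fun j : ℕ => AddCircle.haarAddCircle.real (bad (2 ^ j)) := by
    have hgeo : Summable fun j : ℕ => C * ((2 : ℝ) ^ (-ε)) ^ j :=
      (summable_geometric_of_lt_one (by positivity)
        (Real.rpow_lt_one_of_one_lt_of_neg one_lt_two (by linarith))).mul_left C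
    refine hgeo.of_norm_bounded_eventually_nat ?_
    filter_upwards [hpow.eventually hC] with j hj
    rw [Real.norm_of_nonneg measureReal_nonneg]
    refine hj.trans (le_of_eq ?_)
    push_cast
    rw [← Real.rpow_natCast, ← Real.rpow_natCast, ← Real.rpow_mul (by norm_num),
      ← Real.rpow_mul (by norm_num), mul_comm (j : ℝ)]
  have hne : ∑' j : ℕ, AddCircle.haarAddCircle (bad (2 ^ j)) ≠ ⊤ := by
    have h := hsum.tsum_ofReal_ne_top
    simpa using h
  have hBC : ∀ᵐ x ∂AddCircle.haarAddCircle, ∀ᶠ j : ℕ in atTop, x ∉ bad (2 ^ j) :=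
    ae_eventually_notMem hne
  filter_upwards [ae_real_of_ae_haarAddCircle hBC] with α hα
  rw [frequently_atTop]
  intro N₀
  obtain ⟨j, hj, hjN⟩ := (hα.and (hpow.eventually_ge_atTop N₀)).exists
  set k := 2 ^ j with hk
  have hk1 : 1 ≤ k := Nat.one_le_two_pow
  simp only [hbad, Set.mem_ofPred_eq, not_forall, not_le] at hj
  obtain ⟨h, hh, hlt⟩ := hj
  have hh1 := (Finset.mem_Icc.mp hh).1
  have hh0 : (0 : ℝ) < h := by exact_mod_cast hh1
  have hkok := hlt.trans_le (norm_sum_Ioc_fourier_le_starDisc a α (k ^ 26) (k ^ r) hh1)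
  have hkr : k ^ r ≤ k ^ 26 := Nat.pow_le_pow_right hk1 hr
  have hkN : N₀ ≤ k ^ 26 := hjN.trans (Nat.le_self_pow (by norm_num) k)
  set T : ℝ := (2 * (k : ℝ) ^ 26) ^ (τ - ε) with hT
  have hsize : ∀ N : ℕ, N ≤ 2 * k ^ 26 → (N : ℝ) ^ (τ - ε) ≤ T := fun N hN =>
    Real.rpow_le_rpow (Nat.cast_nonneg _) (by exact_mod_cast hN) (by linarith)
  by_contra! hcon
  have h1 := (hcon (k ^ 26 + k ^ r) (by omega)).trans_le (hsize _ (by omega))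
  have h2 := (hcon (k ^ 26) hkN).trans_le (hsize _ (by omega))
  have h3 : 0 < 2 * Real.pi * (h : ℝ) := by positivity
  nlinarith [mul_lt_mul_of_pos_left h1 h3, mul_lt_mul_of_pos_left h2 h3]

theorem stmt4 (c : ℝ) (hc : 1 < c)
    (a : ℕ → ℤ) (ha : ∀ n : ℕ, 1 ≤ n → a n = ⌊(n : ℝ) ^ c⌋)
    (τ : ℝ)
    (hτ1 : c < 3 / 2 → τ = (c - 1) / 2)
    (hτ2 : 3 / 2 ≤ c → c < 2 → τ = 1 / 4)
    (hτ3 : 2 ≤ c → τ = 7 / 26) :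
    ∀ᵐ α ∂(volume : Measure ℝ), ∀ ε > 0, ∃ᶠ N : ℕ in atTop,
      (N : ℝ) * starDisc N (fun n => Int.fract ((a n : ℝ) * α)) ≥
        (N : ℝ) ^ (τ - ε) := by
  have hτ : 0 < τ := by
    rcases lt_or_ge c (3 / 2) with h | h
    · rw [hτ1 h]; linarith
    · rcases lt_or_ge c 2 with h' | h'
      · rw [hτ2 h h']; norm_num
      · rw [hτ3 h']; norm_num
  have hall : ∀ᵐ α : ℝ, ∀ q : ℕ, ∃ᶠ N : ℕ in atTop, (N : ℝ) ^ (τ - τ / (q + 1))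
      ≤ N * starDisc N (fun n => Int.fract ((a n : ℝ) * α)) :=
    ae_all_iff.mpr fun q => ae_frequently_rpow_le_mul_starDisc hc ha hτ1 hτ2 hτ3 (by positivity)
      (div_le_self hτ.le (by linarith [(Nat.cast_nonneg q : (0 : ℝ) ≤ q)]))
  filter_upwards [hall] with α hα ε hε
  obtain ⟨q, hq⟩ := exists_nat_gt (τ / ε)
  have hqε : τ / (q + 1) ≤ ε := by
    rw [div_lt_iff₀ hε] at hq
    rw [div_le_iff₀ (by positivity)]
    nlinarith
  refine ((hα q).and_eventually (eventually_ge_atTop 1)).mono fun N ⟨hN, hN1⟩ => ?_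
  exact (Real.rpow_le_rpow_of_exponent_le (by exact_mod_cast hN1) (by linarith)).trans hN
end

section
/- Let γ > 0 and 1 < β ≤ 2, and set a_n = ⌊e^{γ(log n)^β}⌋ for n ≥ 1. Then for Lebesgue-almost all real α, for every ε > 0 there are infinitely many N with N·D_N*({a_1 α}, …, {a_N α}) ≥ N^{7/26 − ε}. -/
open Filter MeasureTheory

theorem antitone_step_bounds {δ : ℕ → ℝ} {M : ℕ} {η : ℝ}
    (hlt : ∀ n, M ≤ n → δ (n + 1) < δ n) (hle : ∀ n, M ≤ n → δ n ≤ δ (n + 1) + η)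
    {n : ℕ} (hn : M ≤ n) (k : ℕ) :
    δ (n + (k + 1)) < δ n ∧ δ n ≤ δ (n + k) + k * η := by
  have hweak : ∀ k : ℕ, δ (n + k) ≤ δ n := by
    intro k
    induction k with
    | zero => simp
    | succ k ih => exact (hlt (n + k) (by omega)).le.trans ih
  refine ⟨(hlt (n + k) (by omega)).trans_le (hweak k), ?_⟩
  induction k with
  | zero => simp
  | succ k ih =>
    have := hle (n + k) (by omega)
    push_cast
    rw [← add_assoc]
    linarith

/-- For a sequence whose second differences lie in `[-η, 0)`, the increments over a window of
length `s` decrease, and not too fast. -/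
theorem shift_increment_bounds {l : ℕ → ℝ} {M : ℕ} {η : ℝ}
    (hlt : ∀ n, M ≤ n → l (n + 2) - l (n + 1) < l (n + 1) - l n)
    (hle : ∀ n, M ≤ n → l (n + 1) - l n ≤ l (n + 2) - l (n + 1) + η)
    {i j : ℕ} (hi : M ≤ i) (hij : i < j) (s : ℕ) :
    (0 < s → l (j + s) + l i < l j + l (i + s)) ∧
      l j + l (i + s) ≤ l (j + s) + l i + ((j - i : ℕ) : ℝ) * s * η := by
  obtain ⟨k, rfl⟩ : ∃ k, j = i + (k + 1) := ⟨j - i - 1, by omega⟩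
  have key := fun n (hn : M ≤ n) (k : ℕ) => antitone_step_bounds (δ := fun n => l (n + 1) - l n)
    hlt hle hn k
  have hsub : i + (k + 1) - i = k + 1 := by omega
  rw [hsub]
  have hstep : ∀ t, l (i + (k + 1) + (t + 1)) - l (i + (k + 1) + t) < l (i + (t + 1)) - l (i + t)
      ∧ l (i + (t + 1)) - l (i + t) ≤
        l (i + (k + 1) + (t + 1)) - l (i + (k + 1) + t) + ((k + 1 : ℕ) : ℝ) * η := by
    intro t
    have h1 := (key (i + t) (by omega) k).1
    have h2 := (key (i + t) (by omega) (k + 1)).2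
    have e1 : i + (k + 1) + (t + 1) = i + t + (k + 1) + 1 := by omega
    have e2 : i + (k + 1) + t = i + t + (k + 1) := by omega
    rw [e1, e2]
    exact ⟨h1, h2⟩
  have hweak : ∀ s, l (i + (k + 1) + s) + l i ≤ l (i + (k + 1)) + l (i + s) := by
    intro s
    induction s with
    | zero => simp
    | succ s ih => linarith [(hstep s).1]
  constructor
  · intro hs
    obtain ⟨t, rfl⟩ : ∃ t, s = t + 1 := ⟨s - 1, by omega⟩
    linarith [hweak t, (hstep t).1]
  · induction s with
    | zero => simp
    | succ s ih =>
      have := (hstep s).2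
      push_cast at *
      linarith

/-- The increments `A (n + 1) - A n` are positive, nondecreasing and log-concave beyond `M`, and
their log-concavity defect is at most `η`. -/
structure SlowlyLogConcave (A : ℕ → ℝ) (M : ℕ) (η : ℝ) : Prop where
  pos : ∀ n, M ≤ n → 0 < A (n + 1) - A n
  mono : ∀ n, M ≤ n → A (n + 1) - A n ≤ A (n + 2) - A (n + 1)
  lt : ∀ n, M ≤ n → Real.log (A (n + 3) - A (n + 2)) - Real.log (A (n + 2) - A (n + 1)) <
    Real.log (A (n + 2) - A (n + 1)) - Real.log (A (n + 1) - A n)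
  le : ∀ n, M ≤ n → Real.log (A (n + 2) - A (n + 1)) - Real.log (A (n + 1) - A n) ≤
    Real.log (A (n + 3) - A (n + 2)) - Real.log (A (n + 2) - A (n + 1)) + η

namespace SlowlyLogConcave

variable {A : ℕ → ℝ} {M : ℕ} {η : ℝ}

theorem strictMono (h : SlowlyLogConcave A M η) {m n : ℕ} (hm : M ≤ m) (hmn : m < n) :
    A m < A n := by
  induction n, hmn using Nat.le_induction with
  | base => linarith [h.pos m hm]
  | succ k hk ih => linarith [h.pos k (by omega)]

theorem lt_of_lt (h : SlowlyLogConcave A M η) {m n : ℕ} (hm : M ≤ m) (hn : M ≤ n)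
    (hA : A m < A n) : m < n := by
  by_contra! hle
  rcases hle.eq_or_lt with rfl | hlt
  · exact lt_irrefl _ hA
  · exact absurd (h.strictMono hn hlt) (not_lt.2 hA.le)

theorem increment_mono (h : SlowlyLogConcave A M η) {m n : ℕ} (hm : M ≤ m) (hmn : m ≤ n) :
    A (m + 1) - A m ≤ A (n + 1) - A n := by
  induction n, hmn using Nat.le_induction with
  | base => exact le_rfl
  | succ k hk ih => exact ih.trans (h.mono k (by omega))

theorem sub_eq_sum (A : ℕ → ℝ) (x c : ℕ) :
    A (x + c) - A x = ∑ u ∈ Finset.range c, (A (x + u + 1) - A (x + u)) := by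
  have := Finset.sum_range_sub (fun u => A (x + u)) c
  simpa [add_assoc] using this.symm

/-- Comparison of products of gaps over two windows and their translates. -/
theorem gap_mul_gap_bounds (h : SlowlyLogConcave A M η) (hη : 0 ≤ η) {x d e c s H : ℕ}
    (hx : M ≤ x) (hd : 0 < d) (hde : d ≤ e) (hc : 0 < c) (hs : 0 < s) :
    (A (x + s + e + c) - A (x + s + e)) * (A (x + d) - A x) <
        (A (x + e + c) - A (x + e)) * (A (x + s + d) - A (x + s)) ∧
      (e + c ≤ H → s ≤ H →
        (A (x + e + c) - A (x + e)) * (A (x + s + d) - A (x + s)) ≤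
          Real.exp ((H : ℝ) ^ 2 * η) *
            ((A (x + s + e + c) - A (x + s + e)) * (A (x + d) - A x))) := by
  set b : ℕ → ℝ := fun n => A (n + 1) - A n with hb
  have hbpos : ∀ n, M ≤ n → 0 < b n := h.pos
  have hbexp : ∀ n, M ≤ n → b n = Real.exp (Real.log (b n)) :=
    fun n hn => (Real.exp_log (hbpos n hn)).symm
  have key := fun (i j : ℕ) (hi : M ≤ i) (hij : i < j) =>
    shift_increment_bounds (l := fun n => Real.log (b n)) h.lt h.le hi hij s
  simp only [sub_eq_sum A _ d, sub_eq_sum A _ c]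
  rw [Finset.sum_mul_sum, Finset.sum_mul_sum]
  constructor
  · refine Finset.sum_lt_sum_of_nonempty ⟨0, by simpa⟩ fun u hu => ?_
    refine Finset.sum_lt_sum_of_nonempty ⟨0, by simpa⟩ fun v hv => ?_
    have hv' := Finset.mem_range.1 hv
    have hk := (key (x + v) (x + e + u) (by omega) (by omega)).1 hs
    have e1 : x + s + e + u = x + e + u + s := by omega
    have e2 : x + s + v = x + v + s := by omega
    change b (x + s + e + u) * b (x + v) < b (x + e + u) * b (x + s + v)
    rw [e1, e2, hbexp (x + e + u + s) (by omega), hbexp (x + v) (by omega),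
      hbexp (x + e + u) (by omega), hbexp (x + v + s) (by omega), ← Real.exp_add, ← Real.exp_add]
    exact Real.exp_lt_exp.2 hk
  · intro hec hsH
    rw [Finset.mul_sum]
    refine Finset.sum_le_sum fun u hu => ?_
    rw [Finset.mul_sum]
    refine Finset.sum_le_sum fun v hv => ?_
    have hu' := Finset.mem_range.1 hu
    have hv' := Finset.mem_range.1 hv
    have hk := (key (x + v) (x + e + u) (by omega) (by omega)).2
    have e1 : x + s + e + u = x + e + u + s := by omega
    have e2 : x + s + v = x + v + s := by omega
    have hdiff : ((x + e + u - (x + v) : ℕ) : ℝ) * s * η ≤ (H : ℝ) ^ 2 * η := by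
      have h1 : ((x + e + u - (x + v) : ℕ) : ℝ) ≤ H := by exact_mod_cast (by omega)
      have h2 : (s : ℝ) ≤ H := by exact_mod_cast hsH
      rw [pow_two]
      gcongr
    change b (x + e + u) * b (x + s + v) ≤ _ * (b (x + s + e + u) * b (x + v))
    rw [e1, e2, hbexp (x + e + u + s) (by omega), hbexp (x + v) (by omega),
      hbexp (x + e + u) (by omega), hbexp (x + v + s) (by omega), ← Real.exp_add, ← Real.exp_add,
      ← Real.exp_add]
    exact Real.exp_le_exp.2 (by linarith)

/-- A pair of equal gaps is determined, within a short block, by the length of the first gap and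
the distance between the two gaps. -/
theorem not_two_equal_gap_pairs (h : SlowlyLogConcave A M η) (hη : 0 ≤ η) {x d e c c' s H : ℕ}
    (hH : (H : ℝ) ^ 2 * η * (H + 1) < 1)
    (hx : M ≤ x) (hd : 0 < d) (hde : d ≤ e) (hc : 0 < c) (hs : 0 < s)
    (hec : e + c ≤ H) (hsH : s ≤ H)
    (h1 : A (x + d) - A x = A (x + e + c) - A (x + e))
    (h2 : A (x + s + d) - A (x + s) = A (x + s + e + c') - A (x + s + e)) : False := by
  obtain ⟨hlt, hle⟩ := h.gap_mul_gap_bounds hη (H := H) hx hd hde hc hs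
  have hle := hle hec hsH
  have hG : 0 < A (x + d) - A x := sub_pos.2 (h.strictMono hx (by omega))
  have hG' : 0 < A (x + s + d) - A (x + s) := sub_pos.2 (h.strictMono (by omega) (by omega))
  rw [← h1] at hlt hle
  have hlt' : A (x + s + e + c) - A (x + s + e) < A (x + s + d) - A (x + s) := by
    nlinarith
  have hle' : A (x + s + d) - A (x + s) ≤
      Real.exp ((H : ℝ) ^ 2 * η) * (A (x + s + e + c) - A (x + s + e)) := by
    nlinarith
  rw [h2] at hlt' hle'
  have hcc : c < c' := by
    have := h.lt_of_lt (m := x + s + e + c) (n := x + s + e + c') (by omega) (by omega)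
      (by linarith)
    omega
  have hF : 0 < A (x + s + e + c) - A (x + s + e) := sub_pos.2 (h.strictMono (by omega) (by omega))
  have hlast : A (x + s + e + c) - A (x + s + e) ≤
      c * (A (x + s + e + c + 1) - A (x + s + e + c)) := by
    rw [sub_eq_sum A (x + s + e) c]
    refine (Finset.sum_le_card_nsmul _ _ (A (x + s + e + c + 1) - A (x + s + e + c))
      fun u hu => ?_).trans (by simp)
    exact h.increment_mono (by omega) (by have := Finset.mem_range.1 hu; omega)
  have hnext : A (x + s + e + c + 1) ≤ A (x + s + e + c') := by
    rcases (Nat.succ_le_of_lt hcc).eq_or_lt with heq | hlt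
    · rw [← heq]; rfl
    · exact (h.strictMono (by omega) (by omega)).le
  have hc0 : (0 : ℝ) < c := by exact_mod_cast hc
  have hgrow : (1 + 1 / (c : ℝ)) * (A (x + s + e + c) - A (x + s + e)) ≤
      A (x + s + e + c') - A (x + s + e) := by
    have : 1 / (c : ℝ) * (A (x + s + e + c) - A (x + s + e)) ≤
        A (x + s + e + c + 1) - A (x + s + e + c) := by
      rw [one_div, inv_mul_le_iff₀ hc0]; exact hlast
    linarith
  have hexp : 1 + 1 / (c : ℝ) ≤ Real.exp ((H : ℝ) ^ 2 * η) :=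
    le_of_mul_le_mul_right (hgrow.trans hle') hF
  have hcH : (c : ℝ) ≤ H := by exact_mod_cast (by omega)
  have hlog : 1 / ((c : ℝ) + 1) ≤ (H : ℝ) ^ 2 * η := by
    rw [← Real.log_exp ((H : ℝ) ^ 2 * η)]
    have h3 := Real.one_sub_inv_le_log_of_pos (x := 1 + 1 / (c : ℝ)) (by positivity)
    have h4 := Real.log_le_log (by positivity) hexp
    refine le_trans (le_of_eq ?_) (h3.trans h4)
    field_simp
    ring
  have h5 : 1 / ((H : ℝ) + 1) ≤ 1 / ((c : ℝ) + 1) := by gcongr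
  have h6 : 1 / ((H : ℝ) + 1) ≤ (H : ℝ) ^ 2 * η := h5.trans hlog
  rw [div_le_iff₀ (by positivity)] at h6
  linarith

theorem quadruple_unique_of_le (h : SlowlyLogConcave A M η) (hη : 0 ≤ η) {H : ℕ}
    (hH : (H : ℝ) ^ 2 * η * (H + 1) < 1)
    {p q r t p' q' r' t' : ℕ} (hp : M ≤ p) (hp' : M ≤ p')
    (hpq : p < q) (hpr : p < r) (hqt : q < t) (hrt : r < t) (ht : t < M + H)
    (ht' : t' < M + H) (hq't' : q' < t') (hr't' : r' < t')
    (hq : q - p = q' - p') (hr : r - p = r' - p') (hpq' : p' < q') (hpr' : p' < r')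
    (h1 : A p + A t = A q + A r) (h2 : A p' + A t' = A q' + A r') (hqr : q ≤ r) (hpp : p ≤ p') :
    p = p' ∧ t = t' := by
  rcases hpp.eq_or_lt with rfl | hlt
  · refine ⟨rfl, ?_⟩
    obtain rfl : q = q' := by omega
    obtain rfl : r = r' := by omega
    have hA : A t = A t' := by linarith
    rcases lt_trichotomy t t' with h' | h' | h'
    · exact absurd (h.strictMono (by omega) h') (by linarith)
    · exact h'
    · exact absurd (h.strictMono (by omega) h') (by linarith)
  · exfalso
    obtain ⟨s, rfl⟩ := Nat.exists_eq_add_of_lt hlt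
    obtain ⟨d, rfl⟩ := Nat.exists_eq_add_of_lt hpq
    obtain ⟨e, rfl⟩ := Nat.exists_eq_add_of_lt hpr
    obtain ⟨c, rfl⟩ := Nat.exists_eq_add_of_lt hrt
    obtain ⟨c', rfl⟩ := Nat.exists_eq_add_of_lt hr't'
    obtain rfl : q' = p + s + 1 + d + 1 := by omega
    obtain rfl : r' = p + s + 1 + e + 1 := by omega
    refine h.not_two_equal_gap_pairs hη hH (x := p) (d := d + 1) (e := e + 1) (c := c + 1)
      (c' := c' + 1) (s := s + 1) hp (by omega) (by omega) (by omega) (by omega) (by omega)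
      (by omega) ?_ ?_
    · simp only [← add_assoc]; linarith
    · simp only [← add_assoc]; linarith

/-- A nontrivial additive quadruple `A p + A t = A q + A r` is determined by `q - p` and `r - p`. -/
theorem quadruple_unique (h : SlowlyLogConcave A M η) (hη : 0 ≤ η) {H : ℕ}
    (hH : (H : ℝ) ^ 2 * η * (H + 1) < 1)
    {p q r t p' q' r' t' : ℕ} (hp : M ≤ p) (hp' : M ≤ p')
    (hpq : p < q) (hpr : p < r) (hqt : q < t) (hrt : r < t) (ht : t < M + H)
    (ht' : t' < M + H) (hq't' : q' < t') (hr't' : r' < t')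
    (hq : q - p = q' - p') (hr : r - p = r' - p') (hpq' : p' < q') (hpr' : p' < r')
    (h1 : A p + A t = A q + A r) (h2 : A p' + A t' = A q' + A r') : p = p' ∧ t = t' := by
  have h1' : A p + A t = A r + A q := by linarith
  have h2' : A p' + A t' = A r' + A q' := by linarith
  rcases le_total q r with hqr | hqr <;> rcases le_total p p' with hpp | hpp
  · exact h.quadruple_unique_of_le hη hH hp hp' hpq hpr hqt hrt ht ht' hq't' hr't' hq hr hpq' hpr'
      h1 h2 hqr hpp
  · have := h.quadruple_unique_of_le hη hH hp' hp hpq' hpr' hq't' hr't' ht' ht hqt hrt hq.symm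
      hr.symm hpq hpr h2 h1 (by omega) hpp
    exact ⟨this.1.symm, this.2.symm⟩
  · exact h.quadruple_unique_of_le hη hH hp hp' hpr hpq hrt hqt ht ht' hr't' hq't' hr hq hpr' hpq'
      h1' h2' hqr hpp
  · have := h.quadruple_unique_of_le hη hH hp' hp hpr' hpq' hr't' hq't' ht' ht hrt hqt hr.symm
      hq.symm hpr hpq h2' h1' (by omega) hpp
    exact ⟨this.1.symm, this.2.symm⟩

/-- In an additive quadruple the two sides agree up to order, or one side is strictly nested
inside the other. -/
theorem quadruple_cases (h : SlowlyLogConcave A M η) {m n k l : ℕ} (hm : M ≤ m) (hn : M ≤ n)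
    (hk : M ≤ k) (hl : M ≤ l) (heq : A m + A n = A k + A l) :
    (m = k ∧ n = l) ∨ (m = l ∧ n = k) ∨
      ((m < k ∧ m < l) ∧ k < n ∧ l < n) ∨ ((n < k ∧ n < l) ∧ k < m ∧ l < m) ∨
      ((k < m ∧ k < n) ∧ m < l ∧ n < l) ∨ ((l < m ∧ l < n) ∧ m < k ∧ n < k) := by
  have eq_of : ∀ {i j : ℕ}, M ≤ i → M ≤ j → A i = A j → i = j := by
    intro i j hi hj hij
    rcases lt_trichotomy i j with h' | h' | h'
    · exact absurd (h.strictMono hi h') (by linarith)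
    · exact h'
    · exact absurd (h.strictMono hj h') (by linarith)
  rcases lt_trichotomy m k with h1 | rfl | h1
  · have a1 := h.strictMono hm h1
    have a2 := h.lt_of_lt hl hn (by linarith)
    rcases lt_trichotomy m l with h2 | rfl | h2
    · have := h.lt_of_lt hk hn (by linarith [h.strictMono hm h2]); omega
    · have := eq_of hn hk (by linarith); omega
    · have := h.lt_of_lt hn hk (by linarith [h.strictMono hl h2]); omega
  · have := eq_of hn hl (by linarith); omega
  · have a1 := h.strictMono hk h1
    have a2 := h.lt_of_lt hn hl (by linarith)
    rcases lt_trichotomy m l with h2 | rfl | h2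
    · have := h.lt_of_lt hk hn (by linarith [h.strictMono hm h2]); omega
    · have := eq_of hn hk (by linarith); omega
    · have := h.lt_of_lt hn hk (by linarith [h.strictMono hl h2]); omega

theorem card_quadruples_of_first_min (h : SlowlyLogConcave A M η) (hη : 0 ≤ η) {H : ℕ}
    (hH : (H : ℝ) ^ 2 * η * (H + 1) < 1) {ι : Type*} (T : Finset ι) (p t q r : ι → ℕ)
    (hinj : ∀ i ∈ T, ∀ j ∈ T, p i = p j → t i = t j → q i = q j → r i = r j → i = j)
    (hT : ∀ i ∈ T, M ≤ p i ∧ p i < q i ∧ p i < r i ∧ q i < t i ∧ r i < t i ∧ t i < M + H ∧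
      A (p i) + A (t i) = A (q i) + A (r i)) :
    T.card ≤ H ^ 2 := by
  have : T.card ≤ (Finset.range H ×ˢ Finset.range H).card := by
    refine Finset.card_le_card_of_injOn (fun i => (q i - p i, r i - p i)) ?_ ?_
    · intro i hi
      obtain ⟨h1, h2, h3, h4, h5, h6, -⟩ := hT i hi
      simp only [Finset.coe_product, Finset.coe_range, Set.mem_prod, Set.mem_Iio]
      omega
    · intro i hi j hj hij
      obtain ⟨h1, h2, h3, h4, h5, h6, h7⟩ := hT i hi
      obtain ⟨k1, k2, k3, k4, k5, k6, k7⟩ := hT j hj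
      simp only [Prod.mk.injEq] at hij
      have := h.quadruple_unique hη hH h1 k1 h2 h3 h4 h5 h6 k6 k4 k5 hij.1 hij.2 k2 k3 h7 k7
      exact hinj i hi j hj this.1 this.2 (by omega) (by omega)
  simpa [pow_two] using this

/-- The additive energy of a short block is at most a constant times the trivial lower bound. -/
theorem energy_le (h : SlowlyLogConcave A M η) (hη : 0 ≤ η) {H : ℕ}
    (hH : (H : ℝ) ^ 2 * η * (H + 1) < 1) :
    ((((Finset.Ico M (M + H) ×ˢ Finset.Ico M (M + H)) ×ˢ
      (Finset.Ico M (M + H) ×ˢ Finset.Ico M (M + H))).filter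
        fun x => A x.1.1 + A x.1.2 = A x.2.1 + A x.2.2).card) ≤ 6 * H ^ 2 := by
  classical
  set B := Finset.Ico M (M + H) with hB
  set E := ((B ×ˢ B) ×ˢ (B ×ˢ B)).filter fun x => A x.1.1 + A x.1.2 = A x.2.1 + A x.2.2 with hE
  have hmem : ∀ x : (ℕ × ℕ) × (ℕ × ℕ), x ∈ E ↔ ((M ≤ x.1.1 ∧ x.1.1 < M + H) ∧
      (M ≤ x.1.2 ∧ x.1.2 < M + H) ∧ (M ≤ x.2.1 ∧ x.2.1 < M + H) ∧
      (M ≤ x.2.2 ∧ x.2.2 < M + H)) ∧ A x.1.1 + A x.1.2 = A x.2.1 + A x.2.2 := by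
    intro x; simp [hE, hB]; tauto
  set D1 := E.filter fun x => x.1.1 = x.2.1 ∧ x.1.2 = x.2.2
  set D2 := E.filter fun x => x.1.1 = x.2.2 ∧ x.1.2 = x.2.1
  set T1 := E.filter fun x => (x.1.1 < x.2.1 ∧ x.1.1 < x.2.2) ∧ x.2.1 < x.1.2 ∧ x.2.2 < x.1.2
  set T2 := E.filter fun x => (x.1.2 < x.2.1 ∧ x.1.2 < x.2.2) ∧ x.2.1 < x.1.1 ∧ x.2.2 < x.1.1
  set T3 := E.filter fun x => (x.2.1 < x.1.1 ∧ x.2.1 < x.1.2) ∧ x.1.1 < x.2.2 ∧ x.1.2 < x.2.2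
  set T4 := E.filter fun x => (x.2.2 < x.1.1 ∧ x.2.2 < x.1.2) ∧ x.1.1 < x.2.1 ∧ x.1.2 < x.2.1
  have hsub : E ⊆ D1 ∪ D2 ∪ T1 ∪ T2 ∪ T3 ∪ T4 := by
    intro x hx
    obtain ⟨⟨⟨a1, a2⟩, ⟨b1, b2⟩, ⟨c1, c2⟩, d1, d2⟩, heq⟩ := (hmem x).1 hx
    have hcases := h.quadruple_cases a1 b1 c1 d1 heq
    simp only [Finset.mem_union, or_assoc]
    exact hcases.imp (fun hc => Finset.mem_filter.2 ⟨hx, hc⟩) <| Or.imp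
      (fun hc => Finset.mem_filter.2 ⟨hx, hc⟩) <| Or.imp
      (fun hc => Finset.mem_filter.2 ⟨hx, hc⟩) <| Or.imp
      (fun hc => Finset.mem_filter.2 ⟨hx, hc⟩) <| Or.imp
      (fun hc => Finset.mem_filter.2 ⟨hx, hc⟩) (fun hc => Finset.mem_filter.2 ⟨hx, hc⟩)
  have hD1 : D1.card ≤ H ^ 2 := by
    have : D1.card ≤ (B ×ˢ B).card := by
      refine Finset.card_le_card_of_injOn (fun x => x.1) ?_ ?_
      · intro x hx
        have := (hmem x).1 (Finset.mem_filter.1 hx).1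
        simp [hB]; omega
      · intro x hx y hy hxy
        have h1 := (Finset.mem_filter.1 hx).2
        have h2 := (Finset.mem_filter.1 hy).2
        simp only [Prod.ext_iff] at hxy ⊢
        omega
    simpa [hB, pow_two] using this
  have hD2 : D2.card ≤ H ^ 2 := by
    have : D2.card ≤ (B ×ˢ B).card := by
      refine Finset.card_le_card_of_injOn (fun x => x.1) ?_ ?_
      · intro x hx
        have := (hmem x).1 (Finset.mem_filter.1 hx).1
        simp [hB]; omega
      · intro x hx y hy hxy
        have h1 := (Finset.mem_filter.1 hx).2
        have h2 := (Finset.mem_filter.1 hy).2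
        simp only [Prod.ext_iff] at hxy ⊢
        omega
    simpa [hB, pow_two] using this
  have hT1 : T1.card ≤ H ^ 2 := by
    refine h.card_quadruples_of_first_min hη hH T1 (fun x => x.1.1) (fun x => x.1.2)
      (fun x => x.2.1) (fun x => x.2.2) (fun x _ y _ => by simp only [Prod.ext_iff]; tauto) ?_
    intro x hx
    obtain ⟨hx1, hx2⟩ := Finset.mem_filter.1 hx
    obtain ⟨h1, h2⟩ := (hmem x).1 hx1
    exact ⟨by omega, by omega, by omega, by omega, by omega, by omega, by linarith⟩
  have hT2 : T2.card ≤ H ^ 2 := by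
    refine h.card_quadruples_of_first_min hη hH T2 (fun x => x.1.2) (fun x => x.1.1)
      (fun x => x.2.1) (fun x => x.2.2) (fun x _ y _ => by simp only [Prod.ext_iff]; tauto) ?_
    intro x hx
    obtain ⟨hx1, hx2⟩ := Finset.mem_filter.1 hx
    obtain ⟨h1, h2⟩ := (hmem x).1 hx1
    exact ⟨by omega, by omega, by omega, by omega, by omega, by omega, by linarith⟩
  have hT3 : T3.card ≤ H ^ 2 := by
    refine h.card_quadruples_of_first_min hη hH T3 (fun x => x.2.1) (fun x => x.2.2)
      (fun x => x.1.1) (fun x => x.1.2) (fun x _ y _ => by simp only [Prod.ext_iff]; tauto) ?_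
    intro x hx
    obtain ⟨hx1, hx2⟩ := Finset.mem_filter.1 hx
    obtain ⟨h1, h2⟩ := (hmem x).1 hx1
    exact ⟨by omega, by omega, by omega, by omega, by omega, by omega, by linarith⟩
  have hT4 : T4.card ≤ H ^ 2 := by
    refine h.card_quadruples_of_first_min hη hH T4 (fun x => x.2.2) (fun x => x.2.1)
      (fun x => x.1.1) (fun x => x.1.2) (fun x _ y _ => by simp only [Prod.ext_iff]; tauto) ?_
    intro x hx
    obtain ⟨hx1, hx2⟩ := Finset.mem_filter.1 hx
    obtain ⟨h1, h2⟩ := (hmem x).1 hx1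
    exact ⟨by omega, by omega, by omega, by omega, by omega, by omega, by linarith⟩
  refine (Finset.card_le_card hsub).trans ?_
  have u1 := Finset.card_union_le (D1 ∪ D2 ∪ T1 ∪ T2 ∪ T3) T4
  have u2 := Finset.card_union_le (D1 ∪ D2 ∪ T1 ∪ T2) T3
  have u3 := Finset.card_union_le (D1 ∪ D2 ∪ T1) T2
  have u4 := Finset.card_union_le (D1 ∪ D2) T1
  have u5 := Finset.card_union_le D1 D2
  omega

end SlowlyLogConcave

theorem integral_fourier_unit (n : ℤ) :
    ∫ x : UnitAddCircle, fourier n x = if n = 0 then 1 else 0 := by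
  have h := congrFun (fourierCoeff_fourier (T := 1) n) 0
  have hT := AddCircle.integral_haarAddCircle (T := 1) (f := fun x => (fourier n x : ℂ))
  rw [fourierCoeff] at h
  simp only [neg_zero, fourier_zero, one_smul] at h
  rw [hT] at h
  simp only [inv_one, one_smul] at h
  change ∫ x : AddCircle (1 : ℝ), fourier n x = _
  rw [h, Pi.single_apply]
  simp [eq_comm]

theorem integral_normSq_sum_fourier {ι : Type*} [DecidableEq ι] (s : Finset ι) (k : ι → ℤ) :
    ∫ x : UnitAddCircle, ‖∑ i ∈ s, (fourier (k i) x : ℂ)‖ ^ 2 =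
      ((s ×ˢ s).filter fun p => k p.1 = k p.2).card := by
  have hpt : ∀ x : UnitAddCircle, ((‖∑ i ∈ s, (fourier (k i) x : ℂ)‖ ^ 2 : ℝ) : ℂ) =
      ∑ p ∈ s ×ˢ s, (fourier (k p.1 - k p.2) x : ℂ) := by
    intro x
    rw [Complex.ofReal_pow, ← Complex.mul_conj', map_sum, Finset.sum_mul_sum,
      Finset.sum_product]
    refine Finset.sum_congr rfl fun i _ => Finset.sum_congr rfl fun j _ => ?_
    rw [sub_eq_add_neg, fourier_add, fourier_neg]
  apply Complex.ofReal_injective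
  rw [← integral_complex_ofReal]
  simp_rw [hpt]
  rw [integral_finsetSum]
  · simp_rw [integral_fourier_unit, sub_eq_zero]
    rw [Finset.sum_ite]
    simp
  · intro p _
    exact (ContinuousMap.continuous _).integrable_of_hasCompactSupport
      (HasCompactSupport.of_compactSpace _)

theorem integral_norm_pow_four_sum_fourier_s5 {ι : Type*} [DecidableEq ι] (s : Finset ι)
    (k : ι → ℤ) :
    ∫ x : UnitAddCircle, (‖∑ i ∈ s, (fourier (k i) x : ℂ)‖ ^ 2) ^ 2 =
      (((s ×ˢ s) ×ˢ (s ×ˢ s)).filter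
        fun p => k p.1.1 + k p.1.2 = k p.2.1 + k p.2.2).card := by
  rw [← integral_normSq_sum_fourier (s ×ˢ s) fun p => k p.1 + k p.2]
  refine integral_congr_ae (Eventually.of_forall fun x => ?_)
  simp only
  rw [← norm_pow, pow_two (∑ i ∈ s, _), Finset.sum_mul_sum, Finset.sum_product]
  simp only [fourier_add]

/-- Paley–Zygmund inequality for a function whose second moment is at most six times the square of
its mean. -/
theorem paley_zygmund_six {Ω : Type*} [MeasurableSpace Ω] {μ : Measure Ω} [IsProbabilityMeasure μ]
    {f : Ω → ℝ} {h : ℝ} (hh : 0 < h) (hf : Measurable f) (hfint : Integrable f μ)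
    (hfint_sq : Integrable (fun x => f x ^ 2) μ) (h1 : ∫ x, f x ∂μ = h)
    (h2 : ∫ x, f x ^ 2 ∂μ ≤ 6 * h ^ 2) :
    (1 : ℝ) / 24 ≤ μ.real {x | h / 2 ≤ f x} := by
  have hS : MeasurableSet {x | h / 2 ≤ f x} := measurableSet_le measurable_const hf
  have hind : Integrable ({x | h / 2 ≤ f x}.indicator fun _ => (1 : ℝ)) μ :=
    (integrable_const 1).indicator hS
  have hle : ∀ x, f x ≤ h / 2 + (1 / (24 * h)) * f x ^ 2 +
      6 * h * {x | h / 2 ≤ f x}.indicator (fun _ => (1 : ℝ)) x := by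
    intro x
    by_cases hx : h / 2 ≤ f x
    · rw [Set.indicator_of_mem (by exact hx)]
      have : 1 / (24 * h) * f x ^ 2 + 6 * h - f x = (f x - 12 * h) ^ 2 / (24 * h) := by
        field_simp; ring
      have h3 : 0 ≤ (f x - 12 * h) ^ 2 / (24 * h) := by positivity
      linarith
    · rw [Set.indicator_of_notMem (by exact hx)]
      have : 0 ≤ 1 / (24 * h) * f x ^ 2 := by positivity
      linarith
  have hmono := integral_mono (μ := μ) hfint
    (((integrable_const (h / 2)).add (hfint_sq.const_mul _)).add (hind.const_mul _)) hle
  have heq : ∫ x, (h / 2 + (1 / (24 * h)) * f x ^ 2 +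
      6 * h * {x | h / 2 ≤ f x}.indicator (fun _ => (1 : ℝ)) x) ∂μ =
      h / 2 + (1 / (24 * h)) * ∫ x, f x ^ 2 ∂μ + 6 * h * μ.real {x | h / 2 ≤ f x} := by
    have hsum : Integrable (fun x => h / 2 + (1 / (24 * h)) * f x ^ 2) μ :=
      (integrable_const _).add (hfint_sq.const_mul _)
    rw [integral_add hsum (hind.const_mul _),
      integral_add (integrable_const _) (hfint_sq.const_mul _), integral_const_mul,
      integral_const_mul, integral_indicator_const _ hS]
    simp
  have hmono' : h ≤ h / 2 + (1 / (24 * h)) * ∫ x, f x ^ 2 ∂μ +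
      6 * h * μ.real {x | h / 2 ≤ f x} := by
    rw [← heq]
    exact h1.symm.le.trans hmono
  have h3 : (1 / (24 * h)) * ∫ x, f x ^ 2 ∂μ ≤ h / 4 := by
    rw [one_div, inv_mul_le_iff₀ (by positivity)]
    nlinarith
  have h4 : h * (1 / 24) ≤ h * μ.real {x | h / 2 ≤ f x} := by linarith
  exact le_of_mul_le_mul_left h4 hh

theorem le_measure_frequently {Ω : Type*} [MeasurableSpace Ω] {μ : Measure Ω}
    [IsFiniteMeasure μ] {A : ℕ → Set Ω} (hA : ∀ k, MeasurableSet (A k)) {c : ENNReal}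
    (hc : ∀ᶠ k in atTop, c ≤ μ (A k)) : c ≤ μ {x | ∃ᶠ k in atTop, x ∈ A k} := by
  have hset : {x | ∃ᶠ k in atTop, x ∈ A k} = ⋂ n : ℕ, ⋃ k ≥ n, A k := by
    ext x; simp [frequently_atTop]
  rw [hset]
  have hlim := tendsto_measure_iInter_atTop (μ := μ) (s := fun n : ℕ => ⋃ k ≥ n, A k)
    (fun n => (MeasurableSet.biUnion (Set.to_countable _) fun k _ => hA k).nullMeasurableSet)
    (fun m n hmn => Set.biUnion_subset_biUnion_left fun k hk => le_trans hmn hk)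
    ⟨0, measure_ne_top _ _⟩
  refine ge_of_tendsto hlim ?_
  filter_upwards [hc] with n hn
  exact hn.trans (measure_mono (Set.subset_biUnion_of_mem (u := A) (le_refl n)))

theorem ae_exists_two_pow_smul_mem {E : Set UnitAddCircle} (hE : MeasurableSet E)
    (h0 : (volume : Measure UnitAddCircle) E ≠ 0) :
    ∀ᵐ x : UnitAddCircle, ∃ k : ℕ, (2 ^ k) • x ∈ E := by
  set Z : Set UnitAddCircle := ⋃ k : ℕ, (fun x => (2 ^ k) • x) ⁻¹' E with hZ
  have hZm : MeasurableSet Z :=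
    MeasurableSet.iUnion fun k => (measurable_const_smul (2 ^ k)) hE
  have herg := AddCircle.ergodic_nsmul (T := 1) (n := 2) (by norm_num)
  have hsub : (fun y : UnitAddCircle => 2 • y) ⁻¹' Z ⊆ Z := by
    intro x hx
    obtain ⟨k, hk⟩ := Set.mem_iUnion.1 hx
    refine Set.mem_iUnion.2 ⟨k + 1, ?_⟩
    simpa [pow_succ, mul_smul] using hk
  have hEZ : E ⊆ Z := fun x hx => Set.mem_iUnion.2 ⟨0, by simpa using hx⟩
  rcases herg.ae_empty_or_univ_of_preimage_ae_le hZm.nullMeasurableSet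
    (LE.le.eventuallyLE hsub) with h | h
  · exact absurd (measure_mono_null hEZ (ae_eq_empty.1 h)) h0
  · filter_upwards [eventuallyEq_univ.1 h] with x hx
    simpa [hZ] using hx

theorem ae_real_of_ae_unitAddCircle {P : UnitAddCircle → Prop} (h : ∀ᵐ x : UnitAddCircle, P x) :
    ∀ᵐ α : ℝ, P (α : UnitAddCircle) := by
  have key : ∀ n : ℤ, ∀ᵐ α : ℝ ∂(volume.restrict (Set.Ioc (n : ℝ) (n + 1))),
      P (α : UnitAddCircle) := fun n =>
    (UnitAddCircle.measurePreserving_mk (n : ℝ)).quasiMeasurePreserving.ae h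
  rw [← Measure.restrict_univ (μ := (volume : Measure ℝ)), ← iUnion_Ioc_intCast,
    ae_restrict_iUnion_iff]
  exact key

/-- The counting function of points in `[0, t)` minus its expected value. -/
theorem abs_count_sub_le (N : ℕ) (x : ℕ → ℝ) {t : ℝ} (ht : t ∈ Set.Ioc (0 : ℝ) 1) :
    |(((Finset.Icc 1 N).filter fun n => 0 ≤ x n ∧ x n < t).card : ℝ) - N * t| ≤
      N * starDisc N x := by
  rcases Nat.eq_zero_or_pos N with rfl | hN
  · simp
  have hN' : (0 : ℝ) < N := by exact_mod_cast hN
  have hbdd : BddAbove (Set.range fun β : Set.Ioc (0:ℝ) 1 =>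
      |(((Finset.Icc 1 N).filter fun n => 0 ≤ x n ∧ x n < (β : ℝ)).card : ℝ) / N - (β : ℝ)|) := by
    refine ⟨1, ?_⟩
    rintro _ ⟨β, rfl⟩
    have hcard : (((Finset.Icc 1 N).filter fun n => 0 ≤ x n ∧ x n < (β : ℝ)).card : ℝ) ≤ N := by
      exact_mod_cast (Finset.card_filter_le _ _).trans (by simp)
    have h1 : (((Finset.Icc 1 N).filter fun n => 0 ≤ x n ∧ x n < (β : ℝ)).card : ℝ) / N ≤ 1 :=
      div_le_one_of_le₀ hcard hN'.le
    have h0 : 0 ≤ (((Finset.Icc 1 N).filter fun n => 0 ≤ x n ∧ x n < (β : ℝ)).card : ℝ) / N := by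
      positivity
    have := β.2.1
    have := β.2.2
    simp only [abs_le]
    constructor <;> linarith
  have h := le_ciSup hbdd ⟨t, ht⟩
  change _ ≤ starDisc N x at h
  simp only at h
  calc _ = N * |(((Finset.Icc 1 N).filter fun n => 0 ≤ x n ∧ x n < t).card : ℝ) / N - t| := by
        rw [← abs_of_pos hN', ← abs_mul, abs_of_pos hN']
        congr 1
        field_simp
    _ ≤ _ := by gcongr

theorem mul_integral_exp_to_one (c : ℂ) {x : ℝ} (hc : c ≠ 0) :
    c * ∫ t in x..1, Complex.exp (c * t) = Complex.exp c - Complex.exp (c * x) := by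
  rw [integral_exp_mul_complex hc, mul_div_cancel₀ _ hc]
  simp

theorem mul_integral_id_mul_exp {c : ℂ} (hc : c ≠ 0) (hexp : Complex.exp c = 1) :
    c * ∫ t in (0 : ℝ)..1, (t : ℂ) * Complex.exp (c * t) = 1 := by
  have hderiv : ∀ t ∈ Set.uIcc (0 : ℝ) 1, HasDerivAt
      (fun t : ℝ => (t : ℂ) * Complex.exp (c * t) - Complex.exp (c * t) / c)
      (c * ((t : ℂ) * Complex.exp (c * t))) t := by
    intro t _
    have h1 : HasDerivAt (fun t : ℝ => (t : ℂ)) 1 t := Complex.ofRealCLM.hasDerivAt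
    have h2 : HasDerivAt (fun t : ℝ => Complex.exp (c * t)) (Complex.exp (c * t) * (c * 1)) t :=
      (h1.const_mul c).cexp
    refine ((h1.mul h2).sub (h2.div_const c)).congr_deriv ?_
    have hcc : Complex.exp (c * t) * (c * 1) / c = Complex.exp (c * t) := by
      rw [mul_one, mul_div_cancel_right₀ _ hc]
    rw [hcc]
    ring
  rw [← intervalIntegral.integral_const_mul, intervalIntegral.integral_eq_sub_of_hasDerivAt hderiv
    (Continuous.intervalIntegrable (by fun_prop) _ _)]
  simp [hexp]

/-- Koksma's inequality for exponential sums. -/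
theorem norm_sum_exp_le (N h : ℕ) (hh : 0 < h) (x : ℕ → ℝ)
    (hx : ∀ n, 0 ≤ x n ∧ x n < 1) :
    ‖∑ n ∈ Finset.Icc 1 N, Complex.exp (2 * Real.pi * Complex.I * h * x n)‖ ≤
      2 * Real.pi * h * (N * starDisc N x) := by
  set c : ℂ := 2 * Real.pi * Complex.I * h with hcdef
  have hc : c ≠ 0 := by
    simp [hcdef, Real.pi_ne_zero, hh.ne']
  have hexp : Complex.exp c = 1 := by
    rw [Complex.exp_eq_one_iff]
    exact ⟨h, by rw [hcdef]; push_cast; ring⟩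
  have hnormc : ‖c‖ = 2 * Real.pi * h := by
    simp [hcdef, abs_of_pos Real.pi_pos]
  have hnorme : ∀ t : ℝ, ‖Complex.exp (c * t)‖ = 1 := by
    intro t
    rw [show c * t = ((2 * Real.pi * h * t : ℝ) : ℂ) * Complex.I by rw [hcdef]; push_cast; ring]
    exact Complex.norm_exp_ofReal_mul_I _
  have hcont : Continuous fun t : ℝ => Complex.exp (c * t) := by fun_prop
  have hone : ∀ n, Complex.exp (c * x n) = 1 - c * ∫ t in (0 : ℝ)..1,
      (Set.Ioi (x n)).indicator (fun t : ℝ => Complex.exp (c * t)) t := by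
    intro n
    have h1 : ∫ t in (0 : ℝ)..1,
        (Set.Ioi (x n)).indicator (fun t : ℝ => Complex.exp (c * t)) t =
        ∫ t in (x n)..1, Complex.exp (c * t) := by
      rw [intervalIntegral.integral_of_le zero_le_one,
        intervalIntegral.integral_of_le (hx n).2.le, integral_indicator measurableSet_Ioi,
        Measure.restrict_restrict measurableSet_Ioi]
      congr 2
      ext t
      have := (hx n).1
      simp only [Set.mem_inter_iff, Set.mem_Ioi, Set.mem_Ioc]
      constructor
      · rintro ⟨h1, h2, h3⟩; exact ⟨h1, h3⟩
      · rintro ⟨h1, h2⟩; exact ⟨h1, by linarith, h2⟩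
    rw [h1, mul_integral_exp_to_one c hc, hexp]
    ring
  have hfint : ∀ n, IntervalIntegrable
      ((Set.Ioi (x n)).indicator fun t : ℝ => Complex.exp (c * t)) volume 0 1 := by
    intro n
    have := hcont.intervalIntegrable (μ := volume) 0 1
    rw [intervalIntegrable_iff] at this ⊢
    exact this.indicator measurableSet_Ioi
  have hpoint : ∀ t ∈ Set.Ioc (0 : ℝ) 1,
      ∑ n ∈ Finset.Icc 1 N, (Set.Ioi (x n)).indicator (fun t : ℝ => Complex.exp (c * t)) t =
      (((Finset.Icc 1 N).filter fun n => 0 ≤ x n ∧ x n < t).card : ℂ) * Complex.exp (c * t) := by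
    intro t _
    simp only [Set.indicator_apply, Set.mem_Ioi]
    rw [← Finset.sum_filter, Finset.sum_const, nsmul_eq_mul]
    congr 3
    ext n
    simp [(hx n).1]
  have hsum : ∑ n ∈ Finset.Icc 1 N, Complex.exp (c * x n) =
      - (c * ∫ t in (0 : ℝ)..1, (∑ n ∈ Finset.Icc 1 N,
        (Set.Ioi (x n)).indicator (fun t : ℝ => Complex.exp (c * t)) t -
          N * (t * Complex.exp (c * t)))) := by
    simp_rw [hone]
    rw [Finset.sum_sub_distrib, intervalIntegral.integral_sub
      (by simpa only [← Finset.sum_apply] using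
        IntervalIntegrable.sum (Finset.Icc 1 N) fun n _ => hfint n)
      (Continuous.intervalIntegrable (by fun_prop) _ _),
      intervalIntegral.integral_finsetSum (fun n _ => hfint n),
      intervalIntegral.integral_const_mul, ← Finset.mul_sum, mul_sub, mul_left_comm c (N : ℂ),
      mul_integral_id_mul_exp hc hexp]
    simp
  rw [hsum, norm_neg, norm_mul, hnormc]
  gcongr
  refine (intervalIntegral.norm_integral_le_of_norm_le_const
    (C := N * starDisc N x) fun t ht => ?_).trans (by simp)
  rw [Set.uIoc_of_le zero_le_one] at ht
  rw [hpoint t ht, ← mul_assoc, ← sub_mul, norm_mul, hnorme, mul_one]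
  have := abs_count_sub_le N x ht
  rw [← Real.norm_eq_abs, ← Complex.norm_real] at this
  simpa using this

/-- `f` has derivative `exp φ`, where `φ` grows faster than `3 log x` and its first two derivatives
`φ₁`, `φ₂` are of size about `1 / x` and `-1 / x ^ 2` up to small powers of `x`. -/
structure GrowthProfile (f φ φ₁ φ₂ : ℝ → ℝ) (X : ℝ) : Prop where
  large : 10 ≤ X
  deriv_f : ∀ x, X ≤ x → HasDerivAt f (Real.exp (φ x)) x
  deriv_φ : ∀ x, X ≤ x → HasDerivAt φ (φ₁ x) x
  deriv_φ₁ : ∀ x, X ≤ x → HasDerivAt φ₁ (φ₂ x) x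
  le_φ : ∀ x, X ≤ x → 3 * Real.log x ≤ φ x
  le_φ₁ : ∀ x, X ≤ x → 1 / x ≤ φ₁ x
  φ₁_le : ∀ x, X ≤ x → φ₁ x ≤ x ^ (-(19 / 20) : ℝ)
  le_φ₂ : ∀ x, X ≤ x → -(x ^ (-(39 / 20) : ℝ)) ≤ φ₂ x
  φ₂_le : ∀ x, X ≤ x → φ₂ x ≤ -8 / x ^ 2

namespace GrowthProfile

variable {f φ φ₁ φ₂ : ℝ → ℝ} {X : ℝ}

theorem deriv_exp (h : GrowthProfile f φ φ₁ φ₂ X) {x : ℝ} (hx : X ≤ x) :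
    HasDerivAt (fun y => Real.exp (φ y)) (Real.exp (φ x) * φ₁ x) x :=
  (h.deriv_φ x hx).exp

theorem deriv_exp_mul (h : GrowthProfile f φ φ₁ φ₂ X) {x : ℝ} (hx : X ≤ x) :
    HasDerivAt (fun y => Real.exp (φ y) * φ₁ y)
      (Real.exp (φ x) * (φ₂ x + φ₁ x ^ 2)) x :=
  ((h.deriv_exp hx).mul (h.deriv_φ₁ x hx)).congr_deriv (by ring)

theorem pow_three_le_exp (h : GrowthProfile f φ φ₁ φ₂ X) {x : ℝ} (hx : X ≤ x) :
    x ^ 3 ≤ Real.exp (φ x) := by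
  have hx0 : 0 < x := by linarith [h.large]
  calc x ^ 3 = Real.exp (3 * Real.log x) := by
        rw [← Real.exp_log (pow_pos hx0 3), Real.log_pow]; norm_num
    _ ≤ _ := Real.exp_le_exp.2 (h.le_φ x hx)

/-- Mean value theorem on `[x, x + 1]` in the form needed for the unit increment. -/
theorem exists_increment_eq {F F' : ℝ → ℝ} {x : ℝ}
    (hF : ∀ y, x ≤ y → HasDerivAt F (F' y) y) :
    ∃ ξ ∈ Set.Ioo x (x + 1), F (x + 1) - F x = F' ξ := by
  obtain ⟨ξ, hξ, he⟩ := exists_hasDerivAt_eq_slope F F' (by linarith : x < x + 1)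
    (fun y hy => (hF y hy.1).continuousAt.continuousWithinAt) (fun y hy => hF y hy.1.le)
  exact ⟨ξ, hξ, by rw [he]; simp⟩

theorem exists_ratio_increment_eq {F F' G G' : ℝ → ℝ} {x : ℝ}
    (hF : ∀ y, x ≤ y → HasDerivAt F (F' y) y) (hG : ∀ y, x ≤ y → HasDerivAt G (G' y) y) :
    ∃ ξ ∈ Set.Ioo x (x + 1), (G (x + 1) - G x) * F' ξ = (F (x + 1) - F x) * G' ξ :=
  exists_ratio_hasDerivAt_eq_ratio_slope F F' (by linarith : x < x + 1)
    (fun y hy => (hF y hy.1).continuousAt.continuousWithinAt) (fun y hy => hF y hy.1.le) G G'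
    (fun y hy => (hG y hy.1).continuousAt.continuousWithinAt) (fun y hy => hG y hy.1.le)

theorem pow_three_le_increment (h : GrowthProfile f φ φ₁ φ₂ X) {x : ℝ} (hx : X ≤ x) :
    x ^ 3 ≤ f (x + 1) - f x := by
  obtain ⟨ξ, hξ, he⟩ := exists_increment_eq fun y hy => h.deriv_f y (hx.trans hy)
  have hx0 : 0 < x := by linarith [h.large]
  rw [he]
  refine le_trans ?_ (h.pow_three_le_exp (hx.trans hξ.1.le))
  gcongr
  exact hξ.1.le

theorem increment_pos (h : GrowthProfile f φ φ₁ φ₂ X) {x : ℝ} (hx : X ≤ x) :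
    0 < f (x + 1) - f x :=
  lt_of_lt_of_le (pow_pos (by linarith [h.large]) 3) (h.pow_three_le_increment hx)

theorem deriv_increment (h : GrowthProfile f φ φ₁ φ₂ X) {x : ℝ} (hx : X ≤ x) :
    HasDerivAt (fun y => f (y + 1) - f y) (Real.exp (φ (x + 1)) - Real.exp (φ x)) x :=
  ((h.deriv_f (x + 1) (by linarith)).comp_add_const x 1).sub (h.deriv_f x hx)

theorem increment_add_two_le (h : GrowthProfile f φ φ₁ φ₂ X) {x : ℝ} (hx : X ≤ x) :
    f (x + 1) - f x + 2 ≤ f (x + 2) - f (x + 1) := by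
  obtain ⟨ξ, hξ, he⟩ := exists_increment_eq fun y hy => h.deriv_increment (hx.trans hy)
  have hξX : X ≤ ξ := hx.trans hξ.1.le
  obtain ⟨ζ, hζ, he'⟩ := exists_increment_eq fun y hy => h.deriv_exp (hξX.trans hy)
  have hζX : X ≤ ζ := hξX.trans hζ.1.le
  have hζ10 : 10 ≤ ζ := h.large.trans hζX
  have h1 : ζ ^ 3 * (1 / ζ) ≤ Real.exp (φ ζ) * φ₁ ζ :=
    mul_le_mul (h.pow_three_le_exp hζX) (h.le_φ₁ ζ hζX) (by positivity) (Real.exp_pos _).le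
  have h2 : ζ ^ 3 * (1 / ζ) = ζ ^ 2 := by field_simp
  have h3 : (2 : ℝ) ≤ ζ ^ 2 := by nlinarith
  rw [he'] at he
  rw [show x + 2 = x + 1 + 1 by ring]
  linarith

/-- The derivative of the logarithmic derivative of the unit increment. -/
theorem deriv_log_deriv_increment (h : GrowthProfile f φ φ₁ φ₂ X) {x : ℝ} (hx : X ≤ x) :
    ∃ v, HasDerivAt (fun y => (Real.exp (φ (y + 1)) - Real.exp (φ y)) / (f (y + 1) - f y)) v x ∧
      -(2 * x ^ (-(39 / 20) : ℝ)) ≤ v ∧ v ≤ -4 / x ^ 2 := by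
  have hx10 : 10 ≤ x := h.large.trans hx
  have hx0 : 0 < x := by linarith
  have hD : HasDerivAt (fun y => f (y + 1) - f y) (Real.exp (φ (x + 1)) - Real.exp (φ x)) x :=
    h.deriv_increment hx
  have hN : HasDerivAt (fun y => Real.exp (φ (y + 1)) - Real.exp (φ y))
      (Real.exp (φ (x + 1)) * φ₁ (x + 1) - Real.exp (φ x) * φ₁ x) x :=
    ((h.deriv_exp (x := x + 1) (by linarith)).comp_add_const x 1).sub (h.deriv_exp hx)
  have hpos := h.increment_pos hx
  refine ⟨_, hN.div hD hpos.ne', ?_⟩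
  obtain ⟨ξ, hξ, hξe⟩ := exists_ratio_increment_eq
    (fun y hy => h.deriv_exp (hx.trans hy)) (fun y hy => h.deriv_f y (hx.trans hy))
  obtain ⟨ζ, hζ, hζe⟩ := exists_ratio_increment_eq
    (fun y hy => h.deriv_exp_mul (hx.trans hy)) (fun y hy => h.deriv_f y (hx.trans hy))
  have hξX : X ≤ ξ := hx.trans hξ.1.le
  have hζX : X ≤ ζ := hx.trans hζ.1.le
  set D := f (x + 1) - f x with hDdef
  have e1 : Real.exp (φ (x + 1)) - Real.exp (φ x) = D * φ₁ ξ := by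
    have : Real.exp (φ ξ) * (D * φ₁ ξ) =
        Real.exp (φ ξ) * (Real.exp (φ (x + 1)) - Real.exp (φ x)) := by linarith
    exact (mul_left_cancel₀ (Real.exp_pos _).ne' this).symm
  have e2 : Real.exp (φ (x + 1)) * φ₁ (x + 1) - Real.exp (φ x) * φ₁ x =
      D * (φ₂ ζ + φ₁ ζ ^ 2) := by
    have : Real.exp (φ ζ) * (D * (φ₂ ζ + φ₁ ζ ^ 2)) =
        Real.exp (φ ζ) * (Real.exp (φ (x + 1)) * φ₁ (x + 1) - Real.exp (φ x) * φ₁ x) := by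
      linarith
    exact (mul_left_cancel₀ (Real.exp_pos _).ne' this).symm
  have hval : ((Real.exp (φ (x + 1)) * φ₁ (x + 1) - Real.exp (φ x) * φ₁ x) * D -
      (Real.exp (φ (x + 1)) - Real.exp (φ x)) * (Real.exp (φ (x + 1)) - Real.exp (φ x))) / D ^ 2 =
      φ₂ ζ + (φ₁ ζ ^ 2 - φ₁ ξ ^ 2) := by
    rw [e1, e2]
    field_simp
    ring
  rw [hval]
  have hbound : ∀ y, x ≤ y → φ₁ y ≤ x ^ (-(19 / 20) : ℝ) ∧ 0 ≤ φ₁ y := fun y hy =>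
    ⟨(h.φ₁_le y (hx.trans hy)).trans
      (Real.rpow_le_rpow_of_nonpos hx0 hy (by norm_num)),
      le_trans (by have := hx0.trans_le hy; positivity) (h.le_φ₁ y (hx.trans hy))⟩
  have hbound₂ : ∀ y, x ≤ y → |φ₂ y| ≤ x ^ (-(39 / 20) : ℝ) := fun y hy => by
    have h1 := h.le_φ₂ y (hx.trans hy)
    have h2 := h.φ₂_le y (hx.trans hy)
    have h3 : -8 / y ^ 2 ≤ 0 := div_nonpos_of_nonpos_of_nonneg (by norm_num) (by positivity)
    have h4 := Real.rpow_le_rpow_of_nonpos hx0 hy (by norm_num : (-(39 / 20) : ℝ) ≤ 0)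
    rw [abs_of_nonpos (by linarith)]
    linarith
  have hdiff : |φ₁ ζ - φ₁ ξ| ≤ x ^ (-(39 / 20) : ℝ) := by
    have := Convex.norm_image_sub_le_of_norm_hasDerivWithin_le (f := φ₁) (f' := φ₂)
      (s := Set.Icc x (x + 1)) (C := x ^ (-(39 / 20) : ℝ)) (x := ξ) (y := ζ)
      (fun y hy => (h.deriv_φ₁ y (hx.trans hy.1)).hasDerivWithinAt)
      (fun y hy => hbound₂ y hy.1) (convex_Icc _ _) ⟨hξ.1.le, hξ.2.le⟩ ⟨hζ.1.le, hζ.2.le⟩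
    rw [Real.norm_eq_abs, Real.norm_eq_abs] at this
    refine this.trans (mul_le_of_le_one_right (by positivity) ?_)
    rw [abs_le]
    constructor <;> linarith [hξ.1, hξ.2, hζ.1, hζ.2]
  have hsq : |φ₁ ζ ^ 2 - φ₁ ξ ^ 2| ≤ 1 / x ^ 2 := by
    have hb1 := hbound ζ hζ.1.le
    have hb2 := hbound ξ hξ.1.le
    have hsum : |φ₁ ζ + φ₁ ξ| ≤ 2 * x ^ (-(19 / 20) : ℝ) := by
      rw [abs_of_nonneg (by linarith)]; linarith
    calc |φ₁ ζ ^ 2 - φ₁ ξ ^ 2| = |φ₁ ζ + φ₁ ξ| * |φ₁ ζ - φ₁ ξ| := by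
          rw [← abs_mul]; congr 1; ring
      _ ≤ 2 * x ^ (-(19 / 20) : ℝ) * x ^ (-(39 / 20) : ℝ) := by gcongr
      _ = 2 * x ^ (-(9 / 10) : ℝ) * (1 / x ^ 2) := by
          rw [mul_assoc, mul_assoc, ← Real.rpow_add hx0, one_div, ← Real.rpow_natCast,
            ← Real.rpow_neg hx0.le, ← Real.rpow_add hx0]
          norm_num
      _ ≤ 1 * (1 / x ^ 2) := by
          gcongr
          have h4 : (4 : ℝ) ^ (-(9 / 10) : ℝ) ≤ 4 ^ (-(1 / 2) : ℝ) :=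
            Real.rpow_le_rpow_of_exponent_le (by norm_num) (by norm_num)
          have h5 : (4 : ℝ) ^ (-(1 / 2) : ℝ) = 1 / 2 := by
            rw [show (4 : ℝ) = 2 ^ (2 : ℝ) by norm_num, ← Real.rpow_mul (by norm_num),
              show (2 : ℝ) * -(1 / 2) = -1 by norm_num, Real.rpow_neg_one]
            norm_num
          have h6 := Real.rpow_le_rpow_of_nonpos (by norm_num : (0 : ℝ) < 4)
            (by linarith : 4 ≤ x) (by norm_num : (-(9 / 10) : ℝ) ≤ 0)
          linarith
      _ = 1 / x ^ 2 := one_mul _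
  rw [abs_le] at hsq
  constructor
  · have h1 := abs_le.1 (hbound₂ ζ hζ.1.le)
    have h2 : 1 / x ^ 2 ≤ x ^ (-(39 / 20) : ℝ) := by
      rw [one_div, ← Real.rpow_natCast, ← Real.rpow_neg hx0.le]
      exact Real.rpow_le_rpow_of_exponent_le (by linarith) (by norm_num)
    linarith [h1.1, hsq.1]
  · have h1 := h.φ₂_le ζ hζX
    have h2 : -8 / ζ ^ 2 ≤ -5 / x ^ 2 := by
      rw [neg_div, neg_div, neg_le_neg_iff, div_le_div_iff₀ (by positivity)
        (pow_pos (hx0.trans hζ.1) 2)]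
      nlinarith [hζ.2, hζ.1]
    have h3 : -4 / x ^ 2 = -5 / x ^ 2 + 1 / x ^ 2 := by ring
    rw [h3]
    linarith [hsq.2]

theorem second_difference_log_increment (h : GrowthProfile f φ φ₁ φ₂ X) {x : ℝ} (hx : X ≤ x) :
    let D := fun y => Real.log (f (y + 1) - f y);
    -(2 * x ^ (-(39 / 20) : ℝ)) ≤ (D (x + 2) - D (x + 1)) - (D (x + 1) - D x) ∧
      (D (x + 2) - D (x + 1)) - (D (x + 1) - D x) ≤ -2 / x ^ 2 := by
  intro D
  have hx10 : 10 ≤ x := h.large.trans hx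
  have hx0 : 0 < x := by linarith
  set R : ℝ → ℝ := fun y => (Real.exp (φ (y + 1)) - Real.exp (φ y)) / (f (y + 1) - f y) with hR
  have hD : ∀ y, X ≤ y → HasDerivAt D (R y) y := fun y hy =>
    (h.deriv_increment hy).log (h.increment_pos hy).ne'
  have hu : ∀ y, x ≤ y → HasDerivAt (fun y => D (y + 1) - D y) (R (y + 1) - R y) y := fun y hy =>
    ((hD (y + 1) (by linarith)).comp_add_const y 1).sub (hD y (by linarith))
  obtain ⟨ζ, hζ, hζe⟩ := exists_increment_eq hu
  have hζX : X ≤ ζ := hx.trans hζ.1.le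
  choose! v hv using fun (y : ℝ) (hy : X ≤ y) => h.deriv_log_deriv_increment hy
  obtain ⟨ξ, hξ, hξe⟩ := exists_increment_eq (F := R) fun y hy => (hv y (hζX.trans hy)).1
  have hξX : X ≤ ξ := hζX.trans hξ.1.le
  have hxξ : x ≤ ξ := by linarith [hζ.1, hξ.1]
  rw [show x + 2 = x + 1 + 1 by ring]
  rw [hζe, hξe]
  constructor
  · have := Real.rpow_le_rpow_of_nonpos hx0 hxξ (by norm_num : (-(39 / 20) : ℝ) ≤ 0)
    linarith [(hv ξ hξX).2.1]
  · refine (hv ξ hξX).2.2.trans ?_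
    rw [neg_div, neg_div, neg_le_neg_iff, div_le_div_iff₀ (by positivity)
      (pow_pos (hx0.trans_le hxξ) 2)]
    nlinarith [hζ.2, hξ.2]

end GrowthProfile

/-- Replacing a large positive number by one within distance `1` barely changes its logarithm. -/
theorem abs_log_sub_log_le {b d y : ℝ} (hy : 10 ≤ y) (hd : y ^ 3 ≤ d) (hbd : |b - d| ≤ 1) :
    |Real.log b - Real.log d| ≤ 2 / y ^ 3 := by
  have hy3 : (1000 : ℝ) ≤ y ^ 3 := by nlinarith [sq_nonneg (y - 10), sq_nonneg (y + 10)]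
  obtain ⟨h1, h2⟩ := abs_le.1 hbd
  have hd0 : 0 < d := by linarith
  have hb0 : 0 < b := by linarith
  have key : ∀ p q : ℝ, 0 < p → y ^ 3 / 2 ≤ q → p - q ≤ 1 →
      Real.log p - Real.log q ≤ 2 / y ^ 3 := fun p q hp hq hpq => by
    have hq0 : 0 < q := by linarith
    rw [← Real.log_div hp.ne' hq0.ne']
    refine (Real.log_le_sub_one_of_pos (div_pos hp hq0)).trans ?_
    rw [div_sub_one hq0.ne', div_le_div_iff₀ hq0 (by linarith)]
    nlinarith
  rw [abs_le]
  constructor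
  · linarith [key d b hd0 (by linarith) (by linarith)]
  · exact key b d hb0 (by linarith) (by linarith)

namespace GrowthProfile

variable {f φ φ₁ φ₂ : ℝ → ℝ} {X : ℝ}

theorem abs_floor_increment_sub_le (f : ℝ → ℝ) (x y : ℝ) :
    |((⌊f y⌋ : ℝ) - ⌊f x⌋) - (f y - f x)| ≤ 1 := by
  rw [abs_le]
  constructor <;>
    linarith [Int.floor_le (f x), Int.lt_floor_add_one (f x), Int.floor_le (f y),
      Int.lt_floor_add_one (f y)]

/-- Second differences of the logarithms of the increments survive rounding down. -/
theorem second_difference_log_floor (h : GrowthProfile f φ φ₁ φ₂ X) {x : ℝ} (hx : X ≤ x) :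
    let L := fun y : ℝ => Real.log ((⌊f (y + 1)⌋ : ℝ) - ⌊f y⌋);
    -(3 * x ^ (-(39 / 20) : ℝ)) ≤ (L (x + 2) - L (x + 1)) - (L (x + 1) - L x) ∧
      (L (x + 2) - L (x + 1)) - (L (x + 1) - L x) < 0 := by
  intro L
  have hx10 : 10 ≤ x := h.large.trans hx
  have hx0 : 0 < x := by linarith
  have herr : ∀ y, x ≤ y → |L y - Real.log (f (y + 1) - f y)| ≤ 2 / x ^ 3 := fun y hy =>
    abs_log_sub_log_le hx10 ((pow_le_pow_left₀ hx0.le hy 3).trans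
      (h.pow_three_le_increment (hx.trans hy))) (abs_floor_increment_sub_le f y (y + 1))
  have h0 := abs_le.1 (herr x le_rfl)
  have h1 := abs_le.1 (herr (x + 1) (by linarith))
  have h2 := abs_le.1 (herr (x + 2) (by linarith))
  obtain ⟨hl, hu⟩ := h.second_difference_log_increment hx
  have hsmall : 8 / x ^ 3 < 1 / x ^ 2 := by
    rw [div_lt_div_iff₀ (by positivity) (by positivity)]
    nlinarith [pow_pos hx0 2]
  have h8 : 8 / x ^ 3 = 4 * (2 / x ^ 3) := by ring
  have hpow : 1 / x ^ 2 ≤ x ^ (-(39 / 20) : ℝ) := by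
    rw [one_div, ← Real.rpow_natCast, ← Real.rpow_neg hx0.le]
    exact Real.rpow_le_rpow_of_exponent_le (by linarith) (by norm_num)
  have hneg : -2 / x ^ 2 = -2 * (1 / x ^ 2) := by ring
  have hpos : 0 < 1 / x ^ 2 := by positivity
  constructor <;> linarith [h0.1, h0.2, h1.1, h1.2, h2.1, h2.2]

theorem slowlyLogConcave_floor (h : GrowthProfile f φ φ₁ φ₂ X) {M : ℕ} (hM : X ≤ M) :
    SlowlyLogConcave (fun n => (⌊f n⌋ : ℝ)) M (3 * (M : ℝ) ^ (-(39 / 20) : ℝ)) := by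
  have hX := h.large
  have hn : ∀ n : ℕ, M ≤ n → X ≤ (n : ℝ) := fun n hn => hM.trans (by exact_mod_cast hn)
  have hM0 : (0 : ℝ) < M := by linarith
  have hsecond : ∀ n : ℕ, M ≤ n → _ := fun n hMn => h.second_difference_log_floor (hn n hMn)
  refine ⟨fun n hMn => ?_, fun n hMn => ?_, fun n hMn => ?_, fun n hMn => ?_⟩
  · have h1 := h.pow_three_le_increment (hn n hMn)
    have h2 := (abs_le.1 (abs_floor_increment_sub_le f n (n + 1))).1
    have h3 : (10 : ℝ) ≤ n := hX.trans (hn n hMn)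
    have h4 : (10 : ℝ) ^ 3 ≤ n ^ 3 := by gcongr
    push_cast
    linarith
  · have h1 := h.increment_add_two_le (hn n hMn)
    have h2 := (abs_le.1 (abs_floor_increment_sub_le f n (n + 1))).2
    have h3 := (abs_le.1 (abs_floor_increment_sub_le f (n + 1) (n + 2))).1
    push_cast
    linarith
  · have h1 := (hsecond n hMn).2
    norm_num [add_assoc] at h1 ⊢
    linarith
  · have h1 := (hsecond n hMn).1
    have h2 := Real.rpow_le_rpow_of_nonpos hM0 (by exact_mod_cast hMn : (M : ℝ) ≤ n)
      (by norm_num : (-(39 / 20) : ℝ) ≤ 0)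
    norm_num [add_assoc] at h1 h2 ⊢
    linarith

end GrowthProfile

/-- The function `n ↦ exp (γ (log n) ^ β)` with `γ > 0` and `1 < β ≤ 2` has a growth profile. -/
theorem exists_growthProfile_exp_log_rpow {γ β : ℝ} (hγ : 0 < γ) (hβ1 : 1 < β) (hβ2 : β ≤ 2) :
    ∃ (φ φ₁ φ₂ : ℝ → ℝ) (X : ℝ),
      GrowthProfile (fun x => Real.exp (γ * Real.log x ^ β)) φ φ₁ φ₂ X := by
  set P : ℝ → ℝ := fun l => γ * β * l ^ (β - 1) + (β - 1) / l - 1 with hP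
  set P' : ℝ → ℝ := fun l => γ * β * (β - 1) * l ^ (β - 2) - (β - 1) / l ^ 2 with hP'
  set Φ : ℝ → ℝ := fun l => γ * l ^ β + Real.log (γ * β) + (β - 1) * Real.log l - l with hΦ
  have hβ0 : 0 < β := by linarith
  have hγβ : 0 < γ * β := by positivity
  have hP_deriv : ∀ l, 0 < l → HasDerivAt P (P' l) l := fun l hl => by
    have h1 := ((Real.hasDerivAt_rpow_const (p := β - 1) (Or.inl hl.ne')).const_mul (γ * β))
    have h2 := (hasDerivAt_inv hl.ne').const_mul (β - 1)
    refine ((h1.add h2).sub_const 1).congr_deriv ?_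
    rw [hP', show β - 1 - 1 = β - 2 by ring]
    field_simp
    ring
  have hΦ_deriv : ∀ l, 0 < l → HasDerivAt Φ (P l) l := fun l hl => by
    have h1 := ((Real.hasDerivAt_rpow_const (p := β) (Or.inl hl.ne')).const_mul γ)
    have h2 := (Real.hasDerivAt_log hl.ne').const_mul (β - 1)
    refine (((h1.add_const (Real.log (γ * β))).add h2).sub (hasDerivAt_id l)).congr_deriv ?_
    rw [hP]
    ring
  have hP_ge : ∀ᶠ l in atTop, 20 + 2 * (γ * β) ≤ P l := by
    have : Tendsto (fun l : ℝ => l ^ (β - 1)) atTop atTop := tendsto_rpow_atTop (by linarith)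
    filter_upwards [(this.const_mul_atTop hγβ).eventually_ge_atTop (21 + 2 * (γ * β)),
      eventually_gt_atTop 0] with l hl hl0
    have : 0 ≤ (β - 1) / l := div_nonneg (by linarith) hl0.le
    rw [hP]
    dsimp only
    linarith
  have hP_le : ∀ l, 1 ≤ l → P l ≤ γ * β * l := fun l hl => by
    have h1 : l ^ (β - 1) ≤ l := by
      simpa using Real.rpow_le_rpow_of_exponent_le hl (by linarith : β - 1 ≤ 1)
    have h2 : (β - 1) / l ≤ 1 := by rw [div_le_one (by linarith)]; linarith
    have h3 := mul_le_mul_of_nonneg_left h1 hγβ.le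
    rw [hP]
    dsimp only
    linarith
  have hP'_le : ∀ l, 1 ≤ l → |P' l| ≤ γ * β + 1 := fun l hl => by
    have h1 : l ^ (β - 2) ≤ 1 := Real.rpow_le_one_of_one_le_of_nonpos hl (by linarith)
    have h1' : 0 ≤ l ^ (β - 2) := Real.rpow_nonneg (by linarith) _
    have h2 : (β - 1) / l ^ 2 ≤ 1 := by rw [div_le_one (by positivity)]; nlinarith
    have h2' : 0 ≤ (β - 1) / l ^ 2 := div_nonneg (by linarith) (by positivity)
    have h3 : γ * β * (β - 1) * l ^ (β - 2) ≤ γ * β := by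
      have : (β - 1) * l ^ (β - 2) ≤ 1 := mul_le_one₀ (by linarith) h1' h1
      nlinarith
    have h3' : 0 ≤ γ * β * (β - 1) * l ^ (β - 2) :=
      mul_nonneg (mul_nonneg hγβ.le (by linarith)) h1'
    rw [abs_le]
    constructor <;> · rw [hP']; dsimp only; linarith
  have hΦ_ge : ∀ᶠ l in atTop, 3 * l ≤ Φ l := by
    have : Tendsto (fun l : ℝ => l ^ (β - 1)) atTop atTop := tendsto_rpow_atTop (by linarith)
    filter_upwards [(this.const_mul_atTop hγ).eventually_ge_atTop 5, eventually_ge_atTop 1,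
      eventually_ge_atTop |Real.log (γ * β)|] with l h5 h1 hl
    have h2 : γ * l ^ β = γ * l ^ (β - 1) * l := by
      rw [mul_assoc, ← Real.rpow_add_one (by linarith)]; ring_nf
    have h3 := neg_abs_le (Real.log (γ * β))
    have h4 : 0 ≤ (β - 1) * Real.log l := mul_nonneg (by linarith) (Real.log_nonneg h1)
    have h5 : 5 * l ≤ γ * l ^ (β - 1) * l := by gcongr
    rw [hΦ]
    dsimp only
    linarith
  have hlog_le : ∀ᶠ x : ℝ in atTop, (2 * (γ * β) + 1) * Real.log x ≤ x ^ (1 / 20 : ℝ) := by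
    have hc : 0 < 1 / (2 * (γ * β) + 1) := by positivity
    filter_upwards [(isLittleO_log_rpow_atTop (by norm_num : (0 : ℝ) < 1 / 20)).bound hc,
      eventually_ge_atTop 1] with x hx hx1
    rw [Real.norm_of_nonneg (Real.log_nonneg hx1),
      Real.norm_of_nonneg (Real.rpow_nonneg (by linarith) _), one_div_mul_eq_div,
      le_div_iff₀ (by positivity)] at hx
    linarith
  have hlog := Real.tendsto_log_atTop
  obtain ⟨X, hX⟩ := eventually_atTop.1 (((hlog.eventually hP_ge).and
    (hlog.eventually hΦ_ge)).and (hlog_le.and ((hlog.eventually_ge_atTop 1).and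
    (eventually_ge_atTop 10))))
  have hXall : ∀ x, max X 10 ≤ x → _ := fun x hx => hX x ((le_max_left _ _).trans hx)
  refine ⟨fun x => Φ (Real.log x), fun x => P (Real.log x) / x,
    fun x => (P' (Real.log x) - P (Real.log x)) / x ^ 2, max X 10, le_max_right _ _, ?_, ?_, ?_,
    ?_, ?_, ?_, ?_, ?_⟩
  all_goals
    intro x hx
    obtain ⟨⟨hPge, hΦge⟩, hxlog, hl1, hx10⟩ := hXall x hx
    have hx0 : 0 < x := by linarith
    have hl0 : 0 < Real.log x := by linarith
    have hdlog := Real.hasDerivAt_log hx0.ne'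
  · have h1 := ((Real.hasDerivAt_rpow_const (p := β) (Or.inl hl0.ne')).const_mul γ).comp x hdlog
    refine h1.exp.congr_deriv ?_
    rw [hΦ]
    dsimp only [Function.comp]
    rw [Real.exp_sub, Real.exp_add, Real.exp_add, Real.exp_log hγβ, Real.exp_log hx0,
      mul_comm (β - 1), ← Real.rpow_def_of_pos hl0]
    ring
  · exact ((hΦ_deriv _ hl0).comp x hdlog).congr_deriv (by ring)
  · refine (((hP_deriv _ hl0).comp x hdlog).div (hasDerivAt_id x) hx0.ne').congr_deriv ?_
    simp only [Function.comp, id]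
    field_simp
  · exact hΦge
  · gcongr
    linarith
  · rw [div_le_iff₀ hx0, ← Real.rpow_add_one hx0.ne']
    norm_num
    have := hP_le _ hl1
    norm_num at hxlog
    nlinarith
  · have h1 := (abs_le.1 (hP'_le _ hl1)).1
    have h2 := hP_le _ hl1
    rw [le_div_iff₀ (by positivity), neg_mul, ← Real.rpow_natCast x 2, ← Real.rpow_add hx0]
    norm_num
    norm_num at hxlog
    nlinarith
  · have h1 := (abs_le.1 (hP'_le _ hl1)).2
    gcongr
    linarith

/-- Exponential sums over a short block of a slowly log-concave sequence are often of
square-root size. -/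
theorem SlowlyLogConcave.le_measure_sum_fourier {a : ℕ → ℤ} {M H : ℕ} {η : ℝ}
    (h : SlowlyLogConcave (fun n => (a n : ℝ)) M η) (hη : 0 ≤ η) (hH0 : 0 < H)
    (hH : (H : ℝ) ^ 2 * η * (H + 1) < 1) :
    (1 : ℝ) / 24 ≤ (volume : Measure UnitAddCircle).real
      {x | (H : ℝ) / 2 ≤ ‖∑ n ∈ Finset.Ico M (M + H), (fourier (a n) x : ℂ)‖ ^ 2} := by
  have hcont : Continuous fun x : UnitAddCircle =>
      ‖∑ n ∈ Finset.Ico M (M + H), (fourier (a n) x : ℂ)‖ ^ 2 := by fun_prop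
  have : IsProbabilityMeasure (volume : Measure UnitAddCircle) :=
    ⟨UnitAddCircle.measure_univ⟩
  refine paley_zygmund_six (by exact_mod_cast hH0) hcont.measurable
    (hcont.integrable_of_hasCompactSupport (HasCompactSupport.of_compactSpace _))
    ((hcont.pow 2).integrable_of_hasCompactSupport (HasCompactSupport.of_compactSpace _)) ?_ ?_
  · rw [integral_normSq_sum_fourier]
    have hinj : ∀ m ∈ Finset.Ico M (M + H), ∀ n ∈ Finset.Ico M (M + H), a m = a n → m = n := by
      intro m hm n hn hmn
      rw [Finset.mem_Ico] at hm hn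
      have hmn' : (a m : ℝ) = a n := by exact_mod_cast hmn
      rcases lt_trichotomy m n with hlt | heq | hlt
      · exact absurd hmn' (h.strictMono hm.1 hlt).ne
      · exact heq
      · exact absurd hmn' (h.strictMono hn.1 hlt).ne'
    have hdiag : ((Finset.Ico M (M + H) ×ˢ Finset.Ico M (M + H)).filter
        fun p => a p.1 = a p.2) = (Finset.Ico M (M + H)).diag := by
      ext ⟨m, n⟩
      simp only [Finset.mem_filter, Finset.mem_product, Finset.mem_diag]
      constructor
      · rintro ⟨⟨hm, hn⟩, he⟩
        exact ⟨hm, hinj m hm n hn he⟩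
      · rintro ⟨hm, rfl⟩
        exact ⟨⟨hm, hm⟩, rfl⟩
    rw [hdiag, Finset.diag_card, Nat.card_Ico]
    simp
  · rw [integral_norm_pow_four_sum_fourier_s5]
    have := h.energy_le hη hH
    norm_cast at this ⊢

/-- The exponents are chosen so that energy bounds apply to blocks of length `K ^ 3` starting
at `K ^ 5`. -/
theorem eventually_block_small :
    ∀ᶠ K : ℕ in atTop, (((K ^ 3 : ℕ) : ℝ)) ^ 2 *
      (3 * (((K ^ 5 : ℕ) : ℝ)) ^ (-(39 / 20) : ℝ)) * (((K ^ 3 : ℕ) : ℝ) + 1) < 1 := by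
  have hlim : Tendsto (fun K : ℕ => (K : ℝ) ^ (3 / 4 : ℝ)) atTop atTop :=
    (tendsto_rpow_atTop (by norm_num)).comp tendsto_natCast_atTop_atTop
  filter_upwards [hlim.eventually_gt_atTop 6, eventually_ge_atTop 1] with K hK hK1
  have hK1' : (1 : ℝ) ≤ K := by exact_mod_cast hK1
  have hK0 : (0 : ℝ) < K := by linarith
  have h1 : (((K ^ 5 : ℕ) : ℝ)) ^ (-(39 / 20) : ℝ) = (K : ℝ) ^ (-(39 / 4) : ℝ) := by
    push_cast
    rw [← Real.rpow_natCast, ← Real.rpow_mul hK0.le]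
    norm_num
  have h2 : (K : ℝ) ^ 9 * (K : ℝ) ^ (-(39 / 4) : ℝ) * (K : ℝ) ^ (3 / 4 : ℝ) = 1 := by
    rw [← Real.rpow_natCast, ← Real.rpow_add hK0, ← Real.rpow_add hK0]
    norm_num
  have h3 : (1 : ℝ) ≤ (K : ℝ) ^ 3 := one_le_pow₀ hK1'
  set E := (K : ℝ) ^ (-(39 / 4) : ℝ) with hE
  have hE0 : 0 < E := Real.rpow_pos_of_pos hK0 _
  rw [h1]
  push_cast
  calc ((K : ℝ) ^ 3) ^ 2 * (3 * E) * ((K : ℝ) ^ 3 + 1)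
      ≤ ((K : ℝ) ^ 3) ^ 2 * (3 * E) * ((K : ℝ) ^ 3 + (K : ℝ) ^ 3) := by gcongr
    _ = (K : ℝ) ^ 9 * E * 6 := by ring
    _ < (K : ℝ) ^ 9 * E * (K : ℝ) ^ (3 / 4 : ℝ) := by gcongr
    _ = 1 := h2

theorem fourier_two_pow_smul_eq_exp_fract (m : ℤ) (k : ℕ) (α : ℝ) :
    (fourier m ((2 ^ k) • (α : UnitAddCircle)) : ℂ) =
      Complex.exp (2 * Real.pi * Complex.I * (2 ^ k : ℕ) * (Int.fract ((m : ℝ) * α) : ℝ)) := by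
  rw [← AddCircle.coe_nsmul, fourier_coe_apply, Complex.exp_eq_exp_iff_exists_int]
  refine ⟨2 ^ k * ⌊(m : ℝ) * α⌋, ?_⟩
  rw [Int.fract]
  push_cast
  simp only [nsmul_eq_mul]
  push_cast
  ring

/-- For almost every `α`, some dilation by a power of two makes infinitely many block sums large. -/
theorem GrowthProfile.ae_frequently_large_block {f φ φ₁ φ₂ : ℝ → ℝ} {X : ℝ}
    (h : GrowthProfile f φ φ₁ φ₂ X) :
    ∀ᵐ α : ℝ, ∃ k : ℕ, ∃ᶠ K : ℕ in atTop, ((K ^ 3 : ℕ) : ℝ) / 2 ≤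
      ‖∑ n ∈ Finset.Ico (K ^ 5) (K ^ 5 + K ^ 3), Complex.exp
        (2 * Real.pi * Complex.I * (2 ^ k : ℕ) * (Int.fract ((⌊f n⌋ : ℝ) * α) : ℝ))‖ ^ 2 := by
  set A : ℕ → Set UnitAddCircle := fun K => {x | ((K ^ 3 : ℕ) : ℝ) / 2 ≤
    ‖∑ n ∈ Finset.Ico (K ^ 5) (K ^ 5 + K ^ 3), (fourier ⌊f n⌋ x : ℂ)‖ ^ 2} with hA
  have hAm : ∀ K, MeasurableSet (A K) := fun K =>
    measurableSet_le measurable_const (Continuous.measurable (by fun_prop))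
  have hE : MeasurableSet {x | ∃ᶠ K in atTop, x ∈ A K} := by
    convert MeasurableSet.measurableSet_limsup hAm using 1
    ext x
    exact mem_limsup_iff_frequently_mem.symm
  have hlarge : ∀ᶠ K in atTop, ENNReal.ofReal (1 / 24) ≤ (volume : Measure UnitAddCircle) (A K) := by
    filter_upwards [eventually_block_small, eventually_ge_atTop 1,
      tendsto_natCast_atTop_atTop.eventually_ge_atTop X] with K hK hK1 hKX
    have hM : X ≤ ((K ^ 5 : ℕ) : ℝ) :=
      hKX.trans (by exact_mod_cast Nat.le_self_pow (by norm_num) K)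
    have := (h.slowlyLogConcave_floor hM).le_measure_sum_fourier (by positivity)
      (by positivity : 0 < K ^ 3) hK
    rw [ENNReal.ofReal_le_iff_le_toReal (measure_ne_top _ _)]
    exact this
  have hpos := le_measure_frequently hAm hlarge
  have h0 : (volume : Measure UnitAddCircle) {x | ∃ᶠ K in atTop, x ∈ A K} ≠ 0 :=
    (lt_of_lt_of_le (by simp) hpos).ne'
  filter_upwards [ae_real_of_ae_unitAddCircle (ae_exists_two_pow_smul_mem hE h0)] with α hα
  obtain ⟨k, hk⟩ := hα
  refine ⟨k, hk.mono fun K hK => ?_⟩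
  simpa only [hA, Set.mem_ofPred_eq, fourier_two_pow_smul_eq_exp_fract] using hK

/-- A block sum of size `K ^ (3 / 2)` forces a large discrepancy at one end of the block. -/
theorem frequently_le_mul_starDisc {x : ℕ → ℝ} (hx : ∀ n, 0 ≤ x n ∧ x n < 1) {h : ℕ} (hh : 0 < h)
    (hK : ∃ᶠ K : ℕ in atTop, ((K ^ 3 : ℕ) : ℝ) / 2 ≤
      ‖∑ n ∈ Finset.Ico (K ^ 5) (K ^ 5 + K ^ 3),
        Complex.exp (2 * Real.pi * Complex.I * h * x n)‖ ^ 2) :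
    ∃ᶠ N : ℕ in atTop, (N : ℝ) ^ ((7 : ℝ) / 26) ≤ N * starDisc N x := by
  rw [frequently_atTop]
  intro N₀
  set C : ℝ := 2 * (2 * Real.pi * h * 2) with hC
  have hlim : Tendsto (fun K : ℕ => (K : ℝ) ^ (4 / 13 : ℝ)) atTop atTop :=
    (tendsto_rpow_atTop (by norm_num)).comp tendsto_natCast_atTop_atTop
  obtain ⟨K, hblock, hKC, hK0⟩ := (hK.and_eventually ((hlim.eventually_gt_atTop (2 * C ^ 2)).and
    (eventually_ge_atTop (N₀ + 2)))).exists
  have hK1 : (1 : ℝ) ≤ K := by exact_mod_cast (by omega : 1 ≤ K)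
  have hKpos : (0 : ℝ) < K := by linarith
  have hK5 : K ≤ K ^ 5 := Nat.le_self_pow (by norm_num) K
  have hK35 : K ^ 3 ≤ K ^ 5 := Nat.pow_le_pow_right (by omega) (by norm_num)
  by_contra! hcon
  set S : ℕ → ℂ := fun N => ∑ n ∈ Finset.Icc 1 N,
    Complex.exp (2 * Real.pi * Complex.I * h * x n) with hS
  have hSle : ∀ N, N₀ ≤ N → N ≤ 2 * K ^ 5 →
      ‖S N‖ ≤ 2 * Real.pi * h * (2 * (K : ℝ) ^ (35 / 26 : ℝ)) := fun N hN hN2 => by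
    refine (norm_sum_exp_le N h hh x hx).trans
      (mul_le_mul_of_nonneg_left ?_ (by positivity))
    refine (hcon N hN).le.trans ?_
    calc (N : ℝ) ^ ((7 : ℝ) / 26) ≤ (2 * (K : ℝ) ^ 5) ^ ((7 : ℝ) / 26) := by
          gcongr; exact_mod_cast hN2
      _ = 2 ^ ((7 : ℝ) / 26) * (K : ℝ) ^ (35 / 26 : ℝ) := by
          rw [Real.mul_rpow (by norm_num) (by positivity), ← Real.rpow_natCast,
            ← Real.rpow_mul hKpos.le]
          norm_num
      _ ≤ 2 * (K : ℝ) ^ (35 / 26 : ℝ) := by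
          gcongr
          simpa using Real.rpow_le_rpow_of_exponent_le (by norm_num : (1 : ℝ) ≤ 2)
            (by norm_num : (7 : ℝ) / 26 ≤ 1)
  have hsplit : ∑ n ∈ Finset.Ico (K ^ 5) (K ^ 5 + K ^ 3),
      Complex.exp (2 * Real.pi * Complex.I * h * x n) =
      S (K ^ 5 + K ^ 3 - 1) - S (K ^ 5 - 1) := by
    have hIcc : ∀ m, 1 ≤ m → Finset.Icc 1 (m - 1) = Finset.Ico 1 m := fun m hm => by
      ext n; simp only [Finset.mem_Icc, Finset.mem_Ico]; omega
    rw [hS]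
    dsimp only
    rw [hIcc _ (by omega), hIcc _ (by omega), eq_sub_iff_add_eq',
      Finset.sum_Ico_consecutive _ (by omega) (by omega)]
  have hnorm : ‖S (K ^ 5 + K ^ 3 - 1) - S (K ^ 5 - 1)‖ ≤ C * (K : ℝ) ^ (35 / 26 : ℝ) := by
    refine (norm_sub_le _ _).trans ?_
    have h1 := hSle (K ^ 5 + K ^ 3 - 1) (by omega) (by omega)
    have h2 := hSle (K ^ 5 - 1) (by omega) (by omega)
    rw [hC]
    linarith
  rw [hsplit] at hblock
  have hsq := pow_le_pow_left₀ (norm_nonneg _) hnorm 2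
  have hcube : (K : ℝ) ^ 3 = ((K : ℝ) ^ (35 / 26 : ℝ)) ^ 2 * (K : ℝ) ^ (4 / 13 : ℝ) := by
    rw [← Real.rpow_natCast _ 2, ← Real.rpow_mul hKpos.le, ← Real.rpow_add hKpos,
      ← Real.rpow_natCast]
    norm_num
  have hgt : ((K : ℝ) ^ (35 / 26 : ℝ)) ^ 2 * (2 * C ^ 2) < (K : ℝ) ^ 3 := by
    rw [hcube]
    gcongr
  push_cast at hblock
  rw [mul_pow] at hsq
  linarith

theorem stmt5 (γ β : ℝ) (hγ : 0 < γ) (hβ1 : 1 < β) (hβ2 : β ≤ 2)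
    (a : ℕ → ℤ) (ha : ∀ n : ℕ, 1 ≤ n → a n = ⌊Real.exp (γ * (Real.log n) ^ β)⌋) :
    ∀ᵐ α ∂(volume : Measure ℝ), ∀ ε > 0, ∃ᶠ N : ℕ in atTop,
      (N : ℝ) * starDisc N (fun n => Int.fract ((a n : ℝ) * α)) ≥
        (N : ℝ) ^ ((7 : ℝ) / 26 - ε) := by
  obtain ⟨φ, φ₁, φ₂, X, hprofile⟩ := exists_growthProfile_exp_log_rpow hγ hβ1 hβ2
  filter_upwards [hprofile.ae_frequently_large_block] with α hα ε hε
  obtain ⟨k, hk⟩ := hα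
  have hblock : ∃ᶠ N : ℕ in atTop, (N : ℝ) ^ ((7 : ℝ) / 26) ≤
      N * starDisc N (fun n => Int.fract ((a n : ℝ) * α)) := by
    refine frequently_le_mul_starDisc (fun n => ⟨Int.fract_nonneg _, Int.fract_lt_one _⟩)
      (pow_pos two_pos k) ((hk.and_eventually (eventually_ge_atTop 1)).mono ?_)
    rintro K ⟨hK, hK1⟩
    have hcongr := Finset.sum_congr (rfl : Finset.Ico (K ^ 5) (K ^ 5 + K ^ 3) = _)
      fun n hn => congrArg (fun m : ℤ => Complex.exp (2 * Real.pi * Complex.I * (2 ^ k : ℕ) *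
        (Int.fract ((m : ℝ) * α) : ℝ)))
        (ha n ((Nat.one_le_pow 5 K hK1).trans (Finset.mem_Ico.1 hn).1))
    rw [hcongr]
    exact hK
  refine (hblock.and_eventually (eventually_ge_atTop 1)).mono ?_
  rintro N ⟨hN, hN1⟩
  exact (Real.rpow_le_rpow_of_exponent_le (by exact_mod_cast hN1) (by linarith)).trans hN
end
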